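/- arXiv:2603.22098 — 4 statements merged into one kernel-verified Lean document; each statement's English description precedes it below -/
import Mathlib

section
/- There exists a deterministic online algorithm for placing L-shapes in the plane by translations (each placement irrevocable, all translates with pairwise disjoint interiors) such that for every finite input sequence of L-shapes with arm lengths in [0,1], the perimeter of the smallest axis-parallel bounding rectangle of the algorithm's placement is at most 16 times the minimum possible bounding-rectangle perimeter over all offline translational placements of the same L-shapes with pairwise disjoint interiors. -/
/-- An L-shape, given by its four parameters: arm lengths `lx, ly` and widths `wx, wy`. -/
structure LShape where
  lx : ℝ
  wx : ℝ
  ly : ℝ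
  wy : ℝ

/-- The parameter constraints of an L-shape: `0 ≤ wx ≤ lx ≤ 1` and `0 ≤ wy ≤ ly ≤ 1`. -/
def LShape.IsValid (L : LShape) : Prop :=
  0 ≤ L.wx ∧ L.wx ≤ L.lx ∧ L.lx ≤ 1 ∧ 0 ≤ L.wy ∧ L.wy ≤ L.ly ∧ L.ly ≤ 1

/-- The point set `([0,lx]×[0,wy]) ∪ ([0,wx]×[0,ly])` of an L-shape (reference point at the
origin). -/
def LShape.toSet (L : LShape) : Set (ℝ × ℝ) :=
  Set.Icc ((0, 0) : ℝ × ℝ) (L.lx, L.wy) ∪ Set.Icc ((0, 0) : ℝ × ℝ) (L.wx, L.ly)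

/-- Translate a set in the plane by a vector. -/
def planeTranslate (v : ℝ × ℝ) (S : Set (ℝ × ℝ)) : Set (ℝ × ℝ) := (· + v) '' S

/-- The unit bin `[0,1]²`. -/
def unitBin : Set (ℝ × ℝ) := Set.Icc ((0, 0) : ℝ × ℝ) (1, 1)

/-- The perimeter of the smallest axis-parallel rectangle containing `S`. -/
noncomputable def bboxPerim (S : Set (ℝ × ℝ)) : ℝ :=
  2 * ((sSup ((fun p : ℝ × ℝ => p.1) '' S) - sInf ((fun p : ℝ × ℝ => p.1) '' S)) +
       (sSup ((fun p : ℝ × ℝ => p.2) '' S) - sInf ((fun p : ℝ × ℝ => p.2) '' S)))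

/-- The translation chosen by the online placement algorithm `A` for the `i`-th item of `l`
(depending only on the first `i+1` items). -/
def planePlaceOf (A : List LShape → ℝ × ℝ) (l : List LShape) (i : Fin l.length) : ℝ × ℝ :=
  A (l.take (i.1 + 1))

/-- The placements produced by `A` on `l` have pairwise disjoint interiors. -/
def OnlinePlaces (A : List LShape → ℝ × ℝ) (l : List LShape) : Prop :=
  ∀ i j : Fin l.length, i ≠ j →
    Disjoint (interior (planeTranslate (planePlaceOf A l i) (l.get i).toSet))
             (interior (planeTranslate (planePlaceOf A l j) (l.get j).toSet))

/-!
Items are packed into dyadic cells, chosen such that both arms of an item take between `2 / 5` and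
`4 / 5` of the sides of its cell.  L-shapes in a common cell are nested along its diagonal, until
the widths add up to `1 / 5` of a side, and then their area is at least `2 / 25` of the area of the
cell.  At any time there is at most one cell in use per shape.  Cells come from a buddy system: a
cell may be split into halves, and free cells have distinct shapes.  The whole region doubles only
if no free cell can be split down to the shape that the new item asks for.

Let `w` and `h` be the sides of an offline bounding rectangle and `p = w + h`.  By
geometric series, the cells in use have total area at most `4 * (5 / 2) ^ 2 * w * h`.  When the
region doubles, the free cells have total area at most `3 * (5 / 2) ^ 2 * p ^ 2`, and the full
cells at most `25 / 2 * w * h`.  With `4 * w * h ≤ p ^ 2` the area of the region before doubling is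
at most `225 / 8 * p ^ 2`.  The square of its half-perimeter after doubling is at most `9` times
this area, hence less than `(16 * p) ^ 2`.  Items with a vanishing arm have empty interior and are
all placed at the origin.
-/

/-! ### Boxes in the plane -/

/-- The open axis-parallel rectangle with lower left corner `a` and upper right corner `b`
(`Set.Ioo a b` is not this set, since `<` on a product is not componentwise). -/
def openBox (a b : ℝ × ℝ) : Set (ℝ × ℝ) := Set.Ioo a.1 b.1 ×ˢ Set.Ioo a.2 b.2

lemma mem_openBox {a b z : ℝ × ℝ} :
    z ∈ openBox a b ↔ (a.1 < z.1 ∧ z.1 < b.1) ∧ a.2 < z.2 ∧ z.2 < b.2 := Iff.rfl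

lemma openBox_subset_openBox {a b a' b' : ℝ × ℝ} (ha : a' ≤ a) (hb : b ≤ b') :
    openBox a b ⊆ openBox a' b' :=
  Set.prod_mono (Set.Ioo_subset_Ioo ha.1 hb.1) (Set.Ioo_subset_Ioo ha.2 hb.2)

lemma openBox_subset_Icc (a b : ℝ × ℝ) : openBox a b ⊆ Set.Icc a b := by
  rw [Set.Icc_prod_eq]
  exact Set.prod_mono Set.Ioo_subset_Icc_self Set.Ioo_subset_Icc_self

lemma interior_Icc_eq_openBox (a b : ℝ × ℝ) : interior (Set.Icc a b) = openBox a b := by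
  rw [Set.Icc_prod_eq, interior_prod_eq, interior_Icc, interior_Icc, openBox]

lemma volume_openBox (a b : ℝ × ℝ) :
    MeasureTheory.volume (openBox a b) =
      ENNReal.ofReal (b.1 - a.1) * ENNReal.ofReal (b.2 - a.2) := by
  rw [openBox, MeasureTheory.Measure.volume_eq_prod, MeasureTheory.Measure.prod_prod,
    Real.volume_Ioo, Real.volume_Ioo]

/-- Width and height of the bounding rectangle of `S`. -/
noncomputable def bboxSize (S : Set (ℝ × ℝ)) : ℝ × ℝ :=
  (sSup (Prod.fst '' S) - sInf (Prod.fst '' S), sSup (Prod.snd '' S) - sInf (Prod.snd '' S))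

lemma bboxPerim_eq (S : Set (ℝ × ℝ)) :
    bboxPerim S = 2 * ((bboxSize S).1 + (bboxSize S).2) := rfl

lemma bboxSize_nonneg {S : Set (ℝ × ℝ)} (hS : IsCompact S) : 0 ≤ bboxSize S := by
  have hfst := hS.image continuous_fst
  have hsnd := hS.image continuous_snd
  exact ⟨sub_nonneg.2 (Real.sInf_le_sSup _ hfst.bddBelow hfst.bddAbove),
    sub_nonneg.2 (Real.sInf_le_sSup _ hsnd.bddBelow hsnd.bddAbove)⟩

lemma exists_subset_Icc_add_bboxSize {S : Set (ℝ × ℝ)} (hS : IsCompact S) :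
    ∃ a, S ⊆ Set.Icc a (a + bboxSize S) := by
  have hfst := hS.image continuous_fst
  have hsnd := hS.image continuous_snd
  refine ⟨(sInf (Prod.fst '' S), sInf (Prod.snd '' S)), fun z hz => ?_⟩
  have hz₁ := Set.mem_image_of_mem Prod.fst hz
  have hz₂ := Set.mem_image_of_mem Prod.snd hz
  refine ⟨⟨csInf_le hfst.bddBelow hz₁, csInf_le hsnd.bddBelow hz₂⟩, ?_⟩
  simp only [bboxSize, Prod.mk_add_mk, add_sub_cancel]
  exact ⟨le_csSup hfst.bddAbove hz₁, le_csSup hsnd.bddAbove hz₂⟩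

lemma bboxSize_le_sub {S : Set (ℝ × ℝ)} {a b : ℝ × ℝ} (hab : a ≤ b) (hS : S ⊆ Set.Icc a b) :
    bboxSize S ≤ b - a := by
  rcases S.eq_empty_or_nonempty with rfl | hne
  · simp only [bboxSize, Set.image_empty, Real.sSup_empty, Real.sInf_empty, sub_zero]
    exact sub_nonneg.2 hab
  · constructor
    · exact sub_le_sub (csSup_le (hne.image _) (Set.forall_mem_image.2 fun z hz => (hS hz).2.1))
        (le_csInf (hne.image _) (Set.forall_mem_image.2 fun z hz => (hS hz).1.1))
    · exact sub_le_sub (csSup_le (hne.image _) (Set.forall_mem_image.2 fun z hz => (hS hz).2.2))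
        (le_csInf (hne.image _) (Set.forall_mem_image.2 fun z hz => (hS hz).1.2))

/-! ### Dyadic shapes -/

/-- The shape of a dyadic rectangle: `(i, j)` stands for width `2 ^ i` and height `2 ^ j`. -/
abbrev DyadicShape := ℤ × ℤ

namespace DyadicShape

/-- Width and height of a rectangle of the given dyadic shape. -/
noncomputable def size (t : DyadicShape) : ℝ × ℝ := (2 ^ t.1, 2 ^ t.2)

/-- The area of a rectangle of the given dyadic shape. -/
noncomputable def area (t : DyadicShape) : ℝ := t.size.1 * t.size.2

/-- The shape in the buddy system whose halves have shape `t`: the shorter side is doubled, and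
the height in the case of a square. -/
def parent (t : DyadicShape) : DyadicShape :=
  if t.1 < t.2 then (t.1 + 1, t.2) else (t.1, t.2 + 1)

/-- The displacement between the two halves of shape `t` of a rectangle of shape `t.parent`. -/
noncomputable def shift (t : DyadicShape) : ℝ × ℝ :=
  if t.1 < t.2 then (t.size.1, 0) else (0, t.size.2)

/-- `s` arises from `t` by taking parents, possibly none. -/
def IsAncestor (s t : DyadicShape) : Prop := ∃ n : ℕ, parent^[n] t = s

/-- The shapes of the growing region: squares, and rectangles twice as high as wide. -/
def IsSpine (t : DyadicShape) : Prop := t.2 = t.1 ∨ t.2 = t.1 + 1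

/-- The largest dyadic shape that fits into a rectangle of size `b`. -/
noncomputable def floorShape (b : ℝ × ℝ) : DyadicShape := (Int.log 2 b.1, Int.log 2 b.2)

lemma size_fst_pos (t : DyadicShape) : 0 < t.size.1 := zpow_pos two_pos _

lemma size_snd_pos (t : DyadicShape) : 0 < t.size.2 := zpow_pos two_pos _

lemma size_mono : Monotone size := fun _ _ h =>
  ⟨zpow_le_zpow_right₀ one_le_two h.1, zpow_le_zpow_right₀ one_le_two h.2⟩

lemma size_le_iff_le_floorShape {t : DyadicShape} {b : ℝ × ℝ} (hb₁ : 0 < b.1) (hb₂ : 0 < b.2) :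
    t.size ≤ b ↔ t ≤ floorShape b := by
  have h₁ := Int.zpow_le_iff_le_log (b := 2) (x := t.1) one_lt_two hb₁
  have h₂ := Int.zpow_le_iff_le_log (b := 2) (x := t.2) one_lt_two hb₂
  push_cast at h₁ h₂
  exact and_congr h₁ h₂

lemma size_floorShape_le {b : ℝ × ℝ} (hb₁ : 0 < b.1) (hb₂ : 0 < b.2) : (floorShape b).size ≤ b :=
  (size_le_iff_le_floorShape hb₁ hb₂).2 le_rfl

lemma le_two_smul_size_floorShape (b : ℝ × ℝ) : b ≤ (2 : ℝ) • (floorShape b).size := by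
  have h₁ := Int.lt_zpow_succ_log_self (b := 2) one_lt_two b.1
  have h₂ := Int.lt_zpow_succ_log_self (b := 2) one_lt_two b.2
  rw [zpow_add_one₀ (by norm_num), mul_comm] at h₁ h₂
  have hb₁ : b.1 ≤ 2 * 2 ^ Int.log 2 b.1 := by exact_mod_cast h₁.le
  have hb₂ : b.2 ≤ 2 * 2 ^ Int.log 2 b.2 := by exact_mod_cast h₂.le
  exact ⟨hb₁, hb₂⟩

lemma area_pos (t : DyadicShape) : 0 < t.area := mul_pos t.size_fst_pos t.size_snd_pos

lemma area_floorShape_le {b : ℝ × ℝ} (hb₁ : 0 < b.1) (hb₂ : 0 < b.2) :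
    (floorShape b).area ≤ b.1 * b.2 :=
  mul_le_mul (size_floorShape_le hb₁ hb₂).1 (size_floorShape_le hb₁ hb₂).2
    (size_snd_pos _).le hb₁.le

lemma shift_nonneg (t : DyadicShape) : 0 ≤ t.shift := by
  unfold shift
  split_ifs
  · exact ⟨t.size_fst_pos.le, le_rfl⟩
  · exact ⟨le_rfl, t.size_snd_pos.le⟩

lemma size_parent (t : DyadicShape) : t.parent.size = t.size + t.shift := by
  unfold parent shift
  split_ifs <;> simp [size, zpow_add_one₀, mul_two]

lemma area_parent (t : DyadicShape) : t.parent.area = 2 * t.area := by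
  unfold parent
  split_ifs <;> simp only [area, size, zpow_add_one₀ (two_ne_zero' ℝ)] <;> ring

lemma disjoint_Icc_openBox_shift (t : DyadicShape) (a b : ℝ × ℝ) :
    Disjoint (Set.Icc a (a + t.size)) (openBox (a + t.shift) b) := by
  refine Set.disjoint_left.2 fun z hz hz' => ?_
  rw [mem_openBox] at hz'
  unfold shift at hz'
  split_ifs at hz'
  · exact hz'.1.1.not_ge hz.2.1
  · exact hz'.2.1.not_ge hz.2.2

lemma fst_add_snd_parent (t : DyadicShape) : t.parent.1 + t.parent.2 = t.1 + t.2 + 1 := by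
  unfold parent
  split_ifs <;> simp only <;> ring

lemma fst_add_snd_iterate_parent (t : DyadicShape) (n : ℕ) :
    (parent^[n] t).1 + (parent^[n] t).2 = t.1 + t.2 + n := by
  induction n with
  | zero => simp
  | succ n ih =>
    rw [Function.iterate_succ_apply', fst_add_snd_parent, ih]
    push_cast
    ring

lemma IsAncestor.refl (t : DyadicShape) : t.IsAncestor t := ⟨0, rfl⟩

lemma IsAncestor.of_parent {s t : DyadicShape} (h : s.IsAncestor t.parent) : s.IsAncestor t := by
  obtain ⟨n, hn⟩ := h
  exact ⟨n + 1, hn⟩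

lemma IsAncestor.parent_left {s t : DyadicShape} (h : s.IsAncestor t) : s.parent.IsAncestor t := by
  obtain ⟨n, rfl⟩ := h
  exact ⟨n + 1, Function.iterate_succ_apply' _ _ _⟩

lemma not_isAncestor_parent (t : DyadicShape) : ¬ t.IsAncestor t.parent := by
  rintro ⟨n, hn⟩
  have hsum := fst_add_snd_iterate_parent t.parent n
  rw [hn, fst_add_snd_parent] at hsum
  lia

lemma IsSpine.parent {t : DyadicShape} (h : t.IsSpine) : t.parent.IsSpine := by
  unfold IsSpine DyadicShape.parent at *
  split_ifs <;> grind

lemma IsSpine.size_le {t : DyadicShape} (h : t.IsSpine) :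
    t.size.1 ≤ t.size.2 ∧ t.size.2 ≤ 2 * t.size.1 := by
  have hpos := t.size_fst_pos
  rcases h with h | h <;> simp only [size, h, zpow_add_one₀ (two_ne_zero' ℝ)] at hpos ⊢ <;>
    constructor <;> linarith

lemma IsSpine.sq_halfPerimeter_parent_le {t : DyadicShape} (h : t.IsSpine) :
    (t.parent.size.1 + t.parent.size.2) ^ 2 ≤ 9 * t.area := by
  have hpos := t.size_fst_pos
  rcases h with h | h <;>
    simp only [DyadicShape.parent, h, lt_irrefl, lt_add_one, if_true, if_false, area, size,
      zpow_add_one₀ (two_ne_zero' ℝ)] at hpos ⊢ <;>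
    nlinarith

lemma IsAncestor.isSpine_or_le {s t : DyadicShape} {M : ℤ} (h : s.IsAncestor t)
    (ht : t ≤ (M, M)) : s.IsSpine ∨ s ≤ (M, M) := by
  obtain ⟨n, rfl⟩ := h
  refine Function.Iterate.rec (fun u : DyadicShape => u.IsSpine ∨ u ≤ (M, M)) (Or.inr ht) ?_ n
  rintro ⟨i, j⟩ (hu | hu)
  · exact Or.inl hu.parent
  · simp only [IsSpine, DyadicShape.parent, Prod.mk_le_mk] at hu ⊢
    split_ifs <;> simp only [Prod.mk_le_mk] <;> lia

lemma isAncestor_square {t : DyadicShape} {M : ℤ} (h : t ≤ (M, M)) : IsAncestor (M, M) t := by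
  obtain ⟨d, hd⟩ : ∃ d : ℕ, 2 * M - (t.1 + t.2) ≤ d := ⟨_, Int.self_le_toNat _⟩
  induction d generalizing t with
  | zero =>
    have h₁ : t.1 ≤ M := h.1
    have h₂ : t.2 ≤ M := h.2
    obtain rfl : t = (M, M) := Prod.ext (by lia) (by lia)
    exact .refl _
  | succ d ih =>
    by_cases heq : t = (M, M)
    · exact heq ▸ .refl _
    · refine (ih ?_ (by rw [fst_add_snd_parent]; lia)).of_parent
      obtain ⟨i, j⟩ := t
      simp only [DyadicShape.parent, Prod.mk_le_mk, Prod.mk.injEq] at h heq ⊢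
      split_ifs <;> simp only [Prod.mk_le_mk] <;> lia

lemma IsSpine.isAncestor {s t : DyadicShape} (hs : s.IsSpine) (h : t ≤ (s.1, s.1)) :
    s.IsAncestor t := by
  obtain ⟨i, j⟩ := s
  obtain rfl | rfl : j = i ∨ j = i + 1 := hs
  · exact isAncestor_square h
  · simpa [DyadicShape.parent] using (isAncestor_square h).parent_left

lemma IsSpine.le_square_of_not_isAncestor {s t : DyadicShape} {M : ℤ} (hs : s.IsSpine)
    (ht : t ≤ (M, M)) (hst : ¬ s.IsAncestor t) : s ≤ (M, M) := by
  have hfst : s.1 < M := by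
    by_contra! hM
    exact hst (hs.isAncestor (ht.trans ⟨hM, hM⟩))
  exact ⟨hfst.le, by rcases hs with hs | hs <;> simp only [hs] <;> lia⟩

lemma sum_two_zpow_le {I : Finset ℤ} {M : ℤ} (hI : ∀ i ∈ I, i ≤ M) :
    ∑ i ∈ I, (2 : ℝ) ^ i ≤ 2 * 2 ^ M := by
  induction I using Finset.induction_on_max generalizing M with
  | empty =>
    rw [Finset.sum_empty]
    positivity
  | insert a I ha ih =>
    have hlow : ∑ i ∈ I, (2 : ℝ) ^ i ≤ 2 * 2 ^ (a - 1) :=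
      ih fun i hi => Int.le_sub_one_of_lt (ha i hi)
    have htop : (2 : ℝ) ^ a ≤ 2 ^ M :=
      zpow_le_zpow_right₀ one_le_two (hI a (Finset.mem_insert_self a I))
    rw [Finset.sum_insert fun h => (ha a h).false]
    rw [zpow_sub_one₀ two_ne_zero] at hlow
    linarith

lemma sum_area_le {F : Finset DyadicShape} {s : DyadicShape} (hF : ∀ t ∈ F, t ≤ s) :
    ∑ t ∈ F, t.area ≤ 4 * s.area := by
  calc ∑ t ∈ F, t.area
      ≤ ∑ t ∈ F.image Prod.fst ×ˢ F.image Prod.snd, area t :=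
        Finset.sum_le_sum_of_subset_of_nonneg Finset.subset_product fun t _ _ => t.area_pos.le
    _ = (∑ i ∈ F.image Prod.fst, (2 : ℝ) ^ i) * ∑ j ∈ F.image Prod.snd, (2 : ℝ) ^ j := by
        rw [Finset.sum_mul_sum, Finset.sum_product]
        rfl
    _ ≤ (2 * 2 ^ s.1) * (2 * 2 ^ s.2) := by
        refine mul_le_mul (sum_two_zpow_le ?_) (sum_two_zpow_le ?_) (by positivity) (by positivity)
        · exact Finset.forall_mem_image.2 fun t ht => (hF t ht).1
        · exact Finset.forall_mem_image.2 fun t ht => (hF t ht).2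
    _ = 4 * s.area := by
        simp only [area, size]
        ring

lemma sum_area_le_of_notMem {F : Finset DyadicShape} {s : DyadicShape} (hF : ∀ t ∈ F, t ≤ s)
    (hs : s ∉ F) : ∑ t ∈ F, t.area ≤ 3 * s.area := by
  have hsum := sum_area_le (F := insert s F) (Finset.forall_mem_insert .. |>.2 ⟨le_rfl, hF⟩)
  rw [Finset.sum_insert hs] at hsum
  linarith

end DyadicShape

/-! ### L-shapes -/

namespace LShape

/-- `L` is a genuine L-shape of any size: neither width exceeds the parallel arm length. -/
structure IsProper (L : LShape) : Prop where
  wx_nonneg : 0 ≤ L.wx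
  wx_le_lx : L.wx ≤ L.lx
  wy_nonneg : 0 ≤ L.wy
  wy_le_ly : L.wy ≤ L.ly

/-- The two arm lengths of `L`, which are the sides of its bounding rectangle. -/
def arms (L : LShape) : ℝ × ℝ := (L.lx, L.ly)

/-- The two widths of `L`, the coordinates of its reentrant corner. -/
def widths (L : LShape) : ℝ × ℝ := (L.wx, L.wy)

/-- The area of the larger one of the two rectangles whose union is `L`. -/
noncomputable def maxArmArea (L : LShape) : ℝ := max (L.wx * L.ly) (L.wy * L.lx)

/-- The copy of `L` with reference point `v`. -/
def translate (L : LShape) (v : ℝ × ℝ) : Set (ℝ × ℝ) := planeTranslate v L.toSet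

/-- `L` is to be packed into cells of dyadic shape `t`: in both directions the arm of `L` takes
between `2 / 5` and `4 / 5` of the side. -/
structure HasShape (L : LShape) (t : DyadicShape) : Prop where
  size_le : t.size ≤ (5 / 2 : ℝ) • L.arms
  arms_le : L.arms ≤ (4 / 5 : ℝ) • t.size

variable {L : LShape}

lemma IsValid.isProper (h : L.IsValid) : L.IsProper where
  wx_nonneg := h.1
  wx_le_lx := h.2.1
  wy_nonneg := h.2.2.2.1
  wy_le_ly := h.2.2.2.2.1

lemma IsProper.widths_nonneg (h : L.IsProper) : 0 ≤ L.widths := ⟨h.wx_nonneg, h.wy_nonneg⟩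

lemma IsProper.arms_nonneg (h : L.IsProper) : 0 ≤ L.arms :=
  ⟨h.wx_nonneg.trans h.wx_le_lx, h.wy_nonneg.trans h.wy_le_ly⟩

lemma IsProper.maxArmArea_nonneg (h : L.IsProper) : 0 ≤ L.maxArmArea :=
  le_max_of_le_left (mul_nonneg h.wx_nonneg h.arms_nonneg.2)

lemma exists_hasShape (hlx : 0 < L.lx) (hly : 0 < L.ly) : ∃ t, L.HasShape t := by
  refine ⟨.floorShape ((5 / 2 : ℝ) • L.arms), ?_, ?_⟩
  · exact DyadicShape.size_floorShape_le (mul_pos (by norm_num) hlx) (mul_pos (by norm_num) hly)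
  · have h := DyadicShape.le_two_smul_size_floorShape ((5 / 2 : ℝ) • L.arms)
    calc L.arms = (2 / 5 : ℝ) • (5 / 2 : ℝ) • L.arms := by rw [smul_smul]; norm_num
      _ ≤ (2 / 5 : ℝ) • (2 : ℝ) • _ := smul_le_smul_of_nonneg_left h (by norm_num)
      _ = (4 / 5 : ℝ) • _ := by rw [smul_smul]; norm_num

lemma translate_eq_union (L : LShape) (v : ℝ × ℝ) :
    L.translate v = Set.Icc v (v + (L.lx, L.wy)) ∪ Set.Icc v (v + (L.wx, L.ly)) := by
  simp only [translate, planeTranslate, toSet, Set.image_union, Set.image_add_const_Icc,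
    Prod.mk_zero_zero, zero_add, add_comm v]

lemma isCompact_translate (L : LShape) (v : ℝ × ℝ) : IsCompact (L.translate v) := by
  rw [translate_eq_union]
  exact isCompact_Icc.union isCompact_Icc

lemma IsProper.translate_subset_Icc (h : L.IsProper) (v : ℝ × ℝ) :
    L.translate v ⊆ Set.Icc v (v + L.arms) := by
  rw [translate_eq_union]
  refine Set.union_subset ?_ ?_ <;> refine Set.Icc_subset_Icc_right (add_le_add_right ?_ v)
  · exact ⟨le_rfl, h.wy_le_ly⟩
  · exact ⟨h.wx_le_lx, le_rfl⟩

lemma IsProper.arms_le_of_translate_subset (h : L.IsProper) {v a s : ℝ × ℝ}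
    (hsub : L.translate v ⊆ Set.Icc a (a + s)) : L.arms ≤ s := by
  rw [translate_eq_union, Set.union_subset_iff] at hsub
  have hlx : (0 : ℝ × ℝ) ≤ (L.lx, L.wy) := ⟨h.arms_nonneg.1, h.wy_nonneg⟩
  have hly : (0 : ℝ × ℝ) ≤ (L.wx, L.ly) := ⟨h.wx_nonneg, h.arms_nonneg.2⟩
  rw [Set.Icc_subset_Icc_iff (le_add_of_nonneg_right hlx),
    Set.Icc_subset_Icc_iff (le_add_of_nonneg_right hly)] at hsub
  obtain ⟨⟨ha, hx⟩, -, hy⟩ := hsub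
  exact ⟨le_of_add_le_add_left ((add_le_add_left ha.1 L.lx).trans hx.1),
    le_of_add_le_add_left ((add_le_add_left ha.2 L.ly).trans hy.2)⟩

lemma IsProper.interior_translate_subset (h : L.IsProper) (v : ℝ × ℝ) :
    interior (L.translate v) ⊆ openBox v (v + L.arms) := by
  rw [← interior_Icc_eq_openBox]
  exact interior_mono (h.translate_subset_Icc v)

lemma IsProper.interior_translate_eq_empty (h : L.IsProper) (hL : ¬(0 < L.lx ∧ 0 < L.ly))
    (v : ℝ × ℝ) : interior (L.translate v) = ∅ := by
  refine Set.eq_empty_of_forall_notMem fun z hz => hL ?_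
  obtain ⟨hx, hy⟩ := h.interior_translate_subset v hz
  exact ⟨(lt_add_iff_pos_right _).1 (hx.1.trans hx.2),
    (lt_add_iff_pos_right _).1 (hy.1.trans hy.2)⟩

lemma disjoint_translate_openBox (L : LShape) (v b : ℝ × ℝ) :
    Disjoint (L.translate v) (openBox (v + L.widths) b) := by
  rw [translate_eq_union, Set.disjoint_union_left]
  constructor <;> refine Set.disjoint_left.2 fun z hz hz' => ?_
  · exact hz'.2.1.not_ge hz.2.2
  · exact hz'.1.1.not_ge hz.2.1

lemma IsProper.ofReal_maxArmArea_le_volume (h : L.IsProper) (v : ℝ × ℝ) :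
    ENNReal.ofReal L.maxArmArea ≤ MeasureTheory.volume (interior (L.translate v)) := by
  have volume_le : ∀ b : ℝ × ℝ, 0 ≤ b.1 → Set.Icc v (v + b) ⊆ L.translate v →
      ENNReal.ofReal (b.1 * b.2) ≤ MeasureTheory.volume (interior (L.translate v)) := by
    intro b hb hsub
    have hvol := MeasureTheory.measure_mono (μ := MeasureTheory.volume) (interior_mono hsub)
    rwa [interior_Icc_eq_openBox, volume_openBox, Prod.fst_add, Prod.snd_add,
      add_sub_cancel_left, add_sub_cancel_left, ← ENNReal.ofReal_mul hb] at hvol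
  rw [translate_eq_union] at *
  rw [maxArmArea, ENNReal.ofReal_max, mul_comm L.wy]
  exact max_le (volume_le (L.wx, L.ly) h.wx_nonneg Set.subset_union_right)
    (volume_le (L.lx, L.wy) h.arms_nonneg.1 Set.subset_union_left)

end LShape

/-! ### Cells and layouts -/

/-- A dyadic cell with lower left corner `corner`.  Items are nested into it along the diagonal, and
`corner + offset` is the reentrant corner of the last one, that is, the place of the next one. -/
structure Cell where
  shape : DyadicShape
  corner : ℝ × ℝ
  offset : ℝ × ℝ

namespace Cell

/-- The part of a cell that is still available. -/
def region (c : Cell) : Set (ℝ × ℝ) := openBox (c.corner + c.offset) (c.corner + c.shape.size)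

/-- The cell lies in the rectangle with corners `0` and `b`. -/
structure IsInside (c : Cell) (b : ℝ × ℝ) : Prop where
  corner_nonneg : 0 ≤ c.corner
  offset_nonneg : 0 ≤ c.offset
  add_size_le : c.corner + c.shape.size ≤ b

/-- The cell `c` after placing `L` at its current offset. -/
def advance (c : Cell) (L : LShape) : Cell := { c with offset := c.offset + L.widths }

variable {c : Cell} {b : ℝ × ℝ}

lemma region_mk_zero (t : DyadicShape) (v : ℝ × ℝ) :
    (⟨t, v, 0⟩ : Cell).region = openBox v (v + t.size) := by
  simp only [region, add_zero]

lemma IsInside.region_subset (h : c.IsInside b) : c.region ⊆ Set.Icc 0 b :=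
  (openBox_subset_Icc _ _).trans
    (Set.Icc_subset_Icc (add_nonneg h.corner_nonneg h.offset_nonneg) h.add_size_le)

lemma IsInside.mono {b' : ℝ × ℝ} (h : c.IsInside b) (hb : b ≤ b') : c.IsInside b' :=
  { h with add_size_le := h.add_size_le.trans hb }

lemma IsInside.advance {L : LShape} (h : c.IsInside b) (hL : L.IsProper) :
    (c.advance L).IsInside b :=
  { h with offset_nonneg := add_nonneg h.offset_nonneg hL.widths_nonneg }

lemma region_advance_subset {L : LShape} (hL : L.IsProper) : (c.advance L).region ⊆ c.region :=
  openBox_subset_openBox (add_le_add_right (le_add_of_nonneg_right hL.widths_nonneg) _) le_rfl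

end Cell

/-- The item `q.1`, placed at `q.2`, has empty interior and sits at the origin. -/
def IsNegligible (q : LShape × (ℝ × ℝ)) : Prop := q.2 = 0 ∧ interior (q.1.translate q.2) = ∅

/-- The items `P` and the available parts of the cells `C` are disjoint and lie in the rectangle
with corners `0` and `b`, up to negligible items. -/
structure IsLayout (b : ℝ × ℝ) (P : List (LShape × (ℝ × ℝ))) (C : List Cell) : Prop where
  cells_inside : ∀ c ∈ C, c.IsInside b
  cells_disjoint : C.Pairwise fun c d => Disjoint c.region d.region
  items_inside : ∀ q ∈ P, IsNegligible q ∨ q.1.translate q.2 ⊆ Set.Icc 0 b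
  items_disjoint :
    P.Pairwise fun p q => Disjoint (interior (p.1.translate p.2)) (interior (q.1.translate q.2))
  items_disjoint_cells :
    ∀ q ∈ P, ∀ c ∈ C, Disjoint (interior (q.1.translate q.2)) c.region

namespace IsLayout

variable {b : ℝ × ℝ} {P : List (LShape × (ℝ × ℝ))} {C D : List Cell} {c : Cell} {L : LShape}

lemma of_isNegligible (b : ℝ × ℝ) (hP : ∀ q ∈ P, IsNegligible q) : IsLayout b P [] where
  cells_inside := by simp
  cells_disjoint := .nil
  items_inside q hq := Or.inl (hP q hq)
  items_disjoint := List.pairwise_of_forall_mem_list fun q hq _ _ =>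
    (hP q hq).2 ▸ Set.empty_disjoint _
  items_disjoint_cells := by simp

lemma of_subperm (h : IsLayout b P C) (hD : D.Subperm C) : IsLayout b P D where
  cells_inside d hd := h.cells_inside d (hD.subset hd)
  cells_disjoint := by
    obtain ⟨D', hperm, hsub⟩ := hD
    exact (hperm.pairwise_iff fun hcd => hcd.symm).1 (h.cells_disjoint.sublist hsub)
  items_inside := h.items_inside
  items_disjoint := h.items_disjoint
  items_disjoint_cells q hq d hd := h.items_disjoint_cells q hq d (hD.subset hd)

lemma mono {b' : ℝ × ℝ} (h : IsLayout b P C) (hb : b ≤ b') : IsLayout b' P C :=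
  { h with
    cells_inside := fun c hc => (h.cells_inside c hc).mono hb
    items_inside := fun q hq =>
      (h.items_inside q hq).imp_right fun hsub => hsub.trans (Set.Icc_subset_Icc_right hb) }

lemma cons_cell (h : IsLayout b P C) (hc : c.IsInside b)
    (hcells : ∀ d ∈ C, Disjoint c.region d.region)
    (hitems : ∀ q ∈ P, Disjoint (interior (q.1.translate q.2)) c.region) :
    IsLayout b P (c :: C) where
  cells_inside := List.forall_mem_cons.2 ⟨hc, h.cells_inside⟩
  cells_disjoint := List.pairwise_cons.2 ⟨hcells, h.cells_disjoint⟩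
  items_inside := h.items_inside
  items_disjoint := h.items_disjoint
  items_disjoint_cells q hq :=
    List.forall_mem_cons.2 ⟨hitems q hq, h.items_disjoint_cells q hq⟩

lemma cons_item {q : LShape × (ℝ × ℝ)} (h : IsLayout b P C)
    (hq : IsNegligible q ∨ q.1.translate q.2 ⊆ Set.Icc 0 b)
    (hitems : ∀ p ∈ P, Disjoint (interior (q.1.translate q.2)) (interior (p.1.translate p.2)))
    (hcells : ∀ c ∈ C, Disjoint (interior (q.1.translate q.2)) c.region) :
    IsLayout b (q :: P) C where
  cells_inside := h.cells_inside
  cells_disjoint := h.cells_disjoint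
  items_inside := List.forall_mem_cons.2 ⟨hq, h.items_inside⟩
  items_disjoint := List.pairwise_cons.2 ⟨hitems, h.items_disjoint⟩
  items_disjoint_cells := List.forall_mem_cons.2 ⟨hcells, h.items_disjoint_cells⟩

lemma cons_negligible {q : LShape × (ℝ × ℝ)} (h : IsLayout b P C) (hq : IsNegligible q) :
    IsLayout b (q :: P) C := by
  refine h.cons_item (Or.inl hq) ?_ ?_ <;> rw [hq.2] <;> exact fun _ _ => Set.empty_disjoint _

lemma tail (h : IsLayout b P (c :: C)) : IsLayout b P C :=
  h.of_subperm (List.sublist_cons_self c C).subperm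

lemma cons_subcell {d : Cell} (h : IsLayout b P (c :: C)) (hd : d.IsInside b)
    (hsub : d.region ⊆ c.region) : IsLayout b P (d :: C) :=
  h.tail.cons_cell hd (fun e he => ((List.pairwise_cons.1 h.cells_disjoint).1 e he).mono_left hsub)
    fun q hq => (h.items_disjoint_cells q hq c List.mem_cons_self).mono_right hsub

lemma place (h : IsLayout b P (c :: C)) (hL : L.IsProper)
    (hfit : c.offset + L.arms ≤ c.shape.size) :
    IsLayout b ((L, c.corner + c.offset) :: P) (c.advance L :: C) := by
  have hc := h.cells_inside c List.mem_cons_self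
  have hfit' : c.corner + c.offset + L.arms ≤ c.corner + c.shape.size := by
    rw [add_assoc]
    exact add_le_add_right hfit _
  have hregion : interior (L.translate (c.corner + c.offset)) ⊆ c.region :=
    (hL.interior_translate_subset _).trans (openBox_subset_openBox le_rfl hfit')
  refine (h.cons_subcell (hc.advance hL) (Cell.region_advance_subset hL)).cons_item
    (Or.inr ?_) ?_ (List.forall_mem_cons.2 ⟨?_, ?_⟩)
  · exact (hL.translate_subset_Icc _).trans (Set.Icc_subset_Icc
      (add_nonneg hc.corner_nonneg hc.offset_nonneg) (hfit'.trans hc.add_size_le))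
  · exact fun p hp => (h.items_disjoint_cells p hp c List.mem_cons_self).symm.mono_left hregion
  · rw [Cell.region, Cell.advance, ← add_assoc]
    exact (L.disjoint_translate_openBox _ _).mono_left interior_subset
  · exact fun d hd => ((List.pairwise_cons.1 h.cells_disjoint).1 d hd).mono_left hregion

lemma split {t : DyadicShape} {v : ℝ × ℝ} (h : IsLayout b P (⟨t.parent, v, 0⟩ :: C)) :
    IsLayout b P (⟨t, v, 0⟩ :: ⟨t, v + t.shift, 0⟩ :: C) := by
  have hpar := h.cells_inside _ List.mem_cons_self
  have hv : 0 ≤ v := hpar.corner_nonneg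
  have hlow : v + t.size ≤ v + t.parent.size := by
    rw [t.size_parent]
    exact add_le_add_right (le_add_of_nonneg_right t.shift_nonneg) v
  have hhigh : v + t.shift + t.size = v + t.parent.size := by
    rw [t.size_parent, add_assoc, add_comm t.shift]
  have hupper : IsLayout b P (⟨t, v + t.shift, 0⟩ :: C) := by
    refine h.cons_subcell ⟨add_nonneg hv t.shift_nonneg, le_rfl, ?_⟩ ?_
    · exact hhigh.trans_le hpar.add_size_le
    · rw [Cell.region_mk_zero, Cell.region_mk_zero]
      exact openBox_subset_openBox (le_add_of_nonneg_right t.shift_nonneg) hhigh.le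
  have hlower : IsLayout b P (⟨t, v, 0⟩ :: C) :=
    h.cons_subcell ⟨hv, le_rfl, hlow.trans hpar.add_size_le⟩ (openBox_subset_openBox le_rfl hlow)
  refine hupper.cons_cell (hlower.cells_inside _ List.mem_cons_self)
    (List.forall_mem_cons.2 ⟨?_, (List.pairwise_cons.1 hlower.cells_disjoint).1⟩)
    fun q hq => hlower.items_disjoint_cells q hq _ List.mem_cons_self
  rw [Cell.region_mk_zero, Cell.region_mk_zero]
  exact (t.disjoint_Icc_openBox_shift v _).mono_left (openBox_subset_Icc _ _)

lemma grow {r : DyadicShape} (h : IsLayout r.size P C) :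
    IsLayout r.parent.size P (⟨r, r.shift, 0⟩ :: C) := by
  have hdisj : Disjoint (Set.Icc 0 r.size) (⟨r, r.shift, 0⟩ : Cell).region := by
    simpa [Cell.region_mk_zero] using r.disjoint_Icc_openBox_shift 0 (r.shift + r.size)
  have hle : r.size ≤ r.parent.size := by
    rw [r.size_parent]
    exact le_add_of_nonneg_right r.shift_nonneg
  refine (h.mono hle).cons_cell ⟨r.shift_nonneg, le_rfl, ?_⟩ ?_ ?_
  · rw [r.size_parent, add_comm]
  · exact fun d hd => (hdisj.mono_left (h.cells_inside d hd).region_subset).symm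
  · intro q hq
    rcases h.items_inside q hq with hneg | hsub
    · rw [hneg.2]
      exact Set.empty_disjoint _
    · exact hdisj.mono_left (interior_subset.trans hsub)

end IsLayout

/-! ### Allocation of free cells -/

/-- The total area of the cells in a list. -/
noncomputable def totalArea (C : List Cell) : ℝ := (C.map fun c => c.shape.area).sum

lemma totalArea_nil : totalArea [] = 0 := rfl

lemma totalArea_cons (c : Cell) (C : List Cell) :
    totalArea (c :: C) = c.shape.area + totalArea C := by
  simp only [totalArea, List.map_cons, List.sum_cons]

lemma totalArea_perm {C D : List Cell} (h : C.Perm D) : totalArea C = totalArea D :=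
  (h.map _).sum_eq

lemma area_le_totalArea {C : List Cell} {c : Cell} (hc : c ∈ C) : c.shape.area ≤ totalArea C :=
  List.single_le_sum (List.forall_mem_map.2 fun d _ => d.shape.area_pos.le) _
    (List.mem_map_of_mem hc)

lemma totalArea_cons_lt_area_parent {C : List Cell} {r : DyadicShape} (h : totalArea C < r.area)
    (v : ℝ × ℝ) : totalArea (⟨r, v, 0⟩ :: C) < r.parent.area := by
  rw [totalArea_cons, r.area_parent]
  linarith

lemma totalArea_eq_sum_toFinset {C : List Cell} (hC : (C.map Cell.shape).Nodup) :
    totalArea C = ∑ t ∈ (C.map Cell.shape).toFinset, t.area := by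
  rw [List.sum_toFinset _ hC, List.map_map]
  rfl

/-- The invariant of the free cells in the buddy system: they are empty, and their shapes are
distinct. -/
structure IsFreeList (F : List Cell) : Prop where
  nodup : (F.map Cell.shape).Nodup
  offset_eq : ∀ c ∈ F, c.offset = 0

lemma IsFreeList.cons {F : List Cell} (h : IsFreeList F) {t : DyadicShape}
    (ht : ∀ c ∈ F, c.shape ≠ t) (v : ℝ × ℝ) : IsFreeList (⟨t, v, 0⟩ :: F) where
  nodup := List.nodup_cons.2 ⟨fun hmem => by
    obtain ⟨c, hc, hct⟩ := List.mem_map.1 hmem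
    exact ht c hc hct, h.nodup⟩
  offset_eq := List.forall_mem_cons.2 ⟨rfl, h.offset_eq⟩

/-- The result of requesting a cell of shape `t` from the free cells `F`, while the cells `X` stay
as they are: the corner `v` of the new cell and the remaining free cells `F'`. -/
structure IsAllocation (b : ℝ × ℝ) (P : List (LShape × (ℝ × ℝ))) (X F : List Cell)
    (t : DyadicShape) (v : ℝ × ℝ) (F' : List Cell) : Prop where
  layout : IsLayout b P (⟨t, v, 0⟩ :: (F' ++ X))
  isFreeList : IsFreeList F'
  totalArea_eq : t.area + totalArea F' = totalArea F
  mem_or_isAncestor : ∀ d ∈ F', d ∈ F ∨ d.shape.IsAncestor t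

section Allocation

variable {b : ℝ × ℝ} {P : List (LShape × (ℝ × ℝ))} {X F : List Cell} {t : DyadicShape}

lemma exists_isAllocation_of_mem (hlay : IsLayout b P (F ++ X)) (hF : IsFreeList F) {c : Cell}
    (hc : c ∈ F) : ∃ v F', IsAllocation b P X F c.shape v F' := by
  obtain ⟨F₁, F₂, rfl⟩ := List.append_of_mem hc
  obtain ⟨t, v, o⟩ := c
  obtain rfl : o = 0 := hF.offset_eq _ hc
  have hperm : (F₁ ++ ⟨t, v, 0⟩ :: F₂).Perm (⟨t, v, 0⟩ :: (F₁ ++ F₂)) := List.perm_middle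
  have hsub : ∀ d ∈ F₁ ++ F₂, d ∈ F₁ ++ ⟨t, v, 0⟩ :: F₂ := fun d hd =>
    hperm.mem_iff.2 (List.mem_cons_of_mem _ hd)
  refine ⟨v, F₁ ++ F₂, ?_, ⟨?_, fun d hd => hF.offset_eq d (hsub d hd)⟩, ?_,
    fun d hd => Or.inl (hsub d hd)⟩
  · exact hlay.of_subperm (hperm.symm.append_right X).subperm
  · exact (List.nodup_cons.1 ((hperm.map Cell.shape).nodup_iff.1 hF.nodup)).2
  · rw [totalArea_perm hperm, totalArea_cons]

lemma IsAllocation.split {v : ℝ × ℝ} {F' : List Cell}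
    (h : IsAllocation b P X F t.parent v F') (ht : ∀ c ∈ F, c.shape ≠ t) :
    IsAllocation b P X F t v (⟨t, v + t.shift, 0⟩ :: F') where
  layout := h.layout.split
  isFreeList := by
    refine h.isFreeList.cons (fun c hc hct => ?_) _
    rcases h.mem_or_isAncestor c hc with hcF | hanc
    · exact ht c hcF hct
    · exact t.not_isAncestor_parent (hct ▸ hanc)
  totalArea_eq := by
    rw [totalArea_cons, ← h.totalArea_eq, t.area_parent]
    ring
  mem_or_isAncestor := List.forall_mem_cons.2
    ⟨Or.inr (.refl t), fun d hd => (h.mem_or_isAncestor d hd).imp_right .of_parent⟩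

lemma exists_isAllocation (hlay : IsLayout b P (F ++ X)) (hF : IsFreeList F)
    (ht : ∃ c ∈ F, c.shape.IsAncestor t) : ∃ v F', IsAllocation b P X F t v F' := by
  obtain ⟨c, hc, n, hn⟩ := ht
  induction n generalizing t with
  | zero =>
    obtain rfl : t = c.shape := hn
    exact exists_isAllocation_of_mem hlay hF hc
  | succ n ih =>
    by_cases hfree : ∃ d ∈ F, d.shape = t
    · obtain ⟨d, hd, rfl⟩ := hfree
      exact exists_isAllocation_of_mem hlay hF hd
    · obtain ⟨v, F', halloc⟩ := ih hn
      exact ⟨v, _, halloc.split fun d hd hdt => hfree ⟨d, hd, hdt⟩⟩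

end Allocation

/-! ### The invariant of the algorithm -/

/-- The lower bounds on the sides of a rectangle that contains disjoint copies of the items `Q`: it
is at least as wide and high as each item, and its area is at least the sum of the areas of their
larger arms. -/
structure IsAdmissibleSize (Q : List LShape) (s : ℝ × ℝ) : Prop where
  nonneg : 0 ≤ s
  arms_le : ∀ L ∈ Q, L.arms ≤ s
  area_le : (Q.map LShape.maxArmArea).sum ≤ s.1 * s.2

namespace IsAdmissibleSize

variable {Q : List LShape} {L : LShape} {s : ℝ × ℝ} {t : DyadicShape}

lemma of_cons (h : IsAdmissibleSize (L :: Q) s) (hL : L.IsProper) : IsAdmissibleSize Q s where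
  nonneg := h.nonneg
  arms_le := (List.forall_mem_cons.1 h.arms_le).2
  area_le := by
    have harea := h.area_le
    rw [List.map_cons, List.sum_cons] at harea
    linarith [hL.maxArmArea_nonneg]

lemma perm {Q' : List LShape} (h : IsAdmissibleSize Q s) (hQ : Q.Perm Q') :
    IsAdmissibleSize Q' s where
  nonneg := h.nonneg
  arms_le M hM := h.arms_le M (hQ.mem_iff.2 hM)
  area_le := (hQ.map LShape.maxArmArea).sum_eq ▸ h.area_le

lemma size_le (h : IsAdmissibleSize Q s) (hL : L ∈ Q) (ht : L.HasShape t) :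
    t.size ≤ (5 / 2 : ℝ) • s :=
  ht.size_le.trans (smul_le_smul_of_nonneg_left (h.arms_le L hL) (by norm_num))

lemma max_arms_le (h : IsAdmissibleSize Q s) (hL : L ∈ Q) : max L.lx L.ly ≤ s.1 + s.2 :=
  max_le ((h.arms_le L hL).1.trans (le_add_of_nonneg_right h.nonneg.2))
    ((h.arms_le L hL).2.trans (le_add_of_nonneg_left h.nonneg.1))

lemma pos (h : IsAdmissibleSize Q s) (hL : L ∈ Q) (ht : L.HasShape t) : 0 < s.1 ∧ 0 < s.2 :=
  ⟨pos_of_mul_pos_right (t.size_fst_pos.trans_le (h.size_le hL ht).1) (by norm_num),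
    pos_of_mul_pos_right (t.size_snd_pos.trans_le (h.size_le hL ht).2) (by norm_num)⟩

end IsAdmissibleSize

/-- The square rectangle of sides `5 / 2` times the longer arm of `L`. -/
noncomputable def LShape.coarseSquare (L : LShape) : ℝ × ℝ :=
  (5 / 2 * max L.lx L.ly, 5 / 2 * max L.lx L.ly)

namespace LShape.HasShape

variable {L : LShape} {t : DyadicShape}

lemma size_square_le (h : L.HasShape t) :
    DyadicShape.size (max t.1 t.2, max t.1 t.2) ≤ L.coarseSquare := by
  have hx : (2 : ℝ) ^ t.1 ≤ 5 / 2 * max L.lx L.ly :=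
    h.size_le.1.trans (mul_le_mul_of_nonneg_left (le_max_left _ _) (by norm_num))
  have hy : (2 : ℝ) ^ t.2 ≤ 5 / 2 * max L.lx L.ly :=
    h.size_le.2.trans (mul_le_mul_of_nonneg_left (le_max_right _ _) (by norm_num))
  have hmax : (2 : ℝ) ^ max t.1 t.2 ≤ 5 / 2 * max L.lx L.ly := by
    rcases max_choice t.1 t.2 with hm | hm <;> rwa [hm]
  exact ⟨hmax, hmax⟩

lemma isSpine_or_size_le_of_isAncestor (h : L.HasShape t) {s : DyadicShape}
    (hs : s.IsAncestor t) : s.IsSpine ∨ s.size ≤ L.coarseSquare :=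
  (hs.isSpine_or_le ⟨le_max_left _ _, le_max_right _ _⟩).imp_right fun hle =>
    (DyadicShape.size_mono hle).trans h.size_square_le

end LShape.HasShape

namespace Cell

/-- A lower bound, read off the offset, for the sum of `LShape.maxArmArea` over the items of a cell:
each of them has arms of length at least `2 / 5` of the sides. -/
noncomputable def load (c : Cell) : ℝ :=
  max (c.offset.1 * (2 / 5 * c.shape.size.2)) (c.offset.2 * (2 / 5 * c.shape.size.1))

/-- The offset has reached `1 / 5` of a side, so that another item might not fit. -/
def IsFull (c : Cell) : Prop :=
  c.shape.size.1 / 5 ≤ c.offset.1 ∨ c.shape.size.2 / 5 ≤ c.offset.2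

variable {c : Cell} {L : LShape}

lemma load_nonneg (h : 0 ≤ c.offset) : 0 ≤ c.load :=
  le_max_of_le_left (mul_nonneg h.1 (mul_nonneg (by norm_num) c.shape.size_snd_pos.le))

lemma load_mk_zero (t : DyadicShape) (v : ℝ × ℝ) : (⟨t, v, 0⟩ : Cell).load = 0 := by
  simp only [load, Prod.fst_zero, Prod.snd_zero, zero_mul, max_self]

lemma not_isFull_mk_zero (t : DyadicShape) (v : ℝ × ℝ) : ¬ (⟨t, v, 0⟩ : Cell).IsFull := by
  have hx := t.size_fst_pos
  have hy := t.size_snd_pos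
  simp only [IsFull, Prod.fst_zero, Prod.snd_zero, not_or, not_le]
  constructor <;> positivity

lemma load_advance_le (hL : L.IsProper) (ht : L.HasShape c.shape) :
    (c.advance L).load ≤ c.load + L.maxArmArea := by
  have hx : 2 / 5 * c.shape.size.1 ≤ L.lx := by
    have hsize : c.shape.size.1 ≤ 5 / 2 * L.lx := ht.size_le.1
    linarith
  have hy : 2 / 5 * c.shape.size.2 ≤ L.ly := by
    have hsize : c.shape.size.2 ≤ 5 / 2 * L.ly := ht.size_le.2
    linarith
  refine max_le ?_ ?_ <;> simp only [advance, Prod.fst_add, Prod.snd_add, add_mul]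
  · exact add_le_add (le_max_left _ _)
      (le_max_of_le_left (mul_le_mul_of_nonneg_left hy hL.wx_nonneg))
  · exact add_le_add (le_max_right _ _)
      (le_max_of_le_right (mul_le_mul_of_nonneg_left hx hL.wy_nonneg))

lemma IsFull.area_le (h : c.IsFull) : c.shape.area ≤ 25 / 2 * c.load := by
  have hx := c.shape.size_fst_pos
  have hy := c.shape.size_snd_pos
  have hl₁ : c.offset.1 * (2 / 5 * c.shape.size.2) ≤ c.load := le_max_left _ _
  have hl₂ : c.offset.2 * (2 / 5 * c.shape.size.1) ≤ c.load := le_max_right _ _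
  rw [DyadicShape.area]
  rcases h with h | h <;> nlinarith

lemma offset_add_arms_le (h : ¬ c.IsFull) (ht : L.HasShape c.shape) :
    c.offset + L.arms ≤ c.shape.size := by
  obtain ⟨hx, hy⟩ := not_or.1 h
  have hax : L.arms.1 ≤ 4 / 5 * c.shape.size.1 := ht.arms_le.1
  have hay : L.arms.2 ≤ 4 / 5 * c.shape.size.2 := ht.arms_le.2
  constructor <;> simp only [Prod.fst_add, Prod.snd_add] <;> linarith

end Cell

/-- The state of the algorithm: `Q` are the items that have arrived, `P` the placed ones, `r` is the
shape of the region, `F` are the free cells and `O` the cells in use, at most one per shape.  Full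
cells are not recorded.  Their area is at most `25 / 2` times the load they contain, which is what
`area_le` retains of them. -/
structure IsState (Q : List LShape) (P : List (LShape × (ℝ × ℝ))) (r : DyadicShape)
    (F O : List Cell) : Prop where
  layout : IsLayout r.size P (F ++ O)
  isSpine : r.IsSpine
  isFreeList : IsFreeList F
  open_nodup : (O.map Cell.shape).Nodup
  area_le : r.area + 25 / 2 * (O.map Cell.load).sum ≤
    totalArea F + totalArea O + 25 / 2 * (P.map fun q => q.1.maxArmArea).sum
  free_shape : ∀ c ∈ F, c.shape.IsSpine ∨ ∃ L ∈ Q, c.shape.size ≤ L.coarseSquare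
  open_shape : ∀ c ∈ O, ∃ L ∈ Q, L.HasShape c.shape
  halfPerimeter_le : ∀ s, IsAdmissibleSize Q s → r.size.1 + r.size.2 ≤ 16 * (s.1 + s.2)

namespace IsState

variable {Q : List LShape} {P : List (LShape × (ℝ × ℝ))} {r t : DyadicShape} {F O : List Cell}
  {L : LShape} {c : Cell} {s : ℝ × ℝ}

lemma perm_open {O' : List Cell} (h : IsState Q P r F O) (hO : O.Perm O') : IsState Q P r F O' :=
  { h with
    layout := h.layout.of_subperm (hO.symm.append_left F).subperm
    open_nodup := (hO.map Cell.shape).nodup_iff.1 h.open_nodup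
    area_le := by
      rw [← totalArea_perm hO, ← (hO.map Cell.load).sum_eq]
      exact h.area_le
    open_shape := fun c hc => h.open_shape c (hO.mem_iff.2 hc) }

lemma cons_arrived (h : IsState Q P r F O) (hL : L.IsProper) : IsState (L :: Q) P r F O :=
  { h with
    free_shape := fun c hc => (h.free_shape c hc).imp_right fun ⟨M, hM, hle⟩ =>
      ⟨M, List.mem_cons_of_mem L hM, hle⟩
    open_shape := fun c hc => (h.open_shape c hc).imp fun _ hM =>
      ⟨List.mem_cons_of_mem L hM.1, hM.2⟩
    halfPerimeter_le := fun s hs => h.halfPerimeter_le s (hs.of_cons hL) }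

lemma cons_negligible (h : IsState Q P r F O) (hL : L.IsProper) (hneg : IsNegligible (L, 0)) :
    IsState Q ((L, 0) :: P) r F O :=
  { h with
    layout := h.layout.cons_negligible hneg
    area_le := by
      have harea := h.area_le
      rw [List.map_cons, List.sum_cons]
      linarith [hL.maxArmArea_nonneg] }

lemma close (h : IsState Q P r F (c :: O)) (hc : c.IsFull) : IsState Q P r F O :=
  { h with
    layout := h.layout.of_subperm ((List.sublist_cons_self c O).append_left F).subperm
    open_nodup := (List.nodup_cons.1 h.open_nodup).2
    area_le := by
      have harea := h.area_le
      rw [totalArea_cons, List.map_cons, List.sum_cons] at harea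
      linarith [hc.area_le]
    open_shape := (List.forall_mem_cons.1 h.open_shape).2 }

lemma place (h : IsState Q P r F (c :: O)) (hL : L.IsProper) (ht : L.HasShape c.shape)
    (hc : ¬ c.IsFull) :
    IsState Q ((L, c.corner + c.offset) :: P) r F (c.advance L :: O) :=
  { h with
    layout := by
      have hlay := h.layout.of_subperm (List.perm_middle.symm.subperm)
      exact (hlay.place hL (Cell.offset_add_arms_le hc ht)).of_subperm List.perm_middle.subperm
    area_le := by
      have harea := h.area_le
      simp only [List.map_cons, List.sum_cons, totalArea_cons] at harea ⊢
      rw [show (c.advance L).shape = c.shape from rfl]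
      linarith [Cell.load_advance_le hL ht]
    open_shape := List.forall_mem_cons.2 (List.forall_mem_cons.1 h.open_shape) }

lemma sum_load_nonneg (h : IsState Q P r F O) : 0 ≤ (O.map Cell.load).sum :=
  List.sum_nonneg (List.forall_mem_map.2 fun c hc => Cell.load_nonneg
    (h.layout.cells_inside c (List.mem_append_right F hc)).offset_nonneg)

/-! ### Growth of the region -/

lemma totalArea_open_le (h : IsState Q P r F O) (hs : IsAdmissibleSize Q s)
    (hpos : 0 < s.1 ∧ 0 < s.2) : totalArea O ≤ 25 * (s.1 * s.2) := by
  set b : ℝ × ℝ := (5 / 2 : ℝ) • s with hb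
  have hb₁ : 0 < b.1 := mul_pos (by norm_num) hpos.1
  have hb₂ : 0 < b.2 := mul_pos (by norm_num) hpos.2
  have hle : ∀ t ∈ (O.map Cell.shape).toFinset, t ≤ .floorShape b := by
    intro t ht
    obtain ⟨c, hc, rfl⟩ := List.mem_map.1 (List.mem_toFinset.1 ht)
    obtain ⟨L, hL, hLc⟩ := h.open_shape c hc
    exact (DyadicShape.size_le_iff_le_floorShape hb₁ hb₂).1 (hs.size_le hL hLc)
  calc totalArea O = ∑ t ∈ (O.map Cell.shape).toFinset, t.area :=
        totalArea_eq_sum_toFinset h.open_nodup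
    _ ≤ 4 * (DyadicShape.floorShape b).area := DyadicShape.sum_area_le hle
    _ ≤ 4 * (b.1 * b.2) := by gcongr; exact DyadicShape.area_floorShape_le hb₁ hb₂
    _ = 25 * (s.1 * s.2) := by
        rw [hb, Prod.smul_fst, Prod.smul_snd, smul_eq_mul, smul_eq_mul]
        ring

/-- Let `M` be maximal with `2 ^ M ≤ 5 / 2 * (s.1 + s.2)`.  As `(M, M)` and all larger spine shapes
are ancestors of `t`, none of them is free, and the area is bounded by that of the remaining shapes
below `(M, M)`. -/
lemma totalArea_free_le (h : IsState Q P r F O) (hs : IsAdmissibleSize Q s) (hL : L ∈ Q)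
    (ht : L.HasShape t) (hF : ∀ c ∈ F, ¬ c.shape.IsAncestor t) :
    totalArea F ≤ 75 / 4 * (s.1 + s.2) ^ 2 := by
  obtain ⟨hs₁, hs₂⟩ := hs.pos hL ht
  set a : ℝ := 5 / 2 * (s.1 + s.2) with ha
  have hapos : 0 < a := by positivity
  set M := Int.log 2 a
  have le_square : ∀ {u : DyadicShape} {K : LShape}, K ∈ Q → u.size ≤ K.coarseSquare →
      u ≤ (M, M) := by
    intro u K hK hu
    have hKa : 5 / 2 * max K.lx K.ly ≤ a :=
      mul_le_mul_of_nonneg_left (hs.max_arms_le hK) (by norm_num)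
    exact (DyadicShape.size_le_iff_le_floorShape (b := (a, a)) hapos hapos).1
      (hu.trans ⟨hKa, hKa⟩)
  have htM : t ≤ (M, M) :=
    le_trans ⟨le_max_left _ _, le_max_right _ _⟩ (le_square hL ht.size_square_le)
  have hle : ∀ u ∈ (F.map Cell.shape).toFinset, u ≤ (M, M) := by
    intro u hu
    obtain ⟨c, hc, rfl⟩ := List.mem_map.1 (List.mem_toFinset.1 hu)
    rcases h.free_shape c hc with hspine | ⟨K, hK, hcK⟩
    · exact hspine.le_square_of_not_isAncestor htM (hF c hc)
    · exact le_square hK hcK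
  have hnotMem : (M, M) ∉ (F.map Cell.shape).toFinset := by
    intro hmem
    obtain ⟨c, hc, hcM⟩ := List.mem_map.1 (List.mem_toFinset.1 hmem)
    exact hF c hc (hcM ▸ DyadicShape.isAncestor_square htM)
  calc totalArea F = ∑ u ∈ (F.map Cell.shape).toFinset, u.area :=
        totalArea_eq_sum_toFinset h.isFreeList.nodup
    _ ≤ 3 * DyadicShape.area (M, M) := DyadicShape.sum_area_le_of_notMem hle hnotMem
    _ ≤ 3 * (a * a) := by
        gcongr
        exact DyadicShape.area_floorShape_le (b := (a, a)) hapos hapos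
    _ = 75 / 4 * (s.1 + s.2) ^ 2 := by rw [ha]; ring

lemma halfPerimeter_parent_le (h : IsState (L :: P.map Prod.fst) P r F O) (hL : L.IsProper)
    (ht : L.HasShape t) (hF : ∀ c ∈ F, ¬ c.shape.IsAncestor t)
    (hs : IsAdmissibleSize (L :: P.map Prod.fst) s) :
    r.parent.size.1 + r.parent.size.2 ≤ 16 * (s.1 + s.2) := by
  have hpos := hs.pos List.mem_cons_self ht
  have hfree := h.totalArea_free_le hs List.mem_cons_self ht hF
  have hopen := h.totalArea_open_le hs hpos
  have hitems : (P.map fun q => q.1.maxArmArea).sum ≤ s.1 * s.2 := by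
    simpa [Function.comp_def] using (hs.of_cons hL).area_le
  have hregion : r.area ≤ 75 / 4 * (s.1 + s.2) ^ 2 + 75 / 2 * (s.1 * s.2) := by
    linarith [h.area_le, h.sum_load_nonneg]
  have hamgm : 4 * (s.1 * s.2) ≤ (s.1 + s.2) ^ 2 := by linarith [four_mul_le_sq_add s.1 s.2]
  refine le_of_sq_le_sq ?_ (mul_nonneg (by norm_num) (add_nonneg hpos.1.le hpos.2.le))
  calc (r.parent.size.1 + r.parent.size.2) ^ 2 ≤ 9 * r.area :=
        h.isSpine.sq_halfPerimeter_parent_le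
    _ ≤ (16 * (s.1 + s.2)) ^ 2 := by linarith [sq_nonneg (s.1 + s.2)]

lemma grow (h : IsState (L :: P.map Prod.fst) P r F O) (hslack : totalArea F < r.area)
    (hL : L.IsProper) (ht : L.HasShape t) (hF : ∀ c ∈ F, ¬ c.shape.IsAncestor t) :
    IsState (L :: P.map Prod.fst) P r.parent (⟨r, r.shift, 0⟩ :: F) O :=
  { h with
    layout := h.layout.grow
    isSpine := h.isSpine.parent
    isFreeList := h.isFreeList.cons
      (fun _ hc hcr => ((area_le_totalArea hc).trans_lt hslack).ne (congrArg _ hcr)) _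
    area_le := by
      rw [totalArea_cons, r.area_parent]
      linarith [h.area_le]
    free_shape := List.forall_mem_cons.2 ⟨Or.inl h.isSpine, h.free_shape⟩
    halfPerimeter_le := fun _ => h.halfPerimeter_parent_le hL ht hF }

lemma exists_free_isAncestor (h : IsState (L :: P.map Prod.fst) P r F O)
    (hslack : totalArea F < r.area) (hL : L.IsProper) (ht : L.HasShape t) :
    ∃ r' F', IsState (L :: P.map Prod.fst) P r' F' O ∧ totalArea F' < r'.area ∧
      ∃ c ∈ F', c.shape.IsAncestor t := by
  obtain ⟨d, hd⟩ : ∃ d : ℕ, 2 * max t.1 t.2 - (r.1 + r.2) ≤ d := ⟨_, Int.self_le_toNat _⟩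
  induction d generalizing r F with
  | zero =>
    by_cases hF : ∃ c ∈ F, c.shape.IsAncestor t
    · exact ⟨r, F, h, hslack, hF⟩
    · have hmax : max t.1 t.2 ≤ r.1 := by
        rcases h.isSpine with hr | hr <;> lia
      have hanc : r.IsAncestor t := h.isSpine.isAncestor (max_le_iff.1 hmax)
      push Not at hF
      exact ⟨_, _, h.grow hslack hL ht hF, totalArea_cons_lt_area_parent hslack _, _,
        List.mem_cons_self, hanc⟩
  | succ d ih =>
    by_cases hF : ∃ c ∈ F, c.shape.IsAncestor t
    · exact ⟨r, F, h, hslack, hF⟩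
    · push Not at hF
      refine ih (h.grow hslack hL ht hF) (totalArea_cons_lt_area_parent hslack _) ?_
      rw [r.fst_add_snd_parent]
      lia

/-! ### Placing one item -/

lemma exists_cons_open (h : IsState Q P r F O) (hslack : totalArea F ≤ r.area) (hL : L ∈ Q)
    (ht : L.HasShape t) (hF : ∃ c ∈ F, c.shape.IsAncestor t) (hO : t ∉ O.map Cell.shape) :
    ∃ v F', IsState Q P r F' (⟨t, v, 0⟩ :: O) ∧ totalArea F' < r.area := by
  obtain ⟨v, F', halloc⟩ := exists_isAllocation h.layout h.isFreeList hF
  refine ⟨v, F', { h with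
    layout := halloc.layout.of_subperm List.perm_middle.subperm
    isFreeList := halloc.isFreeList
    open_nodup := List.nodup_cons.2 ⟨hO, h.open_nodup⟩
    area_le := ?_
    free_shape := ?_
    open_shape := List.forall_mem_cons.2 ⟨⟨L, hL, ht⟩, h.open_shape⟩ }, ?_⟩
  · rw [totalArea_cons, List.map_cons, List.sum_cons, Cell.load_mk_zero]
    linarith [h.area_le, halloc.totalArea_eq]
  · intro c hc
    rcases halloc.mem_or_isAncestor c hc with hcF | hanc
    · exact h.free_shape c hcF
    · exact (ht.isSpine_or_size_le_of_isAncestor hanc).imp_right fun hle => ⟨L, hL, hle⟩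
  · linarith [halloc.totalArea_eq, t.area_pos]

lemma of_isNegligible {M : ℤ} (hP : ∀ q ∈ P, q.1.IsProper ∧ IsNegligible q) (hL : L ∈ Q)
    (hM : DyadicShape.size (M, M) ≤ L.coarseSquare) :
    IsState Q P (M, M) [⟨(M, M), 0, 0⟩] [] where
  layout := (IsLayout.of_isNegligible _ fun q hq => (hP q hq).2).cons_cell
    ⟨le_rfl, le_rfl, (zero_add _).le⟩ (by simp)
    fun q hq => (hP q hq).2.2 ▸ Set.empty_disjoint _
  isSpine := .inl rfl
  isFreeList := ⟨List.nodup_singleton _, by simp⟩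
  open_nodup := .nil
  area_le := by
    have hitems : 0 ≤ (P.map fun q => q.1.maxArmArea).sum :=
      List.sum_nonneg (List.forall_mem_map.2 fun q hq => (hP q hq).1.maxArmArea_nonneg)
    simp only [List.map_nil, List.sum_nil, totalArea_cons, totalArea_nil]
    linarith
  free_shape := List.forall_mem_singleton.2 (.inl (.inl rfl))
  open_shape := by simp
  halfPerimeter_le s hs := by
    obtain ⟨hx, hy⟩ := hM
    have hmax := hs.max_arms_le hL
    have hs₀ := add_nonneg hs.nonneg.1 hs.nonneg.2
    simp only [LShape.coarseSquare] at hx hy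
    linarith

end IsState

/-- The state of the algorithm after placing the items `P` exists, and part of its region is not
free. -/
def IsPacked (P : List (LShape × (ℝ × ℝ))) : Prop :=
  ∃ r F O, IsState (P.map Prod.fst) P r F O ∧ totalArea F < r.area

namespace IsState

variable {P : List (LShape × (ℝ × ℝ))} {r : DyadicShape} {F O : List Cell} {L : LShape} {c : Cell}

lemma exists_isPacked_of_open (h : IsState (L :: P.map Prod.fst) P r F (c :: O))
    (hslack : totalArea F < r.area) (hL : L.IsProper) (ht : L.HasShape c.shape)
    (hc : ¬ c.IsFull) : ∃ v, IsPacked ((L, v) :: P) :=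
  ⟨c.corner + c.offset, r, F, c.advance L :: O, h.place hL ht hc, hslack⟩

lemma exists_isPacked_of_free {t : DyadicShape} (h : IsState (L :: P.map Prod.fst) P r F O)
    (hslack : totalArea F ≤ r.area) (hL : L.IsProper) (ht : L.HasShape t)
    (hF : ∃ c ∈ F, c.shape.IsAncestor t) (hO : t ∉ O.map Cell.shape) :
    ∃ v, IsPacked ((L, v) :: P) := by
  obtain ⟨v, F', h', hslack'⟩ := h.exists_cons_open hslack List.mem_cons_self ht hF hO
  exact h'.exists_isPacked_of_open hslack' hL ht (Cell.not_isFull_mk_zero t v)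

lemma exists_isPacked_of_notMem_open {t : DyadicShape}
    (h : IsState (L :: P.map Prod.fst) P r F O) (hslack : totalArea F < r.area)
    (hL : L.IsProper) (ht : L.HasShape t) (hO : t ∉ O.map Cell.shape) :
    ∃ v, IsPacked ((L, v) :: P) := by
  obtain ⟨r', F', h', hslack', hF'⟩ := h.exists_free_isAncestor hslack hL ht
  exact h'.exists_isPacked_of_free hslack'.le hL ht hF' hO

end IsState

lemma IsPacked.exists_cons {P : List (LShape × (ℝ × ℝ))} {L : LShape} {t : DyadicShape}
    (h : IsPacked P) (hL : L.IsProper) (ht : L.HasShape t) : ∃ v, IsPacked ((L, v) :: P) := by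
  obtain ⟨r, F, O, hstate, hslack⟩ := h
  have harrived := hstate.cons_arrived hL
  by_cases hO : t ∈ O.map Cell.shape
  · obtain ⟨c, hc, rfl⟩ := List.mem_map.1 hO
    obtain ⟨O₁, O₂, rfl⟩ := List.append_of_mem hc
    have hc_first := harrived.perm_open List.perm_middle
    by_cases hfull : c.IsFull
    · exact (hc_first.close hfull).exists_isPacked_of_notMem_open hslack hL ht
        (List.nodup_cons.1 hc_first.open_nodup).1
    · exact hc_first.exists_isPacked_of_open hslack hL ht hfull
  · exact harrived.exists_isPacked_of_notMem_open hslack hL ht hO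

/-- The invariant of the algorithm.  The region is set up by the first item that is not
negligible. -/
def PackingInvariant (P : List (LShape × (ℝ × ℝ))) : Prop :=
  (∀ q ∈ P, q.1.IsProper) ∧ ((∀ q ∈ P, IsNegligible q) ∨ IsPacked P)

namespace PackingInvariant

variable {P : List (LShape × (ℝ × ℝ))} {L : LShape}

lemma nil : PackingInvariant [] := ⟨by simp, Or.inl (by simp)⟩

lemma cons_negligible (h : PackingInvariant P) (hL : L.IsProper) (hneg : IsNegligible (L, 0)) :
    PackingInvariant ((L, 0) :: P) := by
  refine ⟨List.forall_mem_cons.2 ⟨hL, h.1⟩, h.2.imp (fun hP => ?_) ?_⟩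
  · exact List.forall_mem_cons.2 ⟨hneg, hP⟩
  · rintro ⟨r, F, O, hstate, hslack⟩
    exact ⟨r, F, O, (hstate.cons_arrived hL).cons_negligible hL hneg, hslack⟩

lemma exists_cons (h : PackingInvariant P) (hL : L.IsProper) :
    ∃ v, PackingInvariant ((L, v) :: P) := by
  by_cases hpos : 0 < L.lx ∧ 0 < L.ly
  · obtain ⟨t, ht⟩ := LShape.exists_hasShape hpos.1 hpos.2
    suffices hpacked : ∃ v, IsPacked ((L, v) :: P) from hpacked.imp fun v hv =>
      ⟨List.forall_mem_cons.2 ⟨hL, h.1⟩, Or.inr hv⟩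
    rcases h.2 with hneg | hpacked
    · have hstart := IsState.of_isNegligible (fun q hq => ⟨h.1 q hq, hneg q hq⟩)
        (List.mem_cons_self (l := P.map Prod.fst)) ht.size_square_le
      refine hstart.exists_isPacked_of_free (by simp [totalArea]) hL ht
        ⟨_, List.mem_singleton_self _, ?_⟩ List.not_mem_nil
      exact DyadicShape.isAncestor_square ⟨le_max_left _ _, le_max_right _ _⟩
    · exact hpacked.exists_cons hL ht
  · exact ⟨0, h.cons_negligible hL ⟨rfl, hL.interior_translate_eq_empty hpos 0⟩⟩

lemma pairwise_disjoint (h : PackingInvariant P) :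
    P.Pairwise fun p q =>
      Disjoint (interior (p.1.translate p.2)) (interior (q.1.translate q.2)) := by
  rcases h.2 with hneg | ⟨r, F, O, hstate, -⟩
  · exact (IsLayout.of_isNegligible 0 hneg).items_disjoint
  · exact hstate.layout.items_disjoint

lemma translate_subset_of_isNegligible {s : ℝ × ℝ} (h : PackingInvariant P)
    (hs : IsAdmissibleSize (P.map Prod.fst) s) {q : LShape × (ℝ × ℝ)} (hq : q ∈ P)
    (hneg : IsNegligible q) : q.1.translate q.2 ⊆ Set.Icc 0 s := by
  refine ((h.1 q hq).translate_subset_Icc q.2).trans ?_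
  rw [hneg.1, zero_add]
  exact Set.Icc_subset_Icc_right (hs.arms_le q.1 (List.mem_map_of_mem hq))

lemma exists_subset_Icc {s : ℝ × ℝ} (h : PackingInvariant P)
    (hs : IsAdmissibleSize (P.map Prod.fst) s) :
    ∃ b, 0 ≤ b ∧ b.1 + b.2 ≤ 16 * (s.1 + s.2) ∧ ∀ q ∈ P, q.1.translate q.2 ⊆ Set.Icc 0 b := by
  have hs₁ : 0 ≤ s.1 := hs.nonneg.1
  have hs₂ : 0 ≤ s.2 := hs.nonneg.2
  rcases h.2 with hneg | ⟨r, F, O, hstate, -⟩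
  · exact ⟨s, hs.nonneg, by linarith, fun q hq =>
      h.translate_subset_of_isNegligible hs hq (hneg q hq)⟩
  · refine ⟨r.size ⊔ s, hs.nonneg.trans le_sup_right, ?_, fun q hq => ?_⟩
    · have hbound := hstate.halfPerimeter_le s hs
      obtain ⟨hr₁, hr₂⟩ := hstate.isSpine.size_le
      rw [Prod.fst_sup, Prod.snd_sup]
      rcases max_cases r.size.1 s.1 with h₁ | h₁ <;> rcases max_cases r.size.2 s.2 with h₂ | h₂ <;>
        linarith
    · rcases hstate.layout.items_inside q hq with hneg | hsub
      · exact (h.translate_subset_of_isNegligible hs hq hneg).trans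
          (Set.Icc_subset_Icc_right le_sup_right)
      · exact hsub.trans (Set.Icc_subset_Icc_right le_sup_left)

end PackingInvariant

/-! ### Online algorithms from invariants -/

section Online

variable {α β : Type*}

/-- The inputs `l` together with the outputs that the online algorithm `A` assigns to them, the
latest first. -/
def history (A : List α → β) (l : List α) : List (α × β) :=
  (List.ofFn fun i : Fin l.length => (l.get i, A (l.take (i.1 + 1)))).reverse

lemma mem_history (A : List α → β) (l : List α) (i : Fin l.length) :
    (l.get i, A (l.take (i.1 + 1))) ∈ history A l :=
  List.mem_reverse.2 (List.mem_ofFn.2 ⟨i, rfl⟩)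

lemma map_fst_history (A : List α → β) (l : List α) :
    (history A l).map Prod.fst = l.reverse := by
  simp only [history, List.map_reverse, List.map_ofFn, Function.comp_def, List.ofFn_get]

lemma history_concat (A : List α → β) (l : List α) (a : α) :
    history A (l ++ [a]) = (a, A (l ++ [a])) :: history A l := by
  rw [history, history, ← List.reverse_concat, List.reverse_inj]
  refine List.ext_getElem (by simp) fun i hi _ => ?_
  have hil : i < l.length + 1 := by simpa using hi
  rw [List.getElem_ofFn]
  rcases Nat.lt_succ_iff_lt_or_eq.1 hil with h | rfl
  · simp [h, List.take_append_of_le_length (Nat.succ_le_of_lt h)]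
  · simp [List.take_of_length_le]

lemma exists_online_of_invariant [Nonempty β] {valid : α → Prop} {I : List (α × β) → Prop}
    (hnil : I []) (hcons : ∀ P a, I P → valid a → ∃ b, I ((a, b) :: P)) :
    ∃ A : List α → β, ∀ l : List α, (∀ a ∈ l, valid a) → I (history A l) := by
  choose! next hnext using hcons
  let run (l : List α) : List (α × β) := l.foldl (fun P a => (a, next P a) :: P) []
  let A (l : List α) : β := l.getLast?.elim (Classical.arbitrary β) (next (run l.dropLast))
  have history_eq_run (l : List α) : history A l = run l := by
    induction l using List.reverseRecOn with
    | nil => rfl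
    | append_singleton l a ih => simp [history_concat, ih, A, run]
  refine ⟨A, fun l hl => history_eq_run l ▸ ?_⟩
  induction l using List.reverseRecOn with
  | nil => exact hnil
  | append_singleton l a ih =>
    obtain ⟨hl, ha⟩ := List.forall_mem_append.1 hl
    simpa [run] using hnext _ _ (ih hl) (ha a (List.mem_singleton_self a))

end Online

lemma onlinePlaces_of_pairwise_history {A : List LShape → ℝ × ℝ} {l : List LShape}
    (h : (history A l).Pairwise fun p q =>
      Disjoint (interior (p.1.translate p.2)) (interior (q.1.translate q.2))) :
    OnlinePlaces A l := by
  have hlt := List.pairwise_ofFn.1 (List.pairwise_reverse.1 h)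
  intro i j hij
  rcases hij.lt_or_gt with hlt_ij | hlt_ji
  · exact (hlt hlt_ij).symm
  · exact hlt hlt_ji

/-! ### Comparison with offline placements -/

section Offline

open MeasureTheory

variable {ι : Type*} [Fintype ι] {K : ι → LShape} {u : ι → ℝ × ℝ}

lemma sum_maxArmArea_le (hK : ∀ i, (K i).IsProper)
    (hu : Pairwise fun i j =>
      Disjoint (interior ((K i).translate (u i))) (interior ((K j).translate (u j))))
    {a s : ℝ × ℝ} (hs : 0 ≤ s) (hsub : ∀ i, (K i).translate (u i) ⊆ Set.Icc a (a + s)) :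
    ∑ i, (K i).maxArmArea ≤ s.1 * s.2 := by
  rw [← ENNReal.ofReal_le_ofReal_iff (mul_nonneg hs.1 hs.2)]
  calc ENNReal.ofReal (∑ i, (K i).maxArmArea)
      = ∑ i, ENNReal.ofReal (K i).maxArmArea :=
        ENNReal.ofReal_sum_of_nonneg fun i _ => (hK i).maxArmArea_nonneg
    _ ≤ ∑ i, volume (interior ((K i).translate (u i))) :=
        Finset.sum_le_sum fun i _ => (hK i).ofReal_maxArmArea_le_volume (u i)
    _ = volume (⋃ i, interior ((K i).translate (u i))) := by
        rw [measure_iUnion hu fun i => isOpen_interior.measurableSet, tsum_fintype]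
    _ ≤ volume (openBox a (a + s)) := by
        rw [← interior_Icc_eq_openBox]
        exact measure_mono (Set.iUnion_subset fun i => interior_mono (hsub i))
    _ = ENNReal.ofReal (s.1 * s.2) := by
        rw [volume_openBox, ENNReal.ofReal_mul hs.1, Prod.fst_add, Prod.snd_add,
          add_sub_cancel_left, add_sub_cancel_left]

end Offline

lemma isAdmissibleSize_bboxSize {l : List LShape} (hl : ∀ L ∈ l, L.IsProper)
    {u : Fin l.length → ℝ × ℝ}
    (hu : Pairwise fun i j =>
      Disjoint (interior ((l.get i).translate (u i))) (interior ((l.get j).translate (u j)))) :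
    IsAdmissibleSize l (bboxSize (⋃ i, (l.get i).translate (u i))) := by
  have hproper (i : Fin l.length) : (l.get i).IsProper := hl _ (l.get_mem i)
  have hcompact : IsCompact (⋃ i, (l.get i).translate (u i)) :=
    isCompact_iUnion fun i => (l.get i).isCompact_translate (u i)
  obtain ⟨a, ha⟩ := exists_subset_Icc_add_bboxSize hcompact
  have hsub := Set.iUnion_subset_iff.1 ha
  refine ⟨bboxSize_nonneg hcompact, fun L hL => ?_, ?_⟩
  · obtain ⟨i, rfl⟩ := List.get_of_mem hL
    exact (hproper i).arms_le_of_translate_subset (hsub i)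
  · calc (l.map LShape.maxArmArea).sum = ∑ i, (l.get i).maxArmArea := by simp [← List.sum_ofFn]
      _ ≤ _ := sum_maxArmArea_le hproper hu (bboxSize_nonneg hcompact) hsub

lemma PackingInvariant.bboxPerim_history_le {A : List LShape → ℝ × ℝ} {l : List LShape}
    {s : ℝ × ℝ} (h : PackingInvariant (history A l)) (hs : IsAdmissibleSize l s) :
    bboxPerim (⋃ i : Fin l.length, planeTranslate (planePlaceOf A l i) (l.get i).toSet) ≤
      16 * (2 * (s.1 + s.2)) := by
  have hs' : IsAdmissibleSize ((history A l).map Prod.fst) s :=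
    map_fst_history A l ▸ hs.perm l.reverse_perm.symm
  obtain ⟨b, hb, hbs, hsub⟩ := h.exists_subset_Icc hs'
  have hsize : bboxSize (⋃ i : Fin l.length,
      planeTranslate (planePlaceOf A l i) (l.get i).toSet) ≤ b - 0 :=
    bboxSize_le_sub hb (Set.iUnion_subset fun i => hsub _ (mem_history A l i))
  rw [sub_zero] at hsize
  rw [bboxPerim_eq]
  linarith [add_le_add hsize.1 hsize.2]

theorem stmt9_general :
    ∃ A : List LShape → ℝ × ℝ,
      ∀ l : List LShape, (∀ L ∈ l, L.IsProper) →
        OnlinePlaces A l ∧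
        bboxPerim (⋃ i : Fin l.length,
            planeTranslate (planePlaceOf A l i) (l.get i).toSet) ≤
          16 * sInf {P : ℝ | ∃ u : Fin l.length → ℝ × ℝ,
            (∀ i j, i ≠ j →
              Disjoint (interior (planeTranslate (u i) (l.get i).toSet))
                       (interior (planeTranslate (u j) (l.get j).toSet))) ∧
            P = bboxPerim (⋃ i, planeTranslate (u i) (l.get i).toSet)} := by
  obtain ⟨A, hA⟩ := exists_online_of_invariant PackingInvariant.nil
    fun _ L hP (hL : L.IsProper) => hP.exists_cons hL
  refine ⟨A, fun l hl => ?_⟩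
  have hplaces : OnlinePlaces A l := onlinePlaces_of_pairwise_history (hA l hl).pairwise_disjoint
  refine ⟨hplaces, ?_⟩
  rw [← div_le_iff₀' (by norm_num)]
  refine le_csInf ⟨_, planePlaceOf A l, hplaces, rfl⟩ ?_
  rintro _ ⟨u, hu, rfl⟩
  rw [div_le_iff₀' (by norm_num)]
  exact (hA l hl).bboxPerim_history_le (isAdmissibleSize_bboxSize hl hu)

/-- there is a deterministic online algorithm placing L-shapes in the plane by
translations with pairwise disjoint interiors whose bounding-box perimeter is, on every
input sequence of L-shapes with arm lengths in `[0,1]`, at most 16 times the minimum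
bounding-box perimeter over all offline placements with pairwise disjoint interiors. -/
theorem stmt9 :
    ∃ A : List LShape → ℝ × ℝ,
      ∀ l : List LShape, (∀ L ∈ l, L.IsValid) →
        OnlinePlaces A l ∧
        bboxPerim (⋃ i : Fin l.length,
            planeTranslate (planePlaceOf A l i) (l.get i).toSet) ≤
          16 * sInf {P : ℝ | ∃ u : Fin l.length → ℝ × ℝ,
            (∀ i j, i ≠ j →
              Disjoint (interior (planeTranslate (u i) (l.get i).toSet))
                       (interior (planeTranslate (u j) (l.get j).toSet))) ∧
            P = bboxPerim (⋃ i, planeTranslate (u i) (l.get i).toSet)} := by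
  obtain ⟨A, hA⟩ := stmt9_general
  exact ⟨A, fun l hl => hA l fun L hL => (hl L hL).isProper⟩
end

section
/- There exist a constant c > 0 and a deterministic online algorithm for placing L-shapes in the plane by translations (each placement irrevocable, all translates with pairwise disjoint interiors) such that for every finite input sequence of n L-shapes with arm lengths in [0,1] and positive widths (wx > 0 and wy > 0), the area of the smallest axis-parallel bounding rectangle of the algorithm's placement is at most c·√n·OPT + c, where OPT is the minimum possible bounding-rectangle area over all offline translational placements of the same L-shapes with pairwise disjoint interiors. -/
/-- The area of the smallest axis-parallel rectangle containing `S`. -/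
noncomputable def bboxArea (S : Set (ℝ × ℝ)) : ℝ :=
  (sSup ((fun p : ℝ × ℝ => p.1) '' S) - sInf ((fun p : ℝ × ℝ => p.1) '' S)) *
  (sSup ((fun p : ℝ × ℝ => p.2) '' S) - sInf ((fun p : ℝ × ℝ => p.2) '' S))

/-!
L-shapes whose two arm lengths agree up to a factor `2` can be nested diagonally, corner into notch:
a block of size `2·2⁻ᵃ × 2·2⁻ᵇ` for the arm lengths up to `(2⁻ᵃ, 2⁻ᵇ)` is abandoned only after the
notches have moved by `2⁻ᵃ` horizontally or by `2⁻ᵇ` vertically, and then its items cover a constant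
fraction of it. The blocks of each height are cut off shelves in a strip of width `4`, and one
unfinished block per class costs only a convergent double geometric series. As the area of the items
is a lower bound for `OPT`, the algorithm is even constant-competitive up to an additive constant.

The amortization uses as potential half the height minus the weighted free rooms: opening shelves
and blocks does not increase it, and placing an item increases it by at most `4` times a lower bound
for the area of the item.
-/

open Function MeasureTheory Set

/-! ### Bounding boxes -/

theorem interior_Icc_prod (p q : ℝ × ℝ) :
    interior (Icc p q) = Ioo p.1 q.1 ×ˢ Ioo p.2 q.2 := by
  rw [Icc_prod_eq, interior_prod_eq, interior_Icc, interior_Icc]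

theorem volume_Icc_prod (p q : ℝ × ℝ) :
    volume (Icc p q) = ENNReal.ofReal (q.1 - p.1) * ENNReal.ofReal (q.2 - p.2) := by
  rw [Icc_prod_eq, Measure.volume_eq_prod, Measure.prod_prod, Real.volume_Icc, Real.volume_Icc]

theorem volume_interior_Icc_prod (p q : ℝ × ℝ) :
    volume (interior (Icc p q)) = ENNReal.ofReal (q.1 - p.1) * ENNReal.ofReal (q.2 - p.2) := by
  rw [interior_Icc_prod, Measure.volume_eq_prod, Measure.prod_prod, Real.volume_Ioo,
    Real.volume_Ioo]

theorem sInf_le_sSup_of_isBounded {S : Set ℝ} (hS : Bornology.IsBounded S) : sInf S ≤ sSup S :=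
  Real.sInf_le_sSup S hS.bddBelow hS.bddAbove

theorem bboxArea_nonneg {S : Set (ℝ × ℝ)} (hS : Bornology.IsBounded S) : 0 ≤ bboxArea S :=
  mul_nonneg (sub_nonneg.2 (sInf_le_sSup_of_isBounded hS.image_fst))
    (sub_nonneg.2 (sInf_le_sSup_of_isBounded hS.image_snd))

@[simp]
theorem bboxArea_empty : bboxArea ∅ = 0 := by simp [bboxArea]

theorem bboxArea_le_of_subset_Icc {S : Set (ℝ × ℝ)} {p q : ℝ × ℝ} (hpq : p ≤ q)
    (hS : S ⊆ Icc p q) : bboxArea S ≤ (q.1 - p.1) * (q.2 - p.2) := by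
  have hpq₁ : 0 ≤ q.1 - p.1 := sub_nonneg.2 hpq.1
  have hpq₂ : 0 ≤ q.2 - p.2 := sub_nonneg.2 hpq.2
  rcases S.eq_empty_or_nonempty with rfl | hne
  · rw [bboxArea_empty]
    exact mul_nonneg hpq₁ hpq₂
  have hbdd : Bornology.IsBounded S := (isCompact_Icc.isBounded).subset hS
  refine mul_le_mul (sub_le_sub ?_ ?_) (sub_le_sub ?_ ?_)
    (sub_nonneg.2 (sInf_le_sSup_of_isBounded hbdd.image_snd)) hpq₁
  · exact csSup_le (hne.image _) (forall_mem_image.2 fun r hr => (hS hr).2.1)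
  · exact le_csInf (hne.image _) (forall_mem_image.2 fun r hr => (hS hr).1.1)
  · exact csSup_le (hne.image _) (forall_mem_image.2 fun r hr => (hS hr).2.2)
  · exact le_csInf (hne.image _) (forall_mem_image.2 fun r hr => (hS hr).1.2)

theorem volume_le_bboxArea {S : Set (ℝ × ℝ)} (hS : Bornology.IsBounded S) :
    volume S ≤ ENNReal.ofReal (bboxArea S) := by
  have hS₁ := hS.image_fst
  have hS₂ := hS.image_snd
  have hsub : S ⊆ Icc (sInf (Prod.fst '' S), sInf (Prod.snd '' S))
      (sSup (Prod.fst '' S), sSup (Prod.snd '' S)) := fun p hp =>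
    ⟨⟨csInf_le hS₁.bddBelow (mem_image_of_mem _ hp), csInf_le hS₂.bddBelow (mem_image_of_mem _ hp)⟩,
      le_csSup hS₁.bddAbove (mem_image_of_mem _ hp), le_csSup hS₂.bddAbove (mem_image_of_mem _ hp)⟩
  refine (measure_mono hsub).trans_eq ?_
  rw [volume_Icc_prod, bboxArea,
    ENNReal.ofReal_mul (sub_nonneg.2 (sInf_le_sSup_of_isBounded hS₁))]

theorem sum_volume_interior_le_bboxArea {ι : Type*} [Fintype ι] {S : ι → Set (ℝ × ℝ)}
    (hS : ∀ i, Bornology.IsBounded (S i))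
    (hdisj : ∀ i j, i ≠ j → Disjoint (interior (S i)) (interior (S j))) :
    ∑ i, volume (interior (S i)) ≤ ENNReal.ofReal (bboxArea (⋃ i, S i)) :=
  calc ∑ i, volume (interior (S i))
      = volume (⋃ i, interior (S i)) := by
        rw [measure_iUnion (fun i j hij => hdisj i j hij) fun i => isOpen_interior.measurableSet,
          tsum_fintype]
    _ ≤ volume (⋃ i, S i) := measure_mono (iUnion_mono fun i => interior_subset)
    _ ≤ ENNReal.ofReal (bboxArea (⋃ i, S i)) :=
        volume_le_bboxArea (Bornology.isBounded_iUnion.2 hS)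

/-! ### Translates of L-shapes -/

theorem mem_planeTranslate {v p : ℝ × ℝ} {S : Set (ℝ × ℝ)} :
    p ∈ planeTranslate v S ↔ p - v ∈ S := by
  rw [planeTranslate, image_add_right, mem_preimage, sub_eq_add_neg]

theorem interior_planeTranslate (v : ℝ × ℝ) (S : Set (ℝ × ℝ)) :
    interior (planeTranslate v S) = planeTranslate v (interior S) :=
  ((Homeomorph.addRight v).image_interior S).symm

theorem volume_planeTranslate (v : ℝ × ℝ) (S : Set (ℝ × ℝ)) :
    volume (planeTranslate v S) = volume S := by
  rw [planeTranslate, image_add_right, measure_preimage_add_right]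

namespace LShape

variable {L : LShape}

/-- The mean of the areas of the two arms, a lower bound for the area of an L-shape. -/
noncomputable def meanArmArea (L : LShape) : ℝ := (L.lx * L.wy + L.wx * L.ly) / 2

/-- The corner at which the next L-shape can be nested into `L`. This is `(wx, wy)`, except that a
segment (`lx = 0` or `ly = 0`), whose interior is empty, does not move the corner by its length. -/
noncomputable def notch (L : LShape) : ℝ × ℝ :=
  (if L.ly = 0 then 0 else L.wx, if L.lx = 0 then 0 else L.wy)

namespace IsValid

theorem lx_nonneg (hL : L.IsValid) : 0 ≤ L.lx := hL.1.trans hL.2.1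

theorem ly_nonneg (hL : L.IsValid) : 0 ≤ L.ly := hL.2.2.2.1.trans hL.2.2.2.2.1

theorem lx_le_one (hL : L.IsValid) : L.lx ≤ 1 := hL.2.2.1

theorem ly_le_one (hL : L.IsValid) : L.ly ≤ 1 := hL.2.2.2.2.2

theorem meanArmArea_nonneg (hL : L.IsValid) : 0 ≤ L.meanArmArea := by
  have := mul_nonneg hL.lx_nonneg hL.2.2.2.1
  have := mul_nonneg hL.1 hL.ly_nonneg
  unfold meanArmArea
  positivity

theorem notch_nonneg (hL : L.IsValid) : 0 ≤ L.notch :=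
  ⟨ite_nonneg le_rfl hL.1, ite_nonneg le_rfl hL.2.2.2.1⟩

theorem notch_le (hL : L.IsValid) : L.notch ≤ (L.lx, L.ly) :=
  ⟨ite_le_sup _ _ _ |>.trans (sup_le hL.lx_nonneg hL.2.1),
    ite_le_sup _ _ _ |>.trans (sup_le hL.ly_nonneg hL.2.2.2.2.1)⟩

theorem toSet_subset_Icc (hL : L.IsValid) : L.toSet ⊆ Icc 0 (L.lx, L.ly) :=
  union_subset (Icc_subset_Icc_right ⟨le_rfl, hL.2.2.2.2.1⟩)
    (Icc_subset_Icc_right ⟨hL.2.1, le_rfl⟩)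

theorem interior_toSet_subset (hL : L.IsValid) :
    interior L.toSet ⊆ Ioo 0 L.lx ×ˢ Ioo 0 L.ly :=
  (interior_mono hL.toSet_subset_Icc).trans_eq (interior_Icc_prod _ _)

theorem le_notch_of_mem_interior (hL : L.IsValid) {p : ℝ × ℝ} (hp : p ∈ interior L.toSet) :
    p.1 ≤ L.notch.1 ∨ p.2 ≤ L.notch.2 := by
  obtain ⟨⟨hx₀, hx⟩, hy₀, hy⟩ := hL.interior_toSet_subset hp
  rw [notch, if_neg (hy₀.trans hy).ne', if_neg (hx₀.trans hx).ne']
  exact (interior_subset hp).symm.imp (fun h => h.2.1) fun h => h.2.2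

theorem meanArmArea_le_volume (hL : L.IsValid) (v : ℝ × ℝ) :
    ENNReal.ofReal L.meanArmArea ≤ volume (interior (planeTranslate v L.toSet)) := by
  have harm : ∀ a b : ℝ, 0 ≤ a → Icc (0, 0) (a, b) ⊆ L.toSet →
      ENNReal.ofReal (a * b) ≤ volume (interior L.toSet) := fun a b ha hab => by
    rw [ENNReal.ofReal_mul ha]
    simpa only [volume_interior_Icc_prod, sub_zero] using
      measure_mono (μ := volume) (interior_mono hab)
  have hmean : L.meanArmArea ≤ max (L.lx * L.wy) (L.wx * L.ly) := by
    unfold meanArmArea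
    linarith [le_max_left (L.lx * L.wy) (L.wx * L.ly), le_max_right (L.lx * L.wy) (L.wx * L.ly)]
  rw [interior_planeTranslate, volume_planeTranslate]
  calc ENNReal.ofReal L.meanArmArea
      ≤ max (ENNReal.ofReal (L.lx * L.wy)) (ENNReal.ofReal (L.wx * L.ly)) :=
        (ENNReal.ofReal_le_ofReal hmean).trans_eq (ENNReal.ofReal_max _ _)
    _ ≤ volume (interior L.toSet) :=
        max_le (harm _ _ hL.lx_nonneg subset_union_left) (harm _ _ hL.1 subset_union_right)

end IsValid

theorem isBounded_planeTranslate (L : LShape) (v : ℝ × ℝ) :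
    Bornology.IsBounded (planeTranslate v L.toSet) :=
  ((isCompact_Icc.union isCompact_Icc).image (continuous_add_const v)).isBounded

end LShape

/-! ### The offline optimum -/

/-- The offline optimum `OPT`: the least bounding-box area of a placement of the items of `l` with
pairwise disjoint interiors. -/
noncomputable def optArea (l : List LShape) : ℝ :=
  sInf {P : ℝ | ∃ u : Fin l.length → ℝ × ℝ,
    (∀ i j, i ≠ j →
      Disjoint (interior (planeTranslate (u i) (l.get i).toSet))
               (interior (planeTranslate (u j) (l.get j).toSet))) ∧
    P = bboxArea (⋃ i, planeTranslate (u i) (l.get i).toSet)}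

theorem isBounded_iUnion_planeTranslate (l : List LShape) (u : Fin l.length → ℝ × ℝ) :
    Bornology.IsBounded (⋃ i, planeTranslate (u i) (l.get i).toSet) :=
  Bornology.isBounded_iUnion.2 fun i => (l.get i).isBounded_planeTranslate (u i)

theorem optArea_nonneg (l : List LShape) : 0 ≤ optArea l :=
  Real.sInf_nonneg fun _ ⟨u, _, hP⟩ => hP ▸ bboxArea_nonneg (isBounded_iUnion_planeTranslate l u)

theorem optArea_le_sqrt_length_mul (l : List LShape) :
    optArea l ≤ Real.sqrt l.length * optArea l := by
  rcases l.eq_nil_or_concat with rfl | ⟨l', L, rfl⟩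
  · simp [optArea]
  · refine le_mul_of_one_le_left (optArea_nonneg _) (Real.one_le_sqrt.2 ?_)
    simp

theorem sum_meanArmArea_le_bboxArea {l : List LShape} (hl : ∀ L ∈ l, L.IsValid)
    {u : Fin l.length → ℝ × ℝ}
    (hu : ∀ i j, i ≠ j → Disjoint (interior (planeTranslate (u i) (l.get i).toSet))
      (interior (planeTranslate (u j) (l.get j).toSet))) :
    (l.map LShape.meanArmArea).sum ≤ bboxArea (⋃ i, planeTranslate (u i) (l.get i).toSet) := by
  have hvalid : ∀ i : Fin l.length, l[i.1].IsValid := fun i => hl _ (l.get_mem i)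
  rw [← ENNReal.ofReal_le_ofReal_iff (bboxArea_nonneg (isBounded_iUnion_planeTranslate l u)),
    ← Fin.sum_univ_fun_getElem, ENNReal.ofReal_sum_of_nonneg fun i _ =>
      (hvalid i).meanArmArea_nonneg]
  exact (Finset.sum_le_sum fun i _ => (hvalid i).meanArmArea_le_volume (u i)).trans
    (sum_volume_interior_le_bboxArea (fun i => (l.get i).isBounded_planeTranslate (u i)) hu)

theorem sum_meanArmArea_le_optArea {l : List LShape} (hl : ∀ L ∈ l, L.IsValid)
    {u : Fin l.length → ℝ × ℝ}
    (hu : ∀ i j, i ≠ j → Disjoint (interior (planeTranslate (u i) (l.get i).toSet))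
      (interior (planeTranslate (u j) (l.get j).toSet))) :
    (l.map LShape.meanArmArea).sum ≤ optArea l :=
  le_csInf ⟨_, u, hu, rfl⟩ fun _ ⟨_, hu', hP⟩ => hP ▸ sum_meanArmArea_le_bboxArea hl hu'

/-! ### Dyadic classes -/

/-- The dyadic scale `2⁻ᵃ`. -/
noncomputable def dyad (a : ℕ) : ℝ := (1 / 2) ^ a

theorem dyad_pos (a : ℕ) : 0 < dyad a := by
  unfold dyad
  positivity

theorem dyad_le_one (a : ℕ) : dyad a ≤ 1 := pow_le_one₀ (by norm_num) (by norm_num)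

theorem hasSum_dyad : HasSum dyad 2 := hasSum_geometric_two

theorem hasSum_dyad_mul_dyad : HasSum (fun k : ℕ × ℕ => dyad k.1 * dyad k.2) 4 := by
  have hsummable := hasSum_dyad.summable.mul_of_nonneg hasSum_dyad.summable
    (fun a => (dyad_pos a).le) fun b => (dyad_pos b).le
  rw [show (4 : ℝ) = 2 * 2 by norm_num]
  exact hasSum_dyad.mul hasSum_dyad hsummable

/-- The `a` with `2⁻⁽ᵃ⁺¹⁾ < x ≤ 2⁻ᵃ`, for `x ∈ (0, 1]`; the class of `0` is `0`. -/
noncomputable def dyadClass (x : ℝ) : ℕ := Nat.log 2 ⌊x⁻¹⌋₊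

theorem le_dyad_dyadClass {x : ℝ} (hx₀ : 0 ≤ x) (hx₁ : x ≤ 1) : x ≤ dyad (dyadClass x) := by
  rcases hx₀.eq_or_lt with rfl | hx
  · exact (dyad_pos _).le
  have hfloor : ⌊x⁻¹⌋₊ ≠ 0 := (Nat.floor_pos.2 ((one_le_inv₀ hx).2 hx₁)).ne'
  have hpow : (2 : ℝ) ^ dyadClass x ≤ x⁻¹ := by
    exact_mod_cast (Nat.le_floor_iff (inv_nonneg.2 hx₀)).1 (Nat.pow_log_le_self 2 hfloor)
  rw [dyad, one_div, inv_pow]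
  exact (le_inv_comm₀ hx (by positivity)).2 hpow

theorem dyad_dyadClass_lt {x : ℝ} (hx : 0 < x) : dyad (dyadClass x) < 2 * x := by
  have hpow : x⁻¹ < 2 ^ (dyadClass x + 1) := by
    exact_mod_cast (Nat.floor_lt (inv_nonneg.2 hx.le)).1
      (Nat.lt_pow_succ_log_self one_lt_two ⌊x⁻¹⌋₊)
  have hinv : (2 ^ (dyadClass x + 1))⁻¹ < x := (inv_lt_comm₀ hx (by positivity)).1 hpow
  rw [dyad, one_div, inv_pow]
  rw [pow_succ, mul_inv] at hinv
  linarith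

namespace LShape

variable {L : LShape}

/-- The class of an L-shape: the dyadic classes of its two arm lengths. -/
noncomputable def cls (L : LShape) : ℕ × ℕ := (dyadClass L.lx, dyadClass L.ly)

theorem IsValid.lx_le_dyad (hL : L.IsValid) : L.lx ≤ dyad L.cls.1 :=
  le_dyad_dyadClass hL.lx_nonneg hL.lx_le_one

theorem IsValid.ly_le_dyad (hL : L.IsValid) : L.ly ≤ dyad L.cls.2 :=
  le_dyad_dyadClass hL.ly_nonneg hL.ly_le_one

theorem IsValid.notch_mul_dyad_le (hL : L.IsValid) :
    L.notch.1 * dyad L.cls.2 + L.notch.2 * dyad L.cls.1 ≤ 4 * L.meanArmArea := by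
  have hbound : ∀ w x : ℝ, 0 ≤ w → 0 ≤ x →
      (if x = 0 then 0 else w) * dyad (dyadClass x) ≤ 2 * (w * x) := fun w x hw hx => by
    rcases hx.eq_or_lt with rfl | hx
    · simp
    · rw [if_neg hx.ne']
      nlinarith [dyad_dyadClass_lt hx]
  have hx := hbound L.wy L.lx hL.2.2.2.1 hL.lx_nonneg
  have hy := hbound L.wx L.ly hL.1 hL.ly_nonneg
  simp only [notch, cls, meanArmArea]
  linarith

end LShape

/-! ### The algorithm -/

/-- An axis-parallel rectangle, used for the free part of a shelf or of a block. -/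
structure Room where
  left : ℝ
  right : ℝ
  bottom : ℝ
  top : ℝ

namespace Room

/-- The open rectangle. -/
def inner (R : Room) : Set (ℝ × ℝ) := Ioo R.left R.right ×ˢ Ioo R.bottom R.top

/-- The part of width `w` at the left end. -/
def leftPart (R : Room) (w : ℝ) : Room := { R with right := R.left + w }

/-- The rectangle whose lower left corner is moved by `v`. -/
def shrink (R : Room) (v : ℝ × ℝ) : Room :=
  { R with left := R.left + v.1, bottom := R.bottom + v.2 }

/-- The rectangle lies in `[0, 4] × [0, h]`; it may have width or height `0`. -/
structure InStrip (R : Room) (h : ℝ) : Prop where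
  left_nonneg : 0 ≤ R.left
  left_le_right : R.left ≤ R.right
  right_le : R.right ≤ 4
  bottom_nonneg : 0 ≤ R.bottom
  bottom_le_top : R.bottom ≤ R.top
  top_le : R.top ≤ h

variable {R : Room} {h w : ℝ} {v : ℝ × ℝ}

theorem inner_leftPart_subset (hw : R.left + w ≤ R.right) : (R.leftPart w).inner ⊆ R.inner :=
  prod_mono_left (Ioo_subset_Ioo_right hw)

theorem inner_shrink_subset (hv : 0 ≤ v) : (R.shrink v).inner ⊆ R.inner :=
  prod_mono (Ioo_subset_Ioo_left (le_add_of_nonneg_right hv.1))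
    (Ioo_subset_Ioo_left (le_add_of_nonneg_right hv.2))

theorem disjoint_inner_leftPart_shrink (R : Room) (v : ℝ × ℝ) :
    Disjoint (R.leftPart v.1).inner (R.shrink v).inner :=
  disjoint_left.2 fun _ hp hp' => hp.1.2.not_gt hp'.1.1

namespace InStrip

theorem mono {h' : ℝ} (hR : R.InStrip h) (hh : h ≤ h') : R.InStrip h' :=
  { hR with top_le := hR.top_le.trans hh }

theorem leftPart (hR : R.InStrip h) (hw₀ : 0 ≤ w) (hw : R.left + w ≤ R.right) :
    (R.leftPart w).InStrip h :=
  { hR with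
    left_le_right := le_add_of_nonneg_right hw₀
    right_le := hw.trans hR.right_le }

theorem shrink (hR : R.InStrip h) (hv : 0 ≤ v) (hx : R.left + v.1 ≤ R.right)
    (hy : R.bottom + v.2 ≤ R.top) : (R.shrink v).InStrip h :=
  { hR with
    left_nonneg := add_nonneg hR.left_nonneg hv.1
    left_le_right := hx
    bottom_nonneg := add_nonneg hR.bottom_nonneg hv.2
    bottom_le_top := hy }

end InStrip

end Room

/-- Names of the free rectangles: `inl b` for the current shelf of height `2·2⁻ᵇ`, and `inr (a, b)`
for the current block of size `2·2⁻ᵃ × 2·2⁻ᵇ`, which takes the L-shapes of class `(a, b)`. -/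
abbrev Cell_s10 : Type := ℕ ⊕ ℕ × ℕ

/-- The size constraints on the free part of a cell. A shelf of width `0` may be a missing one, and
has no prescribed height. -/
def Room.IsPartOf (R : Room) : Cell_s10 → Prop
  | .inl b => R.left < R.right → R.top = R.bottom + 2 * dyad b
  | .inr k => R.right ≤ R.left + 2 * dyad k.1 ∧ R.top ≤ R.bottom + 2 * dyad k.2

/-- The memory of the algorithm, which fills the strip `0 ≤ x ≤ 4` from the bottom: everything above
`height` is untouched, and `room c` is the free part of the current shelf or block `c`. -/
structure PackState where
  height : ℝ
  room : Cell_s10 → Room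

namespace PackState

/-- The state before the first item. Shelves and blocks of size `0` stand for missing ones. -/
def start : PackState where
  height := 0
  room := fun _ => ⟨0, 0, 0, 0⟩

/-- Change the height to `h` and the room of the cell `c` to `R`. -/
def assign (s : PackState) (h : ℝ) (c : Cell_s10) (R : Room) : PackState where
  height := h
  room := update s.room c R

/-- Put a new shelf of height `2·2⁻ᵇ` on top, abandoning the current one. -/
noncomputable def openShelf (s : PackState) (b : ℕ) : PackState :=
  s.assign (s.height + 2 * dyad b) (.inl b) ⟨0, 4, s.height, s.height + 2 * dyad b⟩

/-- Cut a new block of class `k` off the left end of the current shelf. -/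
noncomputable def cutBlock (s : PackState) (k : ℕ × ℕ) : PackState :=
  let S := s.room (.inl k.2)
  (s.assign s.height (.inl k.2) (S.shrink (2 * dyad k.1, 0))).assign s.height
    (.inr k) (S.leftPart (2 * dyad k.1))

/-- Move the lower left corner of the free part of the current block of class `k` by `v`. -/
def shrinkBlock (s : PackState) (k : ℕ × ℕ) (v : ℝ × ℝ) : PackState :=
  s.assign s.height (.inr k) ((s.room (.inr k)).shrink v)

/-- The current shelf has room for a block of class `k`. -/
def ShelfFits (s : PackState) (k : ℕ × ℕ) : Prop :=
  (s.room (.inl k.2)).left + 2 * dyad k.1 ≤ (s.room (.inl k.2)).right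

/-- The current block of class `k` has room for every L-shape of class `k`. -/
def BlockFits (s : PackState) (k : ℕ × ℕ) : Prop :=
  (s.room (.inr k)).left + dyad k.1 ≤ (s.room (.inr k)).right ∧
    (s.room (.inr k)).bottom + dyad k.2 ≤ (s.room (.inr k)).top

open Classical in
/-- Open a new shelf if the current one has no room for a block of class `k`. -/
noncomputable def ensureShelf (s : PackState) (k : ℕ × ℕ) : PackState :=
  if s.ShelfFits k then s else s.openShelf k.2

open Classical in
/-- Cut a new block if the current one has no room for an L-shape of class `k`. -/
noncomputable def ensureBlock (s : PackState) (k : ℕ × ℕ) : PackState :=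
  if s.BlockFits k then s else (s.ensureShelf k).cutBlock k

/-- The position of an arriving L-shape: the corner of the current block of its class. -/
noncomputable def place (s : PackState) (L : LShape) : ℝ × ℝ :=
  let B := (s.ensureBlock L.cls).room (.inr L.cls)
  (B.left, B.bottom)

/-- The state transition on arrival of `L`: the next L-shape of the same class is nested into the
notch of `L`. -/
noncomputable def step (s : PackState) (L : LShape) : PackState :=
  (s.ensureBlock L.cls).shrinkBlock L.cls L.notch

/-- The part of the plane that is still available. -/
def free (s : PackState) : Set (ℝ × ℝ) := {p | s.height < p.2} ∪ ⋃ c, (s.room c).inner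

/-- The invariant of the algorithm: the free rooms lie below `height`, fit their cells and do not
overlap. -/
structure Inv (s : PackState) : Prop where
  inStrip : ∀ c, (s.room c).InStrip s.height
  isPartOf : ∀ c, (s.room c).IsPartOf c
  disjoint : Pairwise fun c d => Disjoint (s.room c).inner (s.room d).inner

end PackState

/-- The state after processing a list of items. -/
noncomputable def packRun (l : List LShape) : PackState := l.foldl PackState.step PackState.start

/-- The online algorithm; its value on the empty list is never used. -/
noncomputable def packAlg (l : List LShape) : ℝ × ℝ :=
  l.getLast?.elim 0 (packRun l.dropLast).place

/-! ### Preservation of the invariant -/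

theorem pairwise_disjoint_update {ι α β : Type*} [DecidableEq ι] {f : ι → α} {g : α → Set β}
    (hf : Pairwise fun i j => Disjoint (g (f i)) (g (f j))) {i : ι} {a : α}
    (ha : ∀ j ≠ i, Disjoint (g a) (g (f j))) :
    Pairwise fun j k => Disjoint (g (update f i a j)) (g (update f i a k)) := by
  intro j k hjk
  rcases eq_or_ne j i with rfl | hj
  · simpa only [update_self, update_of_ne hjk.symm] using ha k hjk.symm
  rcases eq_or_ne k i with rfl | hk
  · simpa only [update_self, update_of_ne hj] using (ha j hj).symm
  · simpa only [update_of_ne hj, update_of_ne hk] using hf hjk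

namespace PackState

variable {s : PackState}

theorem start_inv : start.Inv where
  inStrip _ := ⟨le_rfl, le_rfl, zero_le_four, le_rfl, le_rfl, le_rfl⟩
  isPartOf
    | .inl _ => fun h => absurd h (lt_irrefl _)
    | .inr k => by simp [Room.IsPartOf, start, (dyad_pos _).le]
  disjoint c d _ := by simp [start, Room.inner]

theorem Inv.assign (hs : s.Inv) {h : ℝ} {c : Cell_s10} {R : Room} (hh : s.height ≤ h)
    (hstrip : R.InStrip h) (hpart : R.IsPartOf c)
    (hdisj : ∀ d ≠ c, Disjoint R.inner (s.room d).inner) : (s.assign h c R).Inv where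
  inStrip := (forall_update_iff s.room fun _ R => R.InStrip h).2
    ⟨hstrip, fun d _ => (hs.inStrip d).mono hh⟩
  isPartOf := (forall_update_iff s.room fun d R => R.IsPartOf d).2
    ⟨hpart, fun d _ => hs.isPartOf d⟩
  disjoint := pairwise_disjoint_update hs.disjoint hdisj

theorem Inv.height_nonneg (hs : s.Inv) : 0 ≤ s.height :=
  let h := hs.inStrip (.inl 0)
  h.bottom_nonneg.trans (h.bottom_le_top.trans h.top_le)

theorem Inv.openShelf (hs : s.Inv) (b : ℕ) : (s.openShelf b).Inv := by
  have hb := dyad_pos b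
  refine hs.assign (by linarith) ⟨le_rfl, zero_le_four, le_rfl, hs.height_nonneg, ?_, le_rfl⟩
    (fun _ => rfl) fun c _ => disjoint_left.2 fun p hp hp' => ?_
  · simpa using hb.le
  · exact hp.2.1.not_gt (hp'.2.2.trans_le (hs.inStrip c).top_le)

theorem Inv.shelf_top (hs : s.Inv) {k : ℕ × ℕ} (hfit : s.ShelfFits k) :
    (s.room (.inl k.2)).top = (s.room (.inl k.2)).bottom + 2 * dyad k.2 :=
  hs.isPartOf (.inl k.2) ((lt_add_of_pos_right _ (mul_pos two_pos (dyad_pos k.1))).trans_le hfit)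

theorem Inv.cutBlock (hs : s.Inv) {k : ℕ × ℕ} (hfit : s.ShelfFits k) : (s.cutBlock k).Inv := by
  have hw : 0 ≤ 2 * dyad k.1 := mul_nonneg zero_le_two (dyad_pos k.1).le
  have hw' : (0 : ℝ × ℝ) ≤ (2 * dyad k.1, 0) := ⟨hw, le_rfl⟩
  have hS := hs.inStrip (.inl k.2)
  have htop := hs.shelf_top hfit
  refine (hs.assign le_rfl (hS.shrink hw' hfit ?_) (fun _ => ?_) fun c hc => ?_).assign le_rfl
    (hS.leftPart hw hfit) ⟨le_rfl, htop.le⟩ fun c hc => ?_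
  · simpa using hS.bottom_le_top
  · simpa [Room.shrink] using htop
  · exact (hs.disjoint hc.symm).mono_left (Room.inner_shrink_subset hw')
  · rcases eq_or_ne c (.inl k.2) with rfl | hc'
    · simpa [PackState.assign] using Room.disjoint_inner_leftPart_shrink _ (2 * dyad k.1, 0)
    · simpa [PackState.assign, hc'] using
        (hs.disjoint hc'.symm).mono_left (Room.inner_leftPart_subset hfit)

theorem Inv.shrinkBlock (hs : s.Inv) {k : ℕ × ℕ} (hfit : s.BlockFits k) {v : ℝ × ℝ} (hv₀ : 0 ≤ v)
    (hv : v ≤ (dyad k.1, dyad k.2)) : (s.shrinkBlock k v).Inv := by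
  have hpart : _ ∧ _ := hs.isPartOf (.inr k)
  refine hs.assign le_rfl ((hs.inStrip (.inr k)).shrink hv₀ ?_ ?_) ⟨?_, ?_⟩ fun c hc =>
    (hs.disjoint hc.symm).mono_left (Room.inner_shrink_subset hv₀)
  · exact (add_le_add_right hv.1 _).trans hfit.1
  · exact (add_le_add_right hv.2 _).trans hfit.2
  · exact hpart.1.trans (add_le_add_left (le_add_of_nonneg_right hv₀.1) _)
  · exact hpart.2.trans (add_le_add_left (le_add_of_nonneg_right hv₀.2) _)

theorem ensureShelf_fits (s : PackState) (k : ℕ × ℕ) : (s.ensureShelf k).ShelfFits k := by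
  unfold ensureShelf
  split_ifs with h
  · exact h
  · have := dyad_le_one k.1
    simp only [ShelfFits, openShelf, assign, update_self]
    linarith

theorem Inv.ensureShelf (hs : s.Inv) (k : ℕ × ℕ) : (s.ensureShelf k).Inv := by
  unfold PackState.ensureShelf
  split_ifs
  exacts [hs, hs.openShelf k.2]

theorem Inv.cutBlock_fits (hs : s.Inv) {k : ℕ × ℕ} (hfit : s.ShelfFits k) :
    (s.cutBlock k).BlockFits k := by
  have ha := dyad_pos k.1
  have hb := dyad_pos k.2
  have htop := hs.shelf_top hfit
  simp only [BlockFits, PackState.cutBlock, PackState.assign, update_self, Room.leftPart]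
  constructor <;> linarith

theorem Inv.ensureBlock (hs : s.Inv) (k : ℕ × ℕ) : (s.ensureBlock k).Inv := by
  unfold PackState.ensureBlock
  split_ifs
  exacts [hs, (hs.ensureShelf k).cutBlock (s.ensureShelf_fits k)]

theorem Inv.ensureBlock_fits (hs : s.Inv) (k : ℕ × ℕ) : (s.ensureBlock k).BlockFits k := by
  unfold PackState.ensureBlock
  split_ifs with h
  exacts [h, (hs.ensureShelf k).cutBlock_fits (s.ensureShelf_fits k)]

theorem Inv.step (hs : s.Inv) {L : LShape} (hL : L.IsValid) : (s.step L).Inv :=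
  (hs.ensureBlock L.cls).shrinkBlock (hs.ensureBlock_fits L.cls) hL.notch_nonneg
    (hL.notch_le.trans ⟨hL.lx_le_dyad, hL.ly_le_dyad⟩)

/-! ### The free area -/

theorem height_le_height_ensureBlock (s : PackState) (k : ℕ × ℕ) :
    s.height ≤ (s.ensureBlock k).height := by
  unfold ensureBlock ensureShelf
  split_ifs
  · rfl
  · rfl
  · exact le_add_of_nonneg_right (mul_nonneg zero_le_two (dyad_pos k.2).le)

theorem height_le_height_step (s : PackState) (L : LShape) : s.height ≤ (s.step L).height :=
  s.height_le_height_ensureBlock L.cls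

theorem inner_room_subset_free (s : PackState) (c : Cell_s10) : (s.room c).inner ⊆ s.free :=
  (subset_iUnion (fun c => (s.room c).inner) c).trans subset_union_right

theorem free_assign_subset {U : Set (ℝ × ℝ)} {h : ℝ} {c : Cell_s10} {R : Room} (hs : s.free ⊆ U)
    (hh : s.height ≤ h) (hR : R.inner ⊆ U) : (s.assign h c R).free ⊆ U :=
  union_subset (fun _ hp => hs (Or.inl (hh.trans_lt hp))) <| iUnion_subset <|
    (forall_update_iff s.room fun _ R => R.inner ⊆ U).2
      ⟨hR, fun d _ => (s.inner_room_subset_free d).trans hs⟩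

theorem free_openShelf_subset (s : PackState) (b : ℕ) : (s.openShelf b).free ⊆ s.free :=
  free_assign_subset subset_rfl (by linarith [dyad_pos b]) fun _ hp => Or.inl hp.2.1

theorem free_shrinkBlock_subset (s : PackState) (k : ℕ × ℕ) {v : ℝ × ℝ} (hv : 0 ≤ v) :
    (s.shrinkBlock k v).free ⊆ s.free :=
  free_assign_subset subset_rfl le_rfl
    ((Room.inner_shrink_subset hv).trans (s.inner_room_subset_free _))

theorem free_cutBlock_subset {k : ℕ × ℕ} (hfit : s.ShelfFits k) :
    (s.cutBlock k).free ⊆ s.free := by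
  have hw : (0 : ℝ × ℝ) ≤ (2 * dyad k.1, 0) := ⟨mul_nonneg zero_le_two (dyad_pos k.1).le, le_rfl⟩
  have hshelf := s.inner_room_subset_free (.inl k.2)
  exact free_assign_subset
    (free_assign_subset subset_rfl le_rfl ((Room.inner_shrink_subset hw).trans hshelf)) le_rfl
    ((Room.inner_leftPart_subset hfit).trans hshelf)

theorem free_ensureBlock_subset (s : PackState) (k : ℕ × ℕ) : (s.ensureBlock k).free ⊆ s.free := by
  unfold ensureBlock
  split_ifs
  · rfl
  refine (free_cutBlock_subset (s.ensureShelf_fits k)).trans ?_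
  unfold ensureShelf
  split_ifs
  exacts [subset_rfl, s.free_openShelf_subset k.2]

theorem free_step_subset (s : PackState) {L : LShape} (hL : L.IsValid) :
    (s.step L).free ⊆ s.free :=
  (free_shrinkBlock_subset _ _ hL.notch_nonneg).trans (s.free_ensureBlock_subset _)

theorem Inv.disjoint_free_shrinkBlock (hs : s.Inv) {k : ℕ × ℕ} {v : ℝ × ℝ} {S : Set (ℝ × ℝ)}
    (hS : S ⊆ (s.room (.inr k)).inner)
    (hv : Disjoint S ((s.room (.inr k)).shrink v).inner) : Disjoint S (s.shrinkBlock k v).free := by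
  refine disjoint_union_right.2 ⟨disjoint_left.2 fun p hp hp' => ?_, disjoint_iUnion_right.2 <|
    (forall_update_iff s.room fun _ R => Disjoint S R.inner).2
      ⟨hv, fun c hc => (hs.disjoint hc.symm).mono_left hS⟩⟩
  exact hp'.not_gt ((hS hp).2.2.trans_le (hs.inStrip (.inr k)).top_le)

theorem Inv.interior_place_subset (hs : s.Inv) {L : LShape} (hL : L.IsValid) :
    interior (planeTranslate (s.place L) L.toSet) ⊆
      ((s.ensureBlock L.cls).room (.inr L.cls)).inner := by
  rw [interior_planeTranslate]
  intro p hp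
  obtain ⟨⟨hx₀, hx⟩, hy₀, hy⟩ := hL.interior_toSet_subset (mem_planeTranslate.1 hp)
  obtain ⟨hfit₁, hfit₂⟩ := hs.ensureBlock_fits L.cls
  have hlx := hL.lx_le_dyad
  have hly := hL.ly_le_dyad
  simp only [place, Prod.fst_sub, Prod.snd_sub] at hx₀ hx hy₀ hy
  exact ⟨⟨by linarith, by linarith⟩, by linarith, by linarith⟩

theorem Inv.interior_place_subset_free (hs : s.Inv) {L : LShape} (hL : L.IsValid) :
    interior (planeTranslate (s.place L) L.toSet) ⊆ s.free :=
  (hs.interior_place_subset hL).trans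
    ((inner_room_subset_free _ _).trans (s.free_ensureBlock_subset L.cls))

theorem Inv.disjoint_interior_place_free_step (hs : s.Inv) {L : LShape} (hL : L.IsValid) :
    Disjoint (interior (planeTranslate (s.place L) L.toSet)) (s.step L).free := by
  refine (hs.ensureBlock L.cls).disjoint_free_shrinkBlock (hs.interior_place_subset hL)
    (disjoint_left.2 fun p hp hp' => ?_)
  rw [interior_planeTranslate] at hp
  rcases hL.le_notch_of_mem_interior (mem_planeTranslate.1 hp) with h | h
  · exact hp'.1.1.not_ge (sub_le_iff_le_add'.1 h)
  · exact hp'.2.1.not_ge (sub_le_iff_le_add'.1 h)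

theorem Inv.place_subset_Icc (hs : s.Inv) {L : LShape} (hL : L.IsValid) :
    planeTranslate (s.place L) L.toSet ⊆ Icc 0 (4, (s.step L).height) := by
  intro p hp
  obtain ⟨⟨hx₀, hy₀⟩, hx, hy⟩ := hL.toSet_subset_Icc (mem_planeTranslate.1 hp)
  obtain ⟨hfit₁, hfit₂⟩ := hs.ensureBlock_fits L.cls
  have hB := (hs.ensureBlock L.cls).inStrip (.inr L.cls)
  have hlx := hL.lx_le_dyad
  have hly := hL.ly_le_dyad
  have hleft := hB.left_nonneg
  have hright := hB.right_le
  have hbottom := hB.bottom_nonneg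
  have htop : _ ≤ (s.step L).height := hB.top_le
  simp only [place, Prod.fst_sub, Prod.snd_sub, Prod.fst_zero, Prod.snd_zero] at hx₀ hx hy₀ hy
  simp only [Icc_prod_eq, mem_prod, mem_Icc, Prod.fst_zero, Prod.snd_zero]
  exact ⟨⟨by linarith, by linarith⟩, by linarith, by linarith⟩

end PackState

/-! ### The potential -/

/-- The value of the free part of a cell. The weights are such that a new shelf pays for its height
and a new block for the piece of shelf that it takes, with the rest of the abandoned shelf or block
written off. -/
noncomputable def Room.slack (R : Room) : Cell_s10 → ℝ
  | .inl b => (R.right - R.left) * dyad b / 2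
  | .inr k => (R.right - R.left) * dyad k.2 + (R.top - R.bottom) * dyad k.1

namespace PackState

variable {s : PackState} {F : Finset Cell_s10}

/-- Half the height minus the value of the free rooms, restricted to a finite set of cells. Its
growth is paid for by the areas of the items. -/
noncomputable def potential (s : PackState) (F : Finset Cell_s10) : ℝ :=
  s.height / 2 - ∑ c ∈ F, (s.room c).slack c

theorem potential_assign {h : ℝ} {c : Cell_s10} {R : Room} (hc : c ∈ F) :
    (s.assign h c R).potential F =
      s.potential F + (h - s.height) / 2 + (s.room c).slack c - R.slack c := by
  have hrest : ∑ d ∈ F.erase c, (update s.room c R d).slack d =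
      ∑ d ∈ F.erase c, (s.room d).slack d :=
    Finset.sum_congr rfl fun d hd => by rw [update_of_ne (Finset.ne_of_mem_erase hd)]
  simp only [potential, assign, ← Finset.add_sum_erase F _ hc, update_self, hrest]
  ring

theorem potential_openShelf_le {k : ℕ × ℕ} (hF : .inl k.2 ∈ F) (hfit : ¬ s.ShelfFits k) :
    (s.openShelf k.2).potential F ≤ s.potential F := by
  have ha := dyad_le_one k.1
  have hb := dyad_pos k.2
  rw [ShelfFits, not_le] at hfit
  rw [openShelf, potential_assign hF]
  simp only [Room.slack]
  nlinarith

theorem potential_ensureShelf_le {k : ℕ × ℕ} (hF : .inl k.2 ∈ F) :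
    (s.ensureShelf k).potential F ≤ s.potential F := by
  unfold ensureShelf
  split_ifs with hfit
  exacts [le_rfl, potential_openShelf_le hF hfit]

theorem room_inr_ensureShelf (s : PackState) (j k : ℕ × ℕ) :
    (s.ensureShelf k).room (.inr j) = s.room (.inr j) := by
  unfold ensureShelf
  split_ifs
  · rfl
  · simp [openShelf, assign]

theorem Inv.slack_inr_le (hs : s.Inv) {k : ℕ × ℕ} (hfit : ¬ s.BlockFits k) :
    (s.room (.inr k)).slack (.inr k) ≤ 3 * (dyad k.1 * dyad k.2) := by
  have ha := dyad_pos k.1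
  have hb := dyad_pos k.2
  obtain ⟨hwidth, hheight⟩ : _ ∧ _ := hs.isPartOf (.inr k)
  simp only [Room.slack]
  rw [BlockFits, not_and_or, not_le, not_le] at hfit
  rcases hfit with h | h <;> nlinarith

theorem Inv.potential_cutBlock_le (hs : s.Inv) {k : ℕ × ℕ} (hF₁ : .inl k.2 ∈ F) (hF₂ : .inr k ∈ F)
    (hshelf : s.ShelfFits k) (hblock : ¬ s.BlockFits k) :
    (s.cutBlock k).potential F ≤ s.potential F := by
  have hslack := hs.slack_inr_le hblock
  have htop := hs.shelf_top hshelf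
  rw [PackState.cutBlock, potential_assign hF₂, potential_assign hF₁]
  simp only [PackState.assign, Room.slack, Room.shrink, Room.leftPart,
    update_of_ne (Sum.inr_ne_inl : (.inr k : Cell_s10) ≠ .inl k.2)] at hslack ⊢
  rw [htop]
  linarith

theorem Inv.potential_ensureBlock_le (hs : s.Inv) {k : ℕ × ℕ} (hF₁ : .inl k.2 ∈ F)
    (hF₂ : .inr k ∈ F) : (s.ensureBlock k).potential F ≤ s.potential F := by
  unfold PackState.ensureBlock
  split_ifs with hfit
  · rfl
  have hfit' : ¬ (s.ensureShelf k).BlockFits k := by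
    rwa [BlockFits, room_inr_ensureShelf]
  exact ((hs.ensureShelf k).potential_cutBlock_le hF₁ hF₂ (s.ensureShelf_fits k) hfit').trans
    (potential_ensureShelf_le hF₁)

theorem Inv.potential_step_le (hs : s.Inv) {L : LShape} (hL : L.IsValid)
    (hF₁ : .inl L.cls.2 ∈ F) (hF₂ : .inr L.cls ∈ F) :
    (s.step L).potential F ≤ s.potential F + 4 * L.meanArmArea := by
  have hnotch := hL.notch_mul_dyad_le
  have hensure := hs.potential_ensureBlock_le hF₁ hF₂
  rw [PackState.step, PackState.shrinkBlock, potential_assign hF₂]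
  simp only [Room.slack, Room.shrink]
  linarith

theorem Inv.sum_slack_le (hs : s.Inv) (F : Finset Cell_s10) : ∑ c ∈ F, (s.room c).slack c ≤ 20 := by
  have hshelf : ∀ b, (s.room (.inl b)).slack (.inl b) ≤ 2 * dyad b := fun b => by
    have := (hs.inStrip (.inl b)).left_nonneg
    have := (hs.inStrip (.inl b)).right_le
    simp only [Room.slack]
    nlinarith [dyad_pos b]
  have hblock : ∀ k, (s.room (.inr k)).slack (.inr k) ≤ 4 * (dyad k.1 * dyad k.2) := fun k => by
    obtain ⟨hwidth, hheight⟩ : _ ∧ _ := hs.isPartOf (.inr k)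
    simp only [Room.slack]
    nlinarith [dyad_pos k.1, dyad_pos k.2]
  rw [Finset.sum_sum_eq_sum_toLeft_add_sum_toRight]
  calc _ ≤ ∑ b ∈ F.toLeft, 2 * dyad b + ∑ k ∈ F.toRight, 4 * (dyad k.1 * dyad k.2) :=
        add_le_add (Finset.sum_le_sum fun b _ => hshelf b) (Finset.sum_le_sum fun k _ => hblock k)
    _ ≤ 2 * 2 + 4 * 4 := by
        rw [← Finset.mul_sum, ← Finset.mul_sum]
        gcongr
        · exact sum_le_hasSum _ (fun b _ => (dyad_pos b).le) hasSum_dyad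
        · exact sum_le_hasSum _ (fun k _ => (mul_pos (dyad_pos k.1) (dyad_pos k.2)).le)
            hasSum_dyad_mul_dyad
    _ = 20 := by norm_num

theorem Inv.height_le (hs : s.Inv) (F : Finset Cell_s10) : s.height ≤ 2 * s.potential F + 40 := by
  have := hs.sum_slack_le F
  unfold potential
  linarith

theorem potential_start (F : Finset Cell_s10) : start.potential F = 0 := by
  simp only [potential, start, zero_div, zero_sub, neg_eq_zero]
  exact Finset.sum_eq_zero fun c _ => by cases c <;> simp [Room.slack]

end PackState

/-! ### Runs of the algorithm -/

open PackState

theorem packRun_concat (l : List LShape) (L : LShape) :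
    packRun (l ++ [L]) = (packRun l).step L := by
  simp [packRun]

theorem packAlg_concat (l : List LShape) (L : LShape) :
    packAlg (l ++ [L]) = (packRun l).place L := by
  simp [packAlg]

theorem packRun_take_succ (l : List LShape) (i : Fin l.length) :
    packRun (l.take (i + 1)) = (packRun (l.take i)).step (l.get i) := by
  rw [← packRun_concat, List.get_eq_getElem, List.take_append_getElem]

theorem planePlaceOf_packAlg (l : List LShape) (i : Fin l.length) :
    planePlaceOf packAlg l i = (packRun (l.take i)).place (l.get i) := by
  rw [← packAlg_concat, List.get_eq_getElem, List.take_append_getElem, planePlaceOf]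

theorem packRun_inv {l : List LShape} (hl : ∀ L ∈ l, L.IsValid) : (packRun l).Inv := by
  induction l using List.reverseRecOn with
  | nil => exact start_inv
  | append_singleton l L ih =>
    rw [packRun_concat]
    exact (ih fun M hM => hl M (by simp [hM])).step (hl L (by simp))

theorem height_packRun_le_append (l m : List LShape) :
    (packRun l).height ≤ (packRun (l ++ m)).height := by
  induction m using List.reverseRecOn with
  | nil => simp
  | append_singleton m L ih =>
    rw [← List.append_assoc, packRun_concat]
    exact ih.trans (height_le_height_step _ L)

theorem free_packRun_append_subset (l : List LShape) {m : List LShape}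
    (hm : ∀ L ∈ m, L.IsValid) : (packRun (l ++ m)).free ⊆ (packRun l).free := by
  induction m using List.reverseRecOn with
  | nil => simp
  | append_singleton m L ih =>
    rw [← List.append_assoc, packRun_concat]
    exact (free_step_subset _ (hm L (by simp))).trans (ih fun M hM => hm M (by simp [hM]))

section

variable {l : List LShape}

theorem free_packRun_take_subset (hl : ∀ L ∈ l, L.IsValid) {i j : ℕ} (hij : i ≤ j) :
    (packRun (l.take j)).free ⊆ (packRun (l.take i)).free := by
  obtain ⟨m, hm⟩ := List.take_prefix_take_left (l := l) hij
  rw [← hm]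
  exact free_packRun_append_subset _ fun L hL =>
    hl L (List.mem_of_mem_take (hm ▸ List.mem_append_right _ hL))

theorem height_packRun_take_le (l : List LShape) (i : ℕ) :
    (packRun (l.take i)).height ≤ (packRun l).height := by
  simpa using height_packRun_le_append (l.take i) (l.drop i)

theorem packRun_take_inv (hl : ∀ L ∈ l, L.IsValid) (i : ℕ) : (packRun (l.take i)).Inv :=
  packRun_inv fun L hL => hl L (List.mem_of_mem_take hL)

theorem onlinePlaces_packAlg (hl : ∀ L ∈ l, L.IsValid) : OnlinePlaces packAlg l := by
  have hlt : ∀ i j : Fin l.length, i < j →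
      Disjoint (interior (planeTranslate (planePlaceOf packAlg l i) (l.get i).toSet))
        (interior (planeTranslate (planePlaceOf packAlg l j) (l.get j).toSet)) := by
    intro i j hij
    rw [planePlaceOf_packAlg, planePlaceOf_packAlg]
    have hi := (packRun_take_inv hl i).disjoint_interior_place_free_step (hl _ (l.get_mem i))
    have hj := (packRun_take_inv hl j).interior_place_subset_free (hl _ (l.get_mem j))
    rw [← packRun_take_succ] at hi
    exact hi.mono_right (hj.trans (free_packRun_take_subset hl hij))
  intro i j hij
  exact hij.lt_or_gt.elim (hlt i j) fun h => (hlt j i h).symm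

theorem iUnion_packAlg_subset_Icc (hl : ∀ L ∈ l, L.IsValid) :
    (⋃ i : Fin l.length, planeTranslate (planePlaceOf packAlg l i) (l.get i).toSet) ⊆
      Icc 0 (4, (packRun l).height) := by
  refine iUnion_subset fun i => ?_
  rw [planePlaceOf_packAlg]
  refine ((packRun_take_inv hl i).place_subset_Icc (hl _ (l.get_mem i))).trans ?_
  rw [← packRun_take_succ]
  exact Icc_subset_Icc_right ⟨le_rfl, height_packRun_take_le l _⟩

theorem potential_packRun_le {F : Finset Cell_s10} (hl : ∀ L ∈ l, L.IsValid)
    (hF : ∀ L ∈ l, .inl L.cls.2 ∈ F ∧ .inr L.cls ∈ F) :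
    (packRun l).potential F ≤ 4 * (l.map LShape.meanArmArea).sum := by
  induction l using List.reverseRecOn with
  | nil => simp [packRun, potential_start]
  | append_singleton l L ih =>
    have hl' : ∀ M ∈ l, M.IsValid := fun M hM => hl M (by simp [hM])
    have hrun := ih hl' fun M hM => hF M (by simp [hM])
    obtain ⟨hF₁, hF₂⟩ := hF L (by simp)
    have hstep := (packRun_inv hl').potential_step_le (hl L (by simp)) hF₁ hF₂
    rw [packRun_concat, List.map_append, List.sum_append, List.map_singleton, List.sum_singleton]
    linarith

theorem height_packRun_le (hl : ∀ L ∈ l, L.IsValid) :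
    (packRun l).height ≤ 8 * (l.map LShape.meanArmArea).sum + 40 := by
  let F : Finset Cell_s10 :=
    (l.map fun L => (.inl L.cls.2 : Cell_s10)).toFinset ∪ (l.map fun L => (.inr L.cls : Cell_s10)).toFinset
  have hF : ∀ L ∈ l, .inl L.cls.2 ∈ F ∧ .inr L.cls ∈ F := fun L hL =>
    ⟨Finset.mem_union_left _ (List.mem_toFinset.2 (List.mem_map_of_mem hL)),
      Finset.mem_union_right _ (List.mem_toFinset.2 (List.mem_map_of_mem hL))⟩
  linarith [(packRun_inv hl).height_le F, potential_packRun_le hl hF]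

end

theorem stmt10_general :
    ∃ A : List LShape → ℝ × ℝ, ∀ l : List LShape, (∀ L ∈ l, L.IsValid) →
      OnlinePlaces A l ∧
      bboxArea (⋃ i : Fin l.length, planeTranslate (planePlaceOf A l i) (l.get i).toSet) ≤
        32 * optArea l + 160 := by
  refine ⟨packAlg, fun l hl => ⟨onlinePlaces_packAlg hl, ?_⟩⟩
  calc bboxArea (⋃ i : Fin l.length, planeTranslate (planePlaceOf packAlg l i) (l.get i).toSet)
      ≤ (4 - 0) * ((packRun l).height - 0) :=
        bboxArea_le_of_subset_Icc ⟨zero_le_four, (packRun_inv hl).height_nonneg⟩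
          (iUnion_packAlg_subset_Icc hl)
    _ ≤ 32 * (l.map LShape.meanArmArea).sum + 160 := by linarith [height_packRun_le hl]
    _ ≤ 32 * optArea l + 160 := by
        linarith [sum_meanArmArea_le_optArea hl (onlinePlaces_packAlg hl)]

/-- there are a constant `c > 0` and a deterministic online algorithm placing
L-shapes in the plane by translations with pairwise disjoint interiors such that, on every
input sequence of `n` L-shapes with arm lengths in `[0,1]` and positive widths, the
bounding-box area of the produced placement is at most `c·√n·OPT + c`, where `OPT` is the
minimum bounding-box area over all offline placements with pairwise disjoint interiors. -/
theorem stmt10 :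
    ∃ c : ℝ, 0 < c ∧
    ∃ A : List LShape → ℝ × ℝ,
      ∀ l : List LShape, (∀ L ∈ l, L.IsValid ∧ 0 < L.wx ∧ 0 < L.wy) →
        OnlinePlaces A l ∧
        bboxArea (⋃ i : Fin l.length,
            planeTranslate (planePlaceOf A l i) (l.get i).toSet) ≤
          c * Real.sqrt l.length *
            sInf {P : ℝ | ∃ u : Fin l.length → ℝ × ℝ,
              (∀ i j, i ≠ j →
                Disjoint (interior (planeTranslate (u i) (l.get i).toSet))
                         (interior (planeTranslate (u j) (l.get j).toSet))) ∧
              P = bboxArea (⋃ i, planeTranslate (u i) (l.get i).toSet)} + c := by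
  obtain ⟨A, hA⟩ := stmt10_general
  refine ⟨160, by norm_num, A, fun l hl => ?_⟩
  obtain ⟨hplaces, harea⟩ := hA l fun L hL => (hl L hL).1
  refine ⟨hplaces, harea.trans ?_⟩
  change _ ≤ 160 * Real.sqrt l.length * optArea l + 160
  linarith [optArea_nonneg l, optArea_le_sqrt_length_mul l]
end

section
/- For every real t with 0 < t < 1, setting A = (1−t)³/125, there exists a deterministic online algorithm for placing L-shapes into the single unit bin [0,1]² by translations (each placement irrevocable, all translates contained in [0,1]² with pairwise disjoint interiors) that successfully places every item of every finite input sequence of L-shapes whose arm lengths satisfy ℓx ≤ t and ℓy ≤ t and whose total area is at most A. In particular, the online critical packing density for L-shapes with arm lengths bounded by t < 1 is positive. -/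
/-- The area of an L-shape. -/
noncomputable def LShape.area (L : LShape) : ℝ :=
  L.lx * L.wy + L.wx * L.ly - L.wx * L.wy

/-!
Write `c = (1 - t) / 20`. Arms are sorted dyadically: class `0` is longer than `c`, class `k + 1`
lies in `(c / 2 ^ (k + 1), c / 2 ^ k]`. Two L-shapes are disjoint as soon as the second is
displaced from the first by at least the widths of the first. Up to a factor depending only on the
class, these widths are bounded by the area, so shapes of one class can be stacked along the
diagonal of a common box, and filling a box takes an amount of area proportional to the product of
the minimal arm lengths of the class.

The boxes are allocated online inside fixed zones of the bin. Boxes with one long side are lined up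
next to each other. A single box serves all shapes with two long arms, because the room
`1 - t = 20 * c` left by an arm exceeds their total displacement. Boxes with two short sides are
stacked, for each horizontal class, in strips of nearly unit height, and the strips are lined up
next to each other. In each of these lines, the first boxes or strips of all classes have a total
length of `O(c)` by the geometric series, and the later ones are paid for by the area `64 * c ^ 3`.
-/

namespace LShapePacking

open scoped Finset

section Plane

variable {α β : Type*} [TopologicalSpace α] [LinearOrder α] [OrderTopology α] [DenselyOrdered α]
  [NoMinOrder α] [NoMaxOrder α] [TopologicalSpace β] [LinearOrder β] [OrderTopology β]
  [DenselyOrdered β] [NoMinOrder β] [NoMaxOrder β]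

theorem interior_Icc_prod (p q : α × β) :
    interior (Set.Icc p q) = Set.Ioo p.1 q.1 ×ˢ Set.Ioo p.2 q.2 := by
  rw [Set.Icc_prod_eq, interior_prod_eq, interior_Icc, interior_Icc]

theorem disjoint_interior_Icc {p q p' q' : α × β}
    (h : (q.1 ≤ p'.1 ∨ q'.1 ≤ p.1) ∨ q.2 ≤ p'.2 ∨ q'.2 ≤ p.2) :
    Disjoint (interior (Set.Icc p q)) (interior (Set.Icc p' q')) := by
  rw [interior_Icc_prod, interior_Icc_prod, Set.disjoint_left]
  rintro r ⟨⟨hpx, hqx⟩, hpy, hqy⟩ ⟨⟨hpx', hqx'⟩, hpy', hqy'⟩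
  rcases h with (h | h) | h | h <;> order

end Plane

section Geometry

variable {L L' : LShape} {v v' : ℝ × ℝ}

theorem wx_mul_ly_le_area (hL : L.IsValid) : L.wx * L.ly ≤ L.area := by
  obtain ⟨-, hx, -, hwy, -, -⟩ := hL
  have := mul_nonneg hwy (sub_nonneg.2 hx)
  unfold LShape.area
  linarith

theorem wy_mul_lx_le_area (hL : L.IsValid) : L.wy * L.lx ≤ L.area := by
  obtain ⟨hwx, -, -, -, hy, -⟩ := hL
  have := mul_nonneg hwx (sub_nonneg.2 hy)
  unfold LShape.area
  linarith

theorem area_nonneg (hL : L.IsValid) : 0 ≤ L.area :=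
  (mul_nonneg hL.1 (hL.2.2.2.1.trans hL.2.2.2.2.1)).trans (wx_mul_ly_le_area hL)

theorem toSet_subset_Icc (hL : L.IsValid) : L.toSet ⊆ Set.Icc (0, 0) (L.lx, L.ly) :=
  Set.union_subset (Set.Icc_subset_Icc_right ⟨le_rfl, hL.2.2.2.2.1⟩)
    (Set.Icc_subset_Icc_right ⟨hL.2.1, le_rfl⟩)

theorem planeTranslate_subset_Icc (hL : L.IsValid) :
    planeTranslate v L.toSet ⊆ Set.Icc v (v + (L.lx, L.ly)) := by
  rintro _ ⟨p, hp, rfl⟩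
  obtain ⟨hlow, hupp⟩ := toSet_subset_Icc hL hp
  exact ⟨le_add_of_nonneg_left hlow, (add_le_add_left hupp v).trans_eq (add_comm _ _)⟩

theorem le_of_mem_planeTranslate {p : ℝ × ℝ} (hp : p ∈ planeTranslate v L.toSet) :
    p.1 ≤ v.1 + L.wx ∨ p.2 ≤ v.2 + L.wy := by
  obtain ⟨q, hq | hq, rfl⟩ := hp
  · exact Or.inr (by simpa [add_comm] using hq.2.2)
  · exact Or.inl (by simpa [add_comm] using hq.2.1)

theorem interior_planeTranslate_eq_empty (hL : L.IsValid) (h : L.lx ≤ 0 ∨ L.ly ≤ 0) :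
    interior (planeTranslate v L.toSet) = ∅ := by
  refine Set.subset_empty_iff.1 ((interior_mono (planeTranslate_subset_Icc hL)).trans ?_)
  rw [interior_Icc_prod, Set.subset_empty_iff, Set.prod_eq_empty_iff]
  exact h.imp (fun hx => Set.Ioo_eq_empty (by simpa using hx))
    (fun hy => Set.Ioo_eq_empty (by simpa using hy))

theorem disjoint_interior_of_nested (hL' : L'.IsValid)
    (hx : v.1 + L.wx ≤ v'.1) (hy : v.2 + L.wy ≤ v'.2) :
    Disjoint (interior (planeTranslate v L.toSet)) (interior (planeTranslate v' L'.toSet)) := by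
  refine Set.disjoint_left.2 fun p hp hp' => ?_
  have hquadrant := interior_mono (planeTranslate_subset_Icc hL') hp'
  rw [interior_Icc_prod] at hquadrant
  obtain ⟨⟨hpx, -⟩, hpy, -⟩ := hquadrant
  rcases le_of_mem_planeTranslate (interior_subset hp) with h | h <;> linarith

end Geometry

section Tape

variable {Λ : Type*} {lab lab' : ℕ → Λ} {len : Λ → ℝ} {i j n : ℕ}

/-- The first time at which the label `a` appears in the sequence `lab`; it is `0` for a label
that never appears. -/
noncomputable def firstTime (lab : ℕ → Λ) (a : Λ) : ℕ := sInf (lab ⁻¹' {a})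

theorem firstTime_le (lab : ℕ → Λ) (i : ℕ) : firstTime lab (lab i) ≤ i := Nat.sInf_le rfl

theorem apply_firstTime (lab : ℕ → Λ) (i : ℕ) : lab (firstTime lab (lab i)) = lab i :=
  Nat.sInf_mem (s := lab ⁻¹' {lab i}) ⟨i, rfl⟩

theorem firstTime_congr (h : ∀ j ≤ i, lab j = lab' j) :
    firstTime lab (lab i) = firstTime lab' (lab' i) := by
  apply le_antisymm <;> apply Nat.sInf_le
  · rw [Set.mem_preimage, Set.mem_singleton_iff, h _ (firstTime_le lab' i), apply_firstTime lab',
      h i le_rfl]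
  · rw [Set.mem_preimage, Set.mem_singleton_iff, ← h _ (firstTime_le lab i), apply_firstTime lab,
      h i le_rfl]

variable [DecidableEq Λ]

/-- Online allocation on a half-line: every label receives, at its first appearance, the next free
interval, of length `len a`. This is the left end of the interval of `a`. -/
noncomputable def tapeStart (lab : ℕ → Λ) (len : Λ → ℝ) (a : Λ) : ℝ :=
  ∑ x ∈ (Finset.range (firstTime lab a)).image lab, len x

theorem tapeStart_congr (h : ∀ j ≤ i, lab j = lab' j) :
    tapeStart lab len (lab i) = tapeStart lab' len (lab' i) := by
  unfold tapeStart
  rw [← firstTime_congr h]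
  refine congrArg (Finset.sum · len) (Finset.image_congr fun j hj => h j ?_)
  exact (Finset.mem_range.1 hj).le.trans (firstTime_le lab i)

theorem tapeStart_nonneg (hlen : ∀ a, 0 ≤ len a) (a : Λ) : 0 ≤ tapeStart lab len a :=
  Finset.sum_nonneg fun x _ => hlen x

theorem tapeStart_add_le_sum (hlen : ∀ a, 0 ≤ len a) (h : firstTime lab (lab i) < n) :
    tapeStart lab len (lab i) + len (lab i) ≤ ∑ a ∈ (Finset.range n).image lab, len a := by
  have hnew : lab i ∉ (Finset.range (firstTime lab (lab i))).image lab := by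
    rw [Finset.mem_image]
    rintro ⟨j, hj, hji⟩
    exact Nat.notMem_of_lt_sInf (Finset.mem_range.1 hj) hji
  rw [tapeStart, add_comm, ← Finset.sum_insert hnew]
  refine Finset.sum_le_sum_of_subset_of_nonneg (Finset.insert_subset ?_ ?_) fun a _ _ => hlen a
  · exact Finset.mem_image.2 ⟨_, Finset.mem_range.2 h, apply_firstTime lab i⟩
  · exact Finset.image_subset_image (Finset.range_subset_range.2 h.le)

theorem tapeStart_separated (hlen : ∀ a, 0 ≤ len a) (hne : lab i ≠ lab j) :
    tapeStart lab len (lab i) + len (lab i) ≤ tapeStart lab len (lab j) ∨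
      tapeStart lab len (lab j) + len (lab j) ≤ tapeStart lab len (lab i) := by
  have htime : firstTime lab (lab i) ≠ firstTime lab (lab j) := fun h =>
    hne (by rw [← apply_firstTime lab i, h, apply_firstTime lab])
  exact htime.lt_or_gt.imp (tapeStart_add_le_sum hlen) (tapeStart_add_le_sum hlen)

end Tape

theorem card_le_one_add {S : Finset ℤ} {x : ℝ} (hx : 0 ≤ x)
    (hS : ∀ n ∈ S, 0 ≤ n ∧ (n : ℝ) ≤ x) : (#S : ℝ) ≤ 1 + x := by
  have hcard : #S ≤ #(Finset.Icc 0 ⌊x⌋) :=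
    Finset.card_le_card fun n hn => Finset.mem_Icc.2 ⟨(hS n hn).1, Int.le_floor.2 (hS n hn).2⟩
  rw [Int.card_Icc, sub_zero] at hcard
  have hfloor := Int.floor_nonneg.2 hx
  calc (#S : ℝ) ≤ ((⌊x⌋ + 1 : ℤ) : ℝ) := by exact_mod_cast (by omega : (#S : ℤ) ≤ ⌊x⌋ + 1)
    _ ≤ 1 + x := by push_cast; linarith [Int.floor_le x]

theorem sum_le_of_serial_le {Γ : Type*} [DecidableEq Γ] {T : Finset (Γ × ℤ)} {len N : Γ → ℝ}
    (hlen : ∀ γ, 0 ≤ len γ) (hT : ∀ b ∈ T, 0 ≤ b.2 ∧ (b.2 : ℝ) ≤ N b.1) :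
    ∑ b ∈ T, len b.1 ≤ ∑ γ ∈ T.image Prod.fst, (1 + N γ) * len γ := by
  rw [← Finset.sum_fiberwise_of_maps_to (fun b => Finset.mem_image_of_mem Prod.fst)]
  refine Finset.sum_le_sum fun γ hγ => ?_
  set F := {b ∈ T | b.1 = γ} with hF
  have hserial : ∀ n ∈ F.image Prod.snd, 0 ≤ n ∧ (n : ℝ) ≤ N γ := by
    simp only [hF, Finset.forall_mem_image, Finset.mem_filter]
    rintro b ⟨hb, rfl⟩
    exact hT b hb
  have hN : 0 ≤ N γ := by
    obtain ⟨b, hb, rfl⟩ := Finset.mem_image.1 hγ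
    exact (Int.cast_nonneg (hT b hb).1).trans (hT b hb).2
  have hcard : #(F.image Prod.snd) = #F := Finset.card_image_of_injOn fun b hb b' hb' h =>
    Prod.ext ((Finset.mem_filter.1 hb).2.trans (Finset.mem_filter.1 hb').2.symm) h
  calc ∑ b ∈ F, len b.1 = #F * len γ := by
        rw [← nsmul_eq_mul, ← Finset.sum_const]
        exact Finset.sum_congr rfl fun b hb => by rw [(Finset.mem_filter.1 hb).2]
    _ ≤ (1 + N γ) * len γ :=
        mul_le_mul_of_nonneg_right (hcard ▸ card_le_one_add hN hserial) (hlen γ)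

section Classes

variable {c x : ℝ} {k : ℕ}

/-- The lower bound for the arms of class `k`. -/
noncomputable def scale (c : ℝ) (k : ℕ) : ℝ := c / 2 ^ k

/-- The size class of an arm: `0` for arms longer than `c`, and `k + 1` for arms in
`(c / 2 ^ (k + 1), c / 2 ^ k]`. Arms of length zero receive the junk value `0`, which is harmless
as their shapes have empty interior. -/
noncomputable def armClass (c x : ℝ) : ℕ := sInf {k | scale c k < x}

/-- The size classes of the horizontal and of the vertical arm. -/
noncomputable def shapeClass (c : ℝ) (L : LShape) : ℕ × ℕ := (armClass c L.lx, armClass c L.ly)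

theorem scale_pos (hc : 0 < c) (k : ℕ) : 0 < scale c k := by
  unfold scale
  positivity

theorem scale_armClass_lt (hx : 0 < x) : scale c (armClass c x) < x := by
  refine Nat.sInf_mem (s := {k | scale c k < x}) ?_
  obtain ⟨n, hn⟩ := pow_unbounded_of_one_lt (c / x) (one_lt_two (α := ℝ))
  refine ⟨n, ?_⟩
  rw [div_lt_iff₀ hx, mul_comm] at hn
  exact (div_lt_iff₀ (by positivity)).2 hn

theorem le_scale_armClass (h : armClass c x ≠ 0) : x ≤ 2 * scale c (armClass c x) := by
  obtain ⟨k, hk⟩ := Nat.exists_eq_succ_of_ne_zero h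
  have hnot : ¬scale c k < x := Nat.notMem_of_lt_sInf (hk ▸ k.lt_succ_self : k < armClass c x)
  rw [hk, scale, pow_succ]
  rw [scale, not_lt] at hnot
  linarith [show 2 * (c / (2 ^ k * 2)) = c / 2 ^ k by field_simp]

theorem sum_scale_le {ι : Type*} {T : Finset ι} {f : ι → ℕ} (hc : 0 ≤ c) (hinj : Set.InjOn f T)
    (hf : ∀ x ∈ T, f x ≠ 0) : ∑ x ∈ T, scale c (f x) ≤ c := by
  have hinj' : Set.InjOn (fun x => f x - 1) T := fun x hx y hy h =>
    hinj hx hy (by have := hf x hx; have := hf y hy; dsimp only at h; omega)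
  have hhalf : ∀ x ∈ T, scale c (f x) = c / 2 / 2 ^ (f x - 1) := fun x hx => by
    rw [scale, div_div, ← pow_succ', Nat.sub_add_cancel (Nat.one_le_iff_ne_zero.2 (hf x hx))]
  rw [Finset.sum_congr rfl hhalf,
    ← Finset.sum_image (f := fun k => c / 2 / 2 ^ k) (g := fun x => f x - 1) hinj']
  exact (summable_geometric_two' c).sum_le_tsum _ (fun _ _ => by positivity)
    |>.trans_eq (tsum_geometric_two' c)

/-- The side of a box for arms of class `k`. A box of class `(k, l)` measures
`boxSide c k × boxSide c l`: an arm of class `k ≠ 0` takes up at most `2 * scale c k` and the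
displacement along the diagonal of the box as much again, while an arm longer than `c` takes up
at most `1 - 20 * c` and leaves `16 / 5 * c` for the displacement. -/
noncomputable def boxSide (c : ℝ) (k : ℕ) : ℝ := if k = 0 then 1 - 84 / 5 * c else 4 * scale c k

theorem boxSide_of_ne_zero (hk : k ≠ 0) : boxSide c k = 4 * scale c k := if_neg hk

theorem add_le_boxSide {o : ℝ} (hc : 0 < c) (hx : x ≤ 1 - 20 * c) (ho : o ≤ 8 / 5)
    (ho' : armClass c x ≠ 0 → o ≤ 1) : o * (2 * scale c (armClass c x)) + x ≤
      boxSide c (armClass c x) := by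
  by_cases h : armClass c x = 0
  · rw [boxSide, if_pos h, h, scale, pow_zero, div_one]
    nlinarith
  · rw [boxSide_of_ne_zero h]
    nlinarith [le_scale_armClass h, ho' h, scale_pos hc (armClass c x)]

end Classes

section Placement

/-- The fraction of the capacity of a box that is used up by the shape `L`. Boxes of class `(k, l)`
have capacity `2 * scale c k * scale c l`, which makes the widths of `L` at most
`2 * scale c k * weight c L` and `2 * scale c l * weight c L`. -/
noncomputable def weight (c : ℝ) (L : LShape) : ℝ :=
  L.area / (2 * scale c (shapeClass c L).1 * scale c (shapeClass c L).2)

variable (c : ℝ) (s : ℕ → LShape)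

/-- The total weight of the shapes before time `i` that have the same class as `s i`. -/
noncomputable def load (i : ℕ) : ℝ :=
  ∑ j ∈ Finset.range i with shapeClass c (s j) = shapeClass c (s i), weight c (s j)

/-- The box receiving the shape `s i`, given by its class and a serial number. A new box is opened
when the load passes an integer, except that shapes with two long arms all share one box. -/
noncomputable def box (i : ℕ) : (ℕ × ℕ) × ℤ :=
  (shapeClass c (s i), if shapeClass c (s i) = 0 then 0 else ⌊load c s i⌋)

/-- The relative position of the shape `s i` on the diagonal of its box. -/
noncomputable def offset (i : ℕ) : ℝ := load c s i - (box c s i).2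

/-- The height that a box of class `γ` occupies in the stack of boxes of horizontal class `k`. -/
noncomputable def stackLength (k : ℕ) (γ : ℕ × ℕ) : ℝ :=
  if γ.1 = k ∧ γ.2 ≠ 0 then boxSide c γ.2 else 0

/-- The height of the box `b` in the infinite stack of all boxes of its horizontal class that are
meant for short vertical arms. -/
noncomputable def stackStart (b : (ℕ × ℕ) × ℤ) : ℝ :=
  tapeStart (box c s) (fun b' => stackLength c b.1.1 b'.1) b

/-- The width that a box of class `γ` occupies in the row of boxes whose vertical arms, but not
the horizontal ones, are long. -/
noncomputable def columnLength (γ : ℕ × ℕ) : ℝ := if γ.2 = 0 ∧ γ.1 ≠ 0 then boxSide c γ.1 else 0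

/-- The position of the box `b` in the row of boxes whose vertical arms, but not the horizontal
ones, are long. -/
noncomputable def columnStart (b : (ℕ × ℕ) × ℤ) : ℝ :=
  tapeStart (box c s) (fun b' => columnLength c b'.1) b

/-- The infinite stacks are cut into strips of height `1 - 2 * c`, which leaves room for the
overhang of a box of height at most `2 * c`. This is the strip containing the bottom of the
box `b`, given by its horizontal class and a serial number. -/
noncomputable def strip (b : (ℕ × ℕ) × ℤ) : ℕ × ℤ := (b.1.1, ⌊stackStart c s b / (1 - 2 * c)⌋)

/-- The width of a strip of horizontal class `k`; the stack of class `0` is not cut. -/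
noncomputable def stripLength (k : ℕ) : ℝ := if k = 0 then 0 else boxSide c k

/-- The horizontal position of the strip containing the box `b`. -/
noncomputable def stripStart (b : (ℕ × ℕ) × ℤ) : ℝ :=
  tapeStart (fun i => strip c s (box c s i)) (fun a => stripLength c a.1) (strip c s b)

/-- The lower left corner of the box `b`. Boxes for two short arms lie in
`[0, 32 / 5 * c] × [0, 1]`, those for a long vertical arm in `[32 / 5 * c, 84 / 5 * c] × [0, 1]`,
those for a long horizontal arm in `[84 / 5 * c, 1] × [0, 84 / 5 * c]`, and the one for two long
arms is `[84 / 5 * c, 1] × [84 / 5 * c, 1]`. -/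
noncomputable def corner (b : (ℕ × ℕ) × ℤ) : ℝ × ℝ :=
  if b.1.1 = 0 then (84 / 5 * c, if b.1.2 = 0 then 84 / 5 * c else stackStart c s b)
  else if b.1.2 = 0 then (32 / 5 * c + columnStart c s b, 0)
  else (stripStart c s b, (1 - 2 * c) * Int.fract (stackStart c s b / (1 - 2 * c)))

/-- The position of the shape `s i`. -/
noncomputable def position (i : ℕ) : ℝ × ℝ :=
  corner c s (box c s i) +
    offset c s i • (2 * scale c (shapeClass c (s i)).1, 2 * scale c (shapeClass c (s i)).2)

end Placement

section Online

variable {c : ℝ} {s s' : ℕ → LShape} {i : ℕ}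

theorem load_congr (h : ∀ j ≤ i, s j = s' j) : load c s i = load c s' i := by
  unfold load
  rw [h i le_rfl]
  refine Finset.sum_congr (Finset.filter_congr fun j hj => ?_) fun j hj => ?_
  · rw [h j (Finset.mem_range.1 hj).le]
  · rw [h j (Finset.mem_range.1 (Finset.mem_filter.1 hj).1).le]

theorem box_congr (h : ∀ j ≤ i, s j = s' j) : box c s i = box c s' i := by
  rw [box, box, load_congr h, h i le_rfl]

theorem tapeStart_box_congr (len : (ℕ × ℕ) × ℤ → ℝ) (h : ∀ j ≤ i, s j = s' j) :
    tapeStart (box c s) len (box c s i) = tapeStart (box c s') len (box c s' i) :=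
  tapeStart_congr fun _ hj => box_congr fun k hk => h k (hk.trans hj)

theorem stackStart_congr (h : ∀ j ≤ i, s j = s' j) :
    stackStart c s (box c s i) = stackStart c s' (box c s' i) := by
  rw [stackStart, stackStart, tapeStart_box_congr _ h, box_congr h]

theorem strip_congr (h : ∀ j ≤ i, s j = s' j) :
    strip c s (box c s i) = strip c s' (box c s' i) := by
  rw [strip, strip, stackStart_congr h, box_congr h]

theorem stripStart_congr (h : ∀ j ≤ i, s j = s' j) :
    stripStart c s (box c s i) = stripStart c s' (box c s' i) :=
  tapeStart_congr (lab := fun i => strip c s (box c s i)) (lab' := fun i => strip c s' (box c s' i))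
    fun _ hj => strip_congr fun k hk => h k (hk.trans hj)

theorem position_congr (h : ∀ j ≤ i, s j = s' j) : position c s i = position c s' i := by
  unfold position offset corner columnStart
  rw [stripStart_congr h, stackStart_congr h, tapeStart_box_congr _ h, load_congr h, box_congr h,
    h i le_rfl]

end Online

section Load

variable {c : ℝ} {s : ℕ → LShape} {L : LShape} {i j : ℕ}

theorem area_eq_weight_mul (hc : 0 < c) (L : LShape) :
    L.area = weight c L * (2 * scale c (shapeClass c L).1 * scale c (shapeClass c L).2) := by
  have hx := scale_pos hc (shapeClass c L).1
  have hy := scale_pos hc (shapeClass c L).2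
  rw [weight, div_mul_cancel₀ _ (by positivity)]

theorem weight_nonneg (hc : 0 < c) (hL : L.IsValid) : 0 ≤ weight c L := by
  have hx := scale_pos hc (shapeClass c L).1
  have hy := scale_pos hc (shapeClass c L).2
  exact div_nonneg (area_nonneg hL) (by positivity)

theorem wx_le_weight_mul (hc : 0 < c) (hL : L.IsValid) (hy : 0 < L.ly) :
    L.wx ≤ weight c L * (2 * scale c (shapeClass c L).1) := by
  refine le_of_mul_le_mul_right ?_ (scale_pos hc (shapeClass c L).2)
  calc L.wx * scale c (shapeClass c L).2 ≤ L.wx * L.ly :=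
        mul_le_mul_of_nonneg_left (scale_armClass_lt hy).le hL.1
    _ ≤ L.area := wx_mul_ly_le_area hL
    _ = _ := by rw [area_eq_weight_mul hc L]; ring

theorem wy_le_weight_mul (hc : 0 < c) (hL : L.IsValid) (hx : 0 < L.lx) :
    L.wy ≤ weight c L * (2 * scale c (shapeClass c L).2) := by
  refine le_of_mul_le_mul_right ?_ (scale_pos hc (shapeClass c L).1)
  calc L.wy * scale c (shapeClass c L).1 ≤ L.wy * L.lx :=
        mul_le_mul_of_nonneg_left (scale_armClass_lt hx).le hL.2.2.2.1
    _ ≤ L.area := wy_mul_lx_le_area hL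
    _ = _ := by rw [area_eq_weight_mul hc L]; ring

theorem load_nonneg (hc : 0 < c) (hs : ∀ i, (s i).IsValid) (i : ℕ) : 0 ≤ load c s i :=
  Finset.sum_nonneg fun j _ => weight_nonneg hc (hs j)

theorem load_add_le (hc : 0 < c) (hs : ∀ i, (s i).IsValid) (hij : i < j)
    (h : shapeClass c (s i) = shapeClass c (s j)) :
    load c s i + weight c (s i) ≤ load c s j := by
  have hnew : i ∉ {k ∈ Finset.range i | shapeClass c (s k) = shapeClass c (s j)} := by simp
  calc load c s i + weight c (s i)
      = ∑ k ∈ insert i {k ∈ Finset.range i | shapeClass c (s k) = shapeClass c (s j)},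
          weight c (s k) := by rw [Finset.sum_insert hnew, add_comm, load, h]
    _ ≤ load c s j := by
      refine Finset.sum_le_sum_of_subset_of_nonneg (Finset.insert_subset ?_ ?_)
        fun k _ _ => weight_nonneg hc (hs k)
      · exact Finset.mem_filter.2 ⟨Finset.mem_range.2 hij, h⟩
      · exact Finset.filter_subset_filter _ (Finset.range_subset_range.2 hij.le)

theorem box_snd_nonneg (hc : 0 < c) (hs : ∀ i, (s i).IsValid) (i : ℕ) : 0 ≤ (box c s i).2 := by
  unfold box
  split_ifs
  exacts [le_rfl, Int.floor_nonneg.2 (load_nonneg hc hs i)]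

theorem offset_nonneg (hc : 0 < c) (hs : ∀ i, (s i).IsValid) (i : ℕ) : 0 ≤ offset c s i := by
  unfold offset box
  split_ifs
  · simpa using load_nonneg hc hs i
  · exact Int.fract_nonneg _

theorem offset_le_one (h : shapeClass c (s i) ≠ 0) : offset c s i ≤ 1 := by
  rw [offset, box, if_neg h]
  exact (Int.fract_lt_one _).le

theorem offset_add_le (hc : 0 < c) (hs : ∀ i, (s i).IsValid) (hij : i < j)
    (h : box c s i = box c s j) : offset c s i + weight c (s i) ≤ offset c s j := by
  have := load_add_le hc hs hij (congrArg Prod.fst h)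
  rw [offset, offset, h]
  linarith

end Load

section Lengths

variable {c : ℝ} {s : ℕ → LShape} {i n : ℕ}

theorem stackLength_nonneg (hc : 0 < c) (k : ℕ) (γ : ℕ × ℕ) : 0 ≤ stackLength c k γ := by
  unfold stackLength
  split_ifs with h
  · rw [boxSide_of_ne_zero h.2]
    linarith [scale_pos hc γ.2]
  · rfl

theorem columnLength_nonneg (hc : 0 < c) (γ : ℕ × ℕ) : 0 ≤ columnLength c γ := by
  unfold columnLength
  split_ifs with h
  · rw [boxSide_of_ne_zero h.2]
    linarith [scale_pos hc γ.1]
  · rfl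

theorem stripLength_nonneg (hc : 0 < c) (k : ℕ) : 0 ≤ stripLength c k := by
  unfold stripLength
  split_ifs with h
  · rfl
  · rw [boxSide_of_ne_zero h]
    linarith [scale_pos hc k]

theorem sum_boxSide_le {ι : Type*} {T : Finset ι} {f : ι → ℕ} (hc : 0 < c) (hinj : Set.InjOn f T)
    (hf : ∀ x ∈ T, f x ≠ 0) : ∑ x ∈ T, boxSide c (f x) ≤ 4 * c := by
  rw [Finset.sum_congr rfl fun x hx => boxSide_of_ne_zero (hf x hx), ← Finset.mul_sum]
  linarith [sum_scale_le hc.le hinj hf]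

theorem sum_stackLength_le (hc : 0 < c) (k : ℕ) (T : Finset (ℕ × ℕ)) :
    ∑ γ ∈ T, stackLength c k γ ≤ 4 * c := by
  unfold stackLength
  rw [← Finset.sum_filter]
  refine sum_boxSide_le hc (fun γ hγ γ' hγ' h => Prod.ext ?_ h)
    fun γ hγ => (Finset.mem_filter.1 hγ).2.2
  exact (Finset.mem_filter.1 hγ).2.1.trans (Finset.mem_filter.1 hγ').2.1.symm

theorem sum_columnLength_le (hc : 0 < c) (T : Finset (ℕ × ℕ)) :
    ∑ γ ∈ T, columnLength c γ ≤ 4 * c := by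
  unfold columnLength
  rw [← Finset.sum_filter]
  refine sum_boxSide_le hc (fun γ hγ γ' hγ' h => Prod.ext h ?_)
    fun γ hγ => (Finset.mem_filter.1 hγ).2.2
  exact (Finset.mem_filter.1 hγ).2.1.trans (Finset.mem_filter.1 hγ').2.1.symm

theorem sum_stripLength_le (hc : 0 < c) (T : Finset ℕ) : ∑ k ∈ T, stripLength c k ≤ 4 * c := by
  unfold stripLength
  simp_rw [← ite_not (_ = 0)]
  rw [← Finset.sum_filter]
  exact sum_boxSide_le hc Function.injective_id.injOn fun k hk => (Finset.mem_filter.1 hk).2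

theorem weight_mul_stackLength_le {L : LShape} (hc : 0 < c) (hL : L.IsValid) (k : ℕ) :
    weight c L * stackLength c k (shapeClass c L) ≤
      if (shapeClass c L).1 = k then 2 / scale c k * L.area else 0 := by
  have harea := area_nonneg hL
  have hk := scale_pos hc k
  unfold stackLength
  by_cases h : (shapeClass c L).1 = k
  · rw [if_pos h]
    split_ifs with hlong
    · rw [boxSide_of_ne_zero hlong.2, area_eq_weight_mul hc L, h]
      exact le_of_eq (by field_simp; ring)
    · rw [mul_zero]
      positivity
  · rw [if_neg h, if_neg fun h' => h h'.1, mul_zero]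

theorem weight_mul_columnLength_le {L : LShape} (hc : 0 < c) (hL : L.IsValid) :
    weight c L * columnLength c (shapeClass c L) ≤ 2 / c * L.area := by
  have harea := area_nonneg hL
  unfold columnLength
  split_ifs with h
  · rw [boxSide_of_ne_zero h.2, area_eq_weight_mul hc L, h.1, scale, scale]
    exact le_of_eq (by field_simp; ring)
  · rw [mul_zero]
    positivity

/-- The first sum pays for the first box of each class; any further box is opened only after the
class has gained another unit of weight. -/
theorem tapeStart_box_add_le {len : ℕ × ℕ → ℝ} (hc : 0 < c) (hs : ∀ i, (s i).IsValid)
    (hlen : ∀ γ, 0 ≤ len γ) (hi : i < n) :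
    tapeStart (box c s) (fun b => len b.1) (box c s i) + len (shapeClass c (s i)) ≤
      ∑ γ ∈ (Finset.range n).image (fun j => shapeClass c (s j)), len γ +
        ∑ j ∈ Finset.range n, weight c (s j) * len (shapeClass c (s j)) := by
  set N : ℕ × ℕ → ℝ := fun γ => ∑ j ∈ Finset.range n with shapeClass c (s j) = γ, weight c (s j)
  have hserial : ∀ b ∈ (Finset.range n).image (box c s), 0 ≤ b.2 ∧ (b.2 : ℝ) ≤ N b.1 := by
    simp only [Finset.forall_mem_image, Finset.mem_range]
    refine fun j hj => ⟨box_snd_nonneg hc hs j, ?_⟩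
    refine (sub_nonneg.1 (offset_nonneg hc hs j)).trans ?_
    exact Finset.sum_le_sum_of_subset_of_nonneg
      (Finset.filter_subset_filter _ (Finset.range_subset_range.2 hj.le))
      fun k _ _ => weight_nonneg hc (hs k)
  have hused := tapeStart_add_le_sum (lab := box c s) (len := fun b => len b.1)
    (fun b => hlen b.1) ((firstTime_le _ i).trans_lt hi)
  refine hused.trans ((sum_le_of_serial_le hlen hserial).trans_eq ?_)
  rw [Finset.image_image, show Prod.fst ∘ box c s = fun j => shapeClass c (s j) from rfl,
    ← Finset.sum_fiberwise_of_maps_to fun j => Finset.mem_image_of_mem fun j => shapeClass c (s j),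
    ← Finset.sum_add_distrib]
  refine Finset.sum_congr rfl fun γ _ => ?_
  rw [one_add_mul, Finset.sum_mul]
  exact congrArg _ (Finset.sum_congr rfl fun j hj => by rw [(Finset.mem_filter.1 hj).2])

/-- The total area of the shapes of horizontal class `k` before time `n`. -/
noncomputable def classArea (c : ℝ) (s : ℕ → LShape) (k n : ℕ) : ℝ :=
  ∑ j ∈ Finset.range n with (shapeClass c (s j)).1 = k, (s j).area

theorem stackStart_nonneg (hc : 0 < c) (b : (ℕ × ℕ) × ℤ) : 0 ≤ stackStart c s b :=
  tapeStart_nonneg (fun _ => stackLength_nonneg hc _ _) _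

theorem columnStart_nonneg (hc : 0 < c) (b : (ℕ × ℕ) × ℤ) : 0 ≤ columnStart c s b :=
  tapeStart_nonneg (fun _ => columnLength_nonneg hc _) _

theorem stripStart_nonneg (hc : 0 < c) (b : (ℕ × ℕ) × ℤ) : 0 ≤ stripStart c s b :=
  tapeStart_nonneg (fun _ => stripLength_nonneg hc _) _

theorem stackStart_add_le (hc : 0 < c) (hs : ∀ i, (s i).IsValid) (hi : i < n) :
    stackStart c s (box c s i) + stackLength c (box c s i).1.1 (box c s i).1 ≤
      4 * c + 2 / scale c (box c s i).1.1 * classArea c s (box c s i).1.1 n := by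
  refine (tapeStart_box_add_le hc hs (stackLength_nonneg hc _) hi).trans
    (add_le_add (sum_stackLength_le hc _ _) ?_)
  rw [classArea, Finset.mul_sum, Finset.sum_filter]
  exact Finset.sum_le_sum fun j _ => weight_mul_stackLength_le hc (hs j) _

theorem columnStart_add_le (hc : 0 < c) (hs : ∀ i, (s i).IsValid) (hi : i < n) :
    columnStart c s (box c s i) + columnLength c (box c s i).1 ≤
      4 * c + 2 / c * ∑ j ∈ Finset.range n, (s j).area := by
  refine (tapeStart_box_add_le hc hs (columnLength_nonneg hc) hi).trans
    (add_le_add (sum_columnLength_le hc _) ?_)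
  rw [Finset.mul_sum]
  exact Finset.sum_le_sum fun j _ => weight_mul_columnLength_le hc (hs j)

theorem strip_snd_nonneg (hc : 0 < c) (hc' : c < 1 / 2) (b : (ℕ × ℕ) × ℤ) :
    0 ≤ (strip c s b).2 :=
  Int.floor_nonneg.2 (div_nonneg (stackStart_nonneg hc b) (by linarith))

theorem strip_snd_le (hc : 0 < c) (hc' : c < 1 / 2) (hs : ∀ i, (s i).IsValid) (hi : i < n) :
    ((strip c s (box c s i)).2 : ℝ) ≤
      (4 * c + 2 / scale c (box c s i).1.1 * classArea c s (box c s i).1.1 n) / (1 - 2 * c) := by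
  refine (Int.floor_le _).trans (div_le_div_of_nonneg_right ?_ (by linarith))
  linarith [stackStart_add_le hc hs hi, stackLength_nonneg hc (box c s i).1.1 (box c s i).1]

theorem sum_classArea_le (hs : ∀ i, (s i).IsValid) (T : Finset ℕ) :
    ∑ k ∈ T, classArea c s k n ≤ ∑ j ∈ Finset.range n, (s j).area := by
  unfold classArea
  rw [Finset.sum_fiberwise_eq_sum_filter]
  exact Finset.sum_le_sum_of_subset_of_nonneg (Finset.filter_subset _ _)
    fun j _ _ => area_nonneg (hs j)

theorem mul_stripLength_le (hc : 0 < c) (hc' : c < 1 / 2) (hs : ∀ i, (s i).IsValid) (k : ℕ) :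
    (1 + (4 * c + 2 / scale c k * classArea c s k n) / (1 - 2 * c)) * stripLength c k ≤
      (1 + 4 * c / (1 - 2 * c)) * stripLength c k + 8 / (1 - 2 * c) * classArea c s k n := by
  have hH : 0 < 1 - 2 * c := by linarith
  have hk := scale_pos hc k
  have harea : 0 ≤ classArea c s k n := Finset.sum_nonneg fun j _ => area_nonneg (hs j)
  unfold stripLength
  split_ifs with h
  · rw [mul_zero, mul_zero]
    positivity
  · rw [boxSide_of_ne_zero h]
    exact le_of_eq (by field_simp; ring)

theorem stripStart_add_le (hc : 0 < c) (hc' : c < 1 / 2) (hs : ∀ i, (s i).IsValid) (hi : i < n) :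
    stripStart c s (box c s i) + stripLength c (box c s i).1.1 ≤
      (1 + 4 * c / (1 - 2 * c)) * (4 * c) +
        8 / (1 - 2 * c) * ∑ j ∈ Finset.range n, (s j).area := by
  have hH : 0 < 1 - 2 * c := by linarith
  have hserial : ∀ a ∈ (Finset.range n).image fun j => strip c s (box c s j), 0 ≤ a.2 ∧
      (a.2 : ℝ) ≤ (4 * c + 2 / scale c a.1 * classArea c s a.1 n) / (1 - 2 * c) := by
    simp only [Finset.forall_mem_image, Finset.mem_range]
    exact fun j hj => ⟨strip_snd_nonneg hc hc' _, strip_snd_le hc hc' hs hj⟩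
  have hused := tapeStart_add_le_sum (lab := fun j => strip c s (box c s j))
    (len := fun a => stripLength c a.1) (fun a => stripLength_nonneg hc a.1)
    ((firstTime_le _ i).trans_lt hi)
  refine (hused.trans (sum_le_of_serial_le (stripLength_nonneg hc) hserial)).trans
    ((Finset.sum_le_sum fun k _ => mul_stripLength_le hc hc' hs k).trans ?_)
  rw [Finset.sum_add_distrib, ← Finset.mul_sum, ← Finset.mul_sum]
  gcongr
  · exact sum_stripLength_le hc _
  · exact sum_classArea_le hs _

end Lengths

section Admissible

variable {c : ℝ} {s : ℕ → LShape} {i j : ℕ}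

/-- The sequences of shapes that are to be packed: arms of length at most `t = 1 - 20 * c` and
total area at most `64 * c ^ 3 = (1 - t) ^ 3 / 125`. -/
structure Admissible (c : ℝ) (s : ℕ → LShape) : Prop where
  isValid : ∀ i, (s i).IsValid
  lx_le : ∀ i, (s i).lx ≤ 1 - 20 * c
  ly_le : ∀ i, (s i).ly ≤ 1 - 20 * c
  sum_area_le : ∀ n, ∑ i ∈ Finset.range n, (s i).area ≤ 64 * c ^ 3

theorem Admissible.le_one_div (hs : Admissible c s) : c ≤ 1 / 20 := by
  linarith [hs.lx_le 0, (hs.isValid 0).1, (hs.isValid 0).2.1]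

theorem load_le_of_shapeClass_eq_zero (hc : 0 < c) (hs : Admissible c s)
    (h : shapeClass c (s i) = 0) : load c s i ≤ 8 / 5 := by
  have hweight : ∀ j ∈ {j ∈ Finset.range i | shapeClass c (s j) = shapeClass c (s i)},
      weight c (s j) = (s j).area / (2 * c * c) := fun j hj => by
    rw [weight, (Finset.mem_filter.1 hj).2, h]
    simp [scale]
  rw [load, Finset.sum_congr rfl hweight, ← Finset.sum_div, div_le_iff₀ (by positivity)]
  calc _ ≤ ∑ j ∈ Finset.range i, (s j).area :=
        Finset.sum_le_sum_of_subset_of_nonneg (Finset.filter_subset _ _)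
          fun j _ _ => area_nonneg (hs.isValid j)
    _ ≤ 64 * c ^ 3 := hs.sum_area_le i
    _ ≤ 8 / 5 * (2 * c * c) := by nlinarith [hs.le_one_div, sq_nonneg c]

theorem offset_le (hc : 0 < c) (hs : Admissible c s) (i : ℕ) : offset c s i ≤ 8 / 5 := by
  by_cases h : shapeClass c (s i) = 0
  · rw [offset, box, if_pos h, Int.cast_zero, sub_zero]
    exact load_le_of_shapeClass_eq_zero hc hs h
  · exact (offset_le_one h).trans (by norm_num)

theorem stackStart_add_boxSide_le (hc : 0 < c) (hs : Admissible c s) (hx : (box c s i).1.1 = 0)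
    (hy : (box c s i).1.2 ≠ 0) :
    stackStart c s (box c s i) + boxSide c (box c s i).1.2 ≤ 52 / 5 * c := by
  have hstack := stackStart_add_le hc hs.isValid i.lt_succ_self
  rw [stackLength, if_pos ⟨rfl, hy⟩, hx, scale, pow_zero, div_one] at hstack
  have harea : classArea c s 0 (i + 1) ≤ 64 * c ^ 3 := by
    simpa using (sum_classArea_le hs.isValid {0}).trans (hs.sum_area_le (i + 1))
  calc _ ≤ 4 * c + 2 / c * (64 * c ^ 3) := hstack.trans (by gcongr)
    _ = 4 * c + 128 * c * c := by field_simp; ring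
    _ ≤ 52 / 5 * c := by nlinarith [hs.le_one_div]

theorem columnStart_add_boxSide_le (hc : 0 < c) (hs : Admissible c s) (hx : (box c s i).1.1 ≠ 0)
    (hy : (box c s i).1.2 = 0) :
    columnStart c s (box c s i) + boxSide c (box c s i).1.1 ≤ 52 / 5 * c := by
  have hcolumn := columnStart_add_le hc hs.isValid i.lt_succ_self
  rw [columnLength, if_pos ⟨hy, hx⟩] at hcolumn
  calc _ ≤ 4 * c + 2 / c * (64 * c ^ 3) :=
        hcolumn.trans (by gcongr; exact hs.sum_area_le (i + 1))
    _ = 4 * c + 128 * c * c := by field_simp; ring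
    _ ≤ 52 / 5 * c := by nlinarith [hs.le_one_div]

theorem stripStart_add_boxSide_le (hc : 0 < c) (hs : Admissible c s) (hx : (box c s i).1.1 ≠ 0) :
    stripStart c s (box c s i) + boxSide c (box c s i).1.1 ≤ 32 / 5 * c := by
  have hc' := hs.le_one_div
  have hH : 0 < 1 - 2 * c := by linarith
  have hstrip := stripStart_add_le hc (by linarith) hs.isValid i.lt_succ_self
  rw [stripLength, if_neg hx] at hstrip
  calc _ ≤ (1 + 4 * c / (1 - 2 * c)) * (4 * c) + 8 / (1 - 2 * c) * (64 * c ^ 3) :=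
        hstrip.trans (by gcongr; exact hs.sum_area_le (i + 1))
    _ = 4 * c * (1 + 2 * c + 128 * c * c) / (1 - 2 * c) := by
        rw [one_add_div hH.ne']
        ring
    _ ≤ 32 / 5 * c := by
        rw [div_le_iff₀ hH]
        nlinarith [mul_nonneg hc.le (sub_nonneg.2 hc'), mul_nonneg (mul_nonneg hc.le hc.le)
          (sub_nonneg.2 hc')]

/-- The rectangle reserved for the box `b`. -/
noncomputable def boxRegion (c : ℝ) (s : ℕ → LShape) (b : (ℕ × ℕ) × ℤ) : Set (ℝ × ℝ) :=
  Set.Icc (corner c s b) (corner c s b + (boxSide c b.1.1, boxSide c b.1.2))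

theorem planeTranslate_position_subset_boxRegion (hc : 0 < c) (hs : Admissible c s) (i : ℕ) :
    planeTranslate (position c s i) (s i).toSet ⊆ boxRegion c s (box c s i) := by
  have hoffset := offset_nonneg hc hs.isValid i
  have hx := scale_pos hc (shapeClass c (s i)).1
  have hy := scale_pos hc (shapeClass c (s i)).2
  refine (planeTranslate_subset_Icc (hs.isValid i)).trans (Set.Icc_subset_Icc ?_ ?_)
  · exact le_add_of_nonneg_right (smul_nonneg hoffset ⟨by positivity, by positivity⟩)
  · rw [position, add_assoc]
    refine add_le_add_right (Prod.mk_le_mk.2 ⟨?_, ?_⟩) _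
    · exact add_le_boxSide hc (hs.lx_le i) (offset_le hc hs i) fun h =>
        offset_le_one fun h0 => h (congrArg Prod.fst h0)
    · exact add_le_boxSide hc (hs.ly_le i) (offset_le hc hs i) fun h =>
        offset_le_one fun h0 => h (congrArg Prod.snd h0)

end Admissible

section Corner

variable {c : ℝ} {s : ℕ → LShape} {b : (ℕ × ℕ) × ℤ}

theorem corner_fst_of_fst_eq_zero (hx : b.1.1 = 0) : (corner c s b).1 = 84 / 5 * c := by
  rw [corner, if_pos hx]

theorem corner_of_snd_eq_zero (hx : b.1.1 ≠ 0) (hy : b.1.2 = 0) :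
    corner c s b = (32 / 5 * c + columnStart c s b, 0) := by
  rw [corner, if_neg hx, if_pos hy]

theorem corner_of_fst_eq_zero (hx : b.1.1 = 0) (hy : b.1.2 ≠ 0) :
    corner c s b = (84 / 5 * c, stackStart c s b) := by
  rw [corner, if_pos hx, if_neg hy]

theorem corner_of_eq_zero (hx : b.1.1 = 0) (hy : b.1.2 = 0) :
    corner c s b = (84 / 5 * c, 84 / 5 * c) := by
  rw [corner, if_pos hx, if_pos hy]

theorem corner_of_ne_zero (hx : b.1.1 ≠ 0) (hy : b.1.2 ≠ 0) : corner c s b =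
    (stripStart c s b, (1 - 2 * c) * Int.fract (stackStart c s b / (1 - 2 * c))) := by
  rw [corner, if_neg hx, if_neg hy]

end Corner

section Separation

variable {c : ℝ} {s : ℕ → LShape} {i j : ℕ}

theorem stackStart_separated (hc : 0 < c) (hne : box c s i ≠ box c s j)
    (hx : (box c s i).1.1 = (box c s j).1.1) (hi : (box c s i).1.2 ≠ 0)
    (hj : (box c s j).1.2 ≠ 0) :
    stackStart c s (box c s i) + boxSide c (box c s i).1.2 ≤ stackStart c s (box c s j) ∨
      stackStart c s (box c s j) + boxSide c (box c s j).1.2 ≤ stackStart c s (box c s i) := by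
  have h := tapeStart_separated (lab := box c s)
    (len := fun b => stackLength c (box c s j).1.1 b.1) (fun b => stackLength_nonneg hc _ b.1) hne
  rw [stackLength, stackLength, if_pos ⟨hx, hi⟩, if_pos ⟨rfl, hj⟩] at h
  rwa [stackStart, stackStart, hx]

theorem columnStart_separated (hc : 0 < c) (hne : box c s i ≠ box c s j)
    (hi : (box c s i).1.1 ≠ 0) (hi' : (box c s i).1.2 = 0) (hj : (box c s j).1.1 ≠ 0)
    (hj' : (box c s j).1.2 = 0) :
    columnStart c s (box c s i) + boxSide c (box c s i).1.1 ≤ columnStart c s (box c s j) ∨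
      columnStart c s (box c s j) + boxSide c (box c s j).1.1 ≤ columnStart c s (box c s i) := by
  have h := tapeStart_separated (lab := box c s) (len := fun b => columnLength c b.1)
    (fun b => columnLength_nonneg hc b.1) hne
  rwa [columnLength, columnLength, if_pos ⟨hi', hi⟩, if_pos ⟨hj', hj⟩] at h

theorem stripStart_separated (hc : 0 < c) (hi : (box c s i).1.1 ≠ 0) (hj : (box c s j).1.1 ≠ 0)
    (hne : strip c s (box c s i) ≠ strip c s (box c s j)) :
    stripStart c s (box c s i) + boxSide c (box c s i).1.1 ≤ stripStart c s (box c s j) ∨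
      stripStart c s (box c s j) + boxSide c (box c s j).1.1 ≤ stripStart c s (box c s i) := by
  have h := tapeStart_separated (lab := fun k => strip c s (box c s k))
    (len := fun a => stripLength c a.1) (fun a => stripLength_nonneg hc a.1) hne
  rwa [stripLength, stripLength, strip, strip, if_neg hi, if_neg hj] at h

theorem mul_fract_stackStart_div (hc : c < 1 / 2) (b : (ℕ × ℕ) × ℤ) :
    (1 - 2 * c) * Int.fract (stackStart c s b / (1 - 2 * c)) =
      stackStart c s b - (1 - 2 * c) * (strip c s b).2 := by
  rw [Int.fract, mul_sub, mul_div_cancel₀ _ (by linarith), strip]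

theorem corner_fst_add_boxSide_le (hc : 0 < c) (hs : Admissible c s) (hx : (box c s i).1.1 ≠ 0) :
    (corner c s (box c s i)).1 + boxSide c (box c s i).1.1 ≤ 84 / 5 * c := by
  by_cases hy : (box c s i).1.2 = 0
  · rw [corner_of_snd_eq_zero hx hy]
    linarith [columnStart_add_boxSide_le hc hs hx hy]
  · rw [corner_of_ne_zero hx hy]
    linarith [stripStart_add_boxSide_le hc hs hx]

theorem corner_nonneg (hc : 0 < c) (hc' : c < 1 / 2) (b : (ℕ × ℕ) × ℤ) : 0 ≤ corner c s b := by
  have hstack := stackStart_nonneg (s := s) hc b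
  have hcolumn := columnStart_nonneg (s := s) hc b
  have hlevel := mul_nonneg (sub_nonneg.2 (by linarith : 2 * c ≤ 1))
    (Int.fract_nonneg (stackStart c s b / (1 - 2 * c)))
  unfold corner
  split_ifs
  · exact ⟨by positivity, by positivity⟩
  · exact ⟨by positivity, hstack⟩
  · exact ⟨by positivity, le_rfl⟩
  · exact ⟨stripStart_nonneg hc b, hlevel⟩

theorem boxSide_le (hc : 0 < c) {k : ℕ} (hk : k ≠ 0) : boxSide c k ≤ 2 * c := by
  have hscale : scale c k ≤ c / 2 :=
    div_le_div_of_nonneg_left hc.le two_pos (le_self_pow₀ one_le_two hk)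
  rw [boxSide_of_ne_zero hk]
  linarith

theorem corner_snd_add_boxSide_le (hc : 0 < c) (hs : Admissible c s) :
    (corner c s (box c s i)).2 + boxSide c (box c s i).1.2 ≤ 1 := by
  have hc' := hs.le_one_div
  by_cases hx : (box c s i).1.1 = 0 <;> by_cases hy : (box c s i).1.2 = 0
  · rw [corner_of_eq_zero hx hy, boxSide, if_pos hy]
    linarith
  · rw [corner_of_fst_eq_zero hx hy]
    linarith [stackStart_add_boxSide_le hc hs hx hy]
  · rw [corner_of_snd_eq_zero hx hy, boxSide, if_pos hy]
    linarith
  · have hfract := (Int.fract_lt_one (stackStart c s (box c s i) / (1 - 2 * c))).le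
    rw [corner_of_ne_zero hx hy]
    linarith [boxSide_le hc hy, mul_le_of_le_one_right (by linarith : 0 ≤ 1 - 2 * c) hfract]

theorem boxRegion_subset_unitBin (hc : 0 < c) (hs : Admissible c s) (i : ℕ) :
    boxRegion c s (box c s i) ⊆ unitBin := by
  have hc' := hs.le_one_div
  refine Set.Icc_subset_Icc (corner_nonneg hc (by linarith) _) ⟨?_, ?_⟩
  · by_cases hx : (box c s i).1.1 = 0
    · simp only [Prod.fst_add, corner_fst_of_fst_eq_zero hx, boxSide, if_pos hx]
      linarith
    · exact (corner_fst_add_boxSide_le hc hs hx).trans (by linarith)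
  · exact corner_snd_add_boxSide_le hc hs

theorem disjoint_interior_boxRegion_of_ne_zero (hc : 0 < c) (hs : Admissible c s)
    (hne : box c s i ≠ box c s j) (hi : (box c s i).1.1 ≠ 0) (hi' : (box c s i).1.2 ≠ 0)
    (hj : (box c s j).1.1 ≠ 0) (hj' : (box c s j).1.2 ≠ 0) :
    Disjoint (interior (boxRegion c s (box c s i))) (interior (boxRegion c s (box c s j))) := by
  have hc' := hs.le_one_div
  apply disjoint_interior_Icc
  rw [corner_of_ne_zero hi hi', corner_of_ne_zero hj hj']
  by_cases hstrip : strip c s (box c s i) = strip c s (box c s j)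
  · right
    rw [mul_fract_stackStart_div (by linarith), mul_fract_stackStart_div (by linarith), hstrip]
    exact (stackStart_separated hc hne (congrArg (fun a => a.1) hstrip) hi' hj').imp
      (fun h => by dsimp only [Prod.mk_add_mk]; linarith)
      fun h => by dsimp only [Prod.mk_add_mk]; linarith
  · exact Or.inl (stripStart_separated hc hi hj hstrip)

theorem disjoint_interior_boxRegion_of_fst_ne_zero (hc : 0 < c) (hs : Admissible c s)
    (hne : box c s i ≠ box c s j) (hi : (box c s i).1.1 ≠ 0) (hj : (box c s j).1.1 ≠ 0) :
    Disjoint (interior (boxRegion c s (box c s i))) (interior (boxRegion c s (box c s j))) := by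
  have hright : ∀ k l, (box c s k).1.1 ≠ 0 → (box c s k).1.2 ≠ 0 → (box c s l).1.1 ≠ 0 →
      (box c s l).1.2 = 0 → (corner c s (box c s k)).1 + boxSide c (box c s k).1.1 ≤
        (corner c s (box c s l)).1 := fun k l hk hk' hl hl' => by
    rw [corner_of_ne_zero hk hk', corner_of_snd_eq_zero hl hl']
    linarith [stripStart_add_boxSide_le hc hs hk, columnStart_nonneg (s := s) hc (box c s l)]
  by_cases hi' : (box c s i).1.2 = 0 <;> by_cases hj' : (box c s j).1.2 = 0
  · apply disjoint_interior_Icc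
    rw [corner_of_snd_eq_zero hi hi', corner_of_snd_eq_zero hj hj']
    exact Or.inl ((columnStart_separated hc hne hi hi' hj hj').imp
      (fun h => by dsimp only [Prod.mk_add_mk]; linarith)
      fun h => by dsimp only [Prod.mk_add_mk]; linarith)
  · exact disjoint_interior_Icc (Or.inl (Or.inr (hright j i hj hj' hi hi')))
  · exact disjoint_interior_Icc (Or.inl (Or.inl (hright i j hi hi' hj hj')))
  · exact disjoint_interior_boxRegion_of_ne_zero hc hs hne hi hi' hj hj'

theorem disjoint_interior_boxRegion_of_fst_eq_zero (hc : 0 < c) (hs : Admissible c s)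
    (hne : box c s i ≠ box c s j) (hi : (box c s i).1.1 = 0) (hj : (box c s j).1.1 = 0) :
    Disjoint (interior (boxRegion c s (box c s i))) (interior (boxRegion c s (box c s j))) := by
  have habove : ∀ k l, (box c s k).1.1 = 0 → (box c s k).1.2 ≠ 0 → (box c s l).1.1 = 0 →
      (box c s l).1.2 = 0 → (corner c s (box c s k)).2 + boxSide c (box c s k).1.2 ≤
        (corner c s (box c s l)).2 := fun k l hk hk' hl hl' => by
    rw [corner_of_fst_eq_zero hk hk', corner_of_eq_zero hl hl']
    linarith [stackStart_add_boxSide_le hc hs hk hk']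
  by_cases hi' : (box c s i).1.2 = 0 <;> by_cases hj' : (box c s j).1.2 = 0
  · have hi0 : shapeClass c (s i) = 0 := Prod.ext hi hi'
    have hj0 : shapeClass c (s j) = 0 := Prod.ext hj hj'
    exact absurd (by rw [box, box, if_pos hi0, if_pos hj0, hi0, hj0]) hne
  · exact disjoint_interior_Icc (Or.inr (Or.inr (habove j i hj hj' hi hi')))
  · exact disjoint_interior_Icc (Or.inr (Or.inl (habove i j hi hi' hj hj')))
  · apply disjoint_interior_Icc
    rw [corner_of_fst_eq_zero hi hi', corner_of_fst_eq_zero hj hj']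
    exact Or.inr (stackStart_separated hc hne (hi.trans hj.symm) hi' hj')

theorem disjoint_interior_boxRegion (hc : 0 < c) (hs : Admissible c s)
    (hne : box c s i ≠ box c s j) :
    Disjoint (interior (boxRegion c s (box c s i))) (interior (boxRegion c s (box c s j))) := by
  have hright : ∀ k l, (box c s k).1.1 ≠ 0 → (box c s l).1.1 = 0 →
      (corner c s (box c s k)).1 + boxSide c (box c s k).1.1 ≤ (corner c s (box c s l)).1 :=
    fun _ _ hk hl =>
      (corner_fst_add_boxSide_le hc hs hk).trans_eq (corner_fst_of_fst_eq_zero hl).symm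
  by_cases hi : (box c s i).1.1 = 0 <;> by_cases hj : (box c s j).1.1 = 0
  · exact disjoint_interior_boxRegion_of_fst_eq_zero hc hs hne hi hj
  · exact disjoint_interior_Icc (Or.inl (Or.inr (hright j i hj hi)))
  · exact disjoint_interior_Icc (Or.inl (Or.inl (hright i j hi hj)))
  · exact disjoint_interior_boxRegion_of_fst_ne_zero hc hs hne hi hj

theorem planeTranslate_position_subset_unitBin (hc : 0 < c) (hs : Admissible c s) (i : ℕ) :
    planeTranslate (position c s i) (s i).toSet ⊆ unitBin :=
  (planeTranslate_position_subset_boxRegion hc hs i).trans (boxRegion_subset_unitBin hc hs i)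

theorem disjoint_interior_of_box_eq (hc : 0 < c) (hs : ∀ i, (s i).IsValid) (hij : i < j)
    (h : box c s i = box c s j) :
    Disjoint (interior (planeTranslate (position c s i) (s i).toSet))
      (interior (planeTranslate (position c s j) (s j).toSet)) := by
  by_cases hdeg : (s i).lx ≤ 0 ∨ (s i).ly ≤ 0
  · rw [interior_planeTranslate_eq_empty (hs i) hdeg]
    exact Set.empty_disjoint _
  push Not at hdeg
  have hclass : shapeClass c (s j) = shapeClass c (s i) := congrArg Prod.fst h.symm
  have hoffset := offset_add_le hc hs hij h
  have hx := scale_pos hc (shapeClass c (s i)).1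
  have hy := scale_pos hc (shapeClass c (s i)).2
  apply disjoint_interior_of_nested (hs j) <;>
    simp only [position, h, hclass, Prod.fst_add, Prod.snd_add, Prod.smul_fst, Prod.smul_snd,
      smul_eq_mul]
  · nlinarith [wx_le_weight_mul hc (hs i) hdeg.2]
  · nlinarith [wy_le_weight_mul hc (hs i) hdeg.1]

theorem disjoint_interior_position (hc : 0 < c) (hs : Admissible c s) (hij : i ≠ j) :
    Disjoint (interior (planeTranslate (position c s i) (s i).toSet))
      (interior (planeTranslate (position c s j) (s j).toSet)) := by
  by_cases h : box c s i = box c s j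
  · rcases hij.lt_or_gt with hlt | hlt
    · exact disjoint_interior_of_box_eq hc hs.isValid hlt h
    · exact (disjoint_interior_of_box_eq hc hs.isValid hlt h.symm).symm
  · exact (disjoint_interior_boxRegion hc hs h).mono
      (interior_mono (planeTranslate_position_subset_boxRegion hc hs i))
      (interior_mono (planeTranslate_position_subset_boxRegion hc hs j))

end Separation

section List

variable {c : ℝ} {l : List LShape}

/-- The sequence that continues the list `l` by shapes consisting of a single point. -/
def extendByZero (l : List LShape) (j : ℕ) : LShape := l.getD j ⟨0, 0, 0, 0⟩

theorem extendByZero_apply {i : ℕ} (hi : i < l.length) : extendByZero l i = l[i] :=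
  List.getD_eq_getElem _ _ hi

theorem forall_extendByZero {P : LShape → Prop} (hl : ∀ L ∈ l, P L) (h0 : P ⟨0, 0, 0, 0⟩)
    (j : ℕ) : P (extendByZero l j) := by
  rcases lt_or_ge j l.length with hj | hj
  · exact extendByZero_apply hj ▸ hl _ (List.getElem_mem hj)
  · rwa [extendByZero, List.getD_eq_default _ _ hj]

theorem sum_area_extendByZero_le (hl : ∀ L ∈ l, L.IsValid) (n : ℕ) :
    ∑ j ∈ Finset.range n, (extendByZero l j).area ≤ (l.map LShape.area).sum := by
  induction l generalizing n with
  | nil => simp [extendByZero, LShape.area]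
  | cons L l ih =>
    obtain ⟨hL, hl⟩ := List.forall_mem_cons.1 hl
    rw [List.map_cons, List.sum_cons]
    cases n with
    | zero => simpa using add_nonneg (area_nonneg hL) (by simpa using ih hl 0)
    | succ n =>
      rw [Finset.sum_range_succ', add_comm]
      exact add_le_add_right (ih hl n) _

theorem admissible_extendByZero {t : ℝ} (ht0 : 0 ≤ t)
    (hl : ∀ L ∈ l, L.IsValid ∧ L.lx ≤ t ∧ L.ly ≤ t)
    (harea : (l.map LShape.area).sum ≤ (1 - t) ^ 3 / 125) :
    Admissible ((1 - t) / 20) (extendByZero l) := by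
  have hshape := forall_extendByZero hl ⟨by simp [LShape.IsValid], ht0, ht0⟩
  have ht' : 1 - 20 * ((1 - t) / 20) = t := by ring
  refine ⟨fun i => (hshape i).1, fun i => ?_, fun i => ?_, fun n => ?_⟩
  · exact (hshape i).2.1.trans_eq ht'.symm
  · exact (hshape i).2.2.trans_eq ht'.symm
  · exact ((sum_area_extendByZero_le (fun L hL => (hl L hL).1) n).trans harea).trans_eq (by ring)

theorem position_extendByZero_take {i : ℕ} (hi : i < l.length) :
    position c (extendByZero (l.take (i + 1))) ((l.take (i + 1)).length - 1) =
      position c (extendByZero l) i := by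
  have hlength : (l.take (i + 1)).length = i + 1 := by simpa using hi
  rw [hlength, Nat.add_sub_cancel]
  refine position_congr fun j hj => ?_
  rw [extendByZero_apply (by omega), extendByZero_apply (by omega), List.getElem_take]

end List

end LShapePacking

/-- for every `0 < t < 1`, with `A = (1−t)³/125`, there is a deterministic
online algorithm placing L-shapes into the unit bin by translations that successfully packs
every finite sequence of L-shapes whose arm lengths are at most `t` and whose total area is
at most `A`: every translate lies in `[0,1]²` and the translates have pairwise disjoint
interiors. -/
theorem stmt11 (t : ℝ) (ht0 : 0 < t) (ht1 : t < 1) :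
    ∃ A : List LShape → ℝ × ℝ,
      ∀ l : List LShape,
        (∀ L ∈ l, L.IsValid ∧ L.lx ≤ t ∧ L.ly ≤ t) →
        (l.map LShape.area).sum ≤ (1 - t) ^ 3 / 125 →
        (∀ i : Fin l.length,
          planeTranslate (A (l.take (i.1 + 1))) (l.get i).toSet ⊆ unitBin) ∧
        ∀ i j : Fin l.length, i ≠ j →
          Disjoint (interior (planeTranslate (A (l.take (i.1 + 1))) (l.get i).toSet))
                   (interior (planeTranslate (A (l.take (j.1 + 1))) (l.get j).toSet)) := by
  refine ⟨fun l => LShapePacking.position ((1 - t) / 20) (LShapePacking.extendByZero l)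
    (l.length - 1), fun l hl harea => ?_⟩
  have hc : 0 < (1 - t) / 20 := by linarith
  have hs := LShapePacking.admissible_extendByZero ht0.le hl harea
  have hitem : ∀ i : Fin l.length, l.get i = LShapePacking.extendByZero l i := fun i =>
    (LShapePacking.extendByZero_apply i.2).symm
  simp only [LShapePacking.position_extendByZero_take (Fin.is_lt _), hitem]
  exact ⟨fun i => LShapePacking.planeTranslate_position_subset_unitBin hc hs i,
    fun i j hij => LShapePacking.disjoint_interior_position hc hs (Fin.val_ne_of_ne hij)⟩
end

section
/- For every ε > 0 there exist two L-shapes L and L′ with total area at most ε, each of which individually fits into [0,1]² by a translation, such that there is no pair of translations placing both L and L′ into [0,1]² with disjoint interiors. Concretely, for any L-shape L with ℓx(L) = 1 and wy(L) > 0 and any L-shape L′ with ℓy(L′) = 1 and wx(L′) > 0, every pair of translations placing both into [0,1]² makes their interiors intersect. Consequently, the online (and offline) critical packing density for L-shapes with arm lengths in [0,1] is 0. -/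
section Intervals

variable {G : Type*} [AddCommGroup G] [LinearOrder G] [IsOrderedAddMonoid G]

lemma lt_add_of_sub_lt_add {a b x y s t : G} (hx : x + s ≤ b) (hy : a ≤ y)
    (hst : b - a < s + t) : x < y + t := by
  by_contra! hyx
  have hs : s ≤ b - x := le_sub_iff_add_le'.2 hx
  have ht : t ≤ x - a := (le_sub_iff_add_le'.2 hyx).trans (sub_le_sub_left hy x)
  exact hst.not_ge ((add_le_add hs ht).trans_eq (sub_add_sub_cancel b x a))

lemma Ioo_inter_Ioo_nonempty_of_sub_lt_add [DenselyOrdered G] {a b x y s t : G}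
    (hs : 0 < s) (ht : 0 < t) (hax : a ≤ x) (hxb : x + s ≤ b) (hay : a ≤ y) (hyb : y + t ≤ b)
    (hst : b - a < s + t) : (Set.Ioo x (x + s) ∩ Set.Ioo y (y + t)).Nonempty := by
  have hxy : x < y + t := lt_add_of_sub_lt_add hxb hay hst
  have hyx : y < x + s := lt_add_of_sub_lt_add hyb hax (add_comm s t ▸ hst)
  rw [Set.Ioo_inter_Ioo, Set.nonempty_Ioo, sup_lt_iff, lt_inf_iff, lt_inf_iff]
  exact ⟨⟨lt_add_of_pos_right x hs, hxy⟩, hyx, lt_add_of_pos_right y ht⟩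

end Intervals

lemma interior_Icc_prod_s12 {α β : Type*} [LinearOrder α] [TopologicalSpace α] [OrderTopology α]
    [DenselyOrdered α] [NoMinOrder α] [NoMaxOrder α] [LinearOrder β] [TopologicalSpace β]
    [OrderTopology β] [DenselyOrdered β] [NoMinOrder β] [NoMaxOrder β] (p q : α × β) :
    interior (Set.Icc p q) = Set.Ioo p.1 q.1 ×ˢ Set.Ioo p.2 q.2 := by
  rw [Set.Icc_prod_eq, interior_prod_eq, interior_Icc, interior_Icc]

lemma interior_Icc_inter_interior_Icc_nonempty {a b p q s t : ℝ × ℝ}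
    (hs₁ : 0 < s.1) (hs₂ : 0 < s.2) (ht₁ : 0 < t.1) (ht₂ : 0 < t.2)
    (hp : Set.Icc p (p + s) ⊆ Set.Icc a b) (hq : Set.Icc q (q + t) ⊆ Set.Icc a b)
    (hfst : b.1 - a.1 < s.1 + t.1) (hsnd : b.2 - a.2 < s.2 + t.2) :
    (interior (Set.Icc p (p + s)) ∩ interior (Set.Icc q (q + t))).Nonempty := by
  have hs : 0 ≤ s := ⟨hs₁.le, hs₂.le⟩
  have ht : 0 ≤ t := ⟨ht₁.le, ht₂.le⟩
  obtain ⟨hap, hpb⟩ := (Set.Icc_subset_Icc_iff (le_add_of_nonneg_right hs)).1 hp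
  obtain ⟨haq, hqb⟩ := (Set.Icc_subset_Icc_iff (le_add_of_nonneg_right ht)).1 hq
  rw [interior_Icc_prod_s12, interior_Icc_prod_s12, Set.prod_inter_prod]
  exact (Ioo_inter_Ioo_nonempty_of_sub_lt_add hs₁ ht₁ hap.1 hpb.1 haq.1 hqb.1 hfst).prod
    (Ioo_inter_Ioo_nonempty_of_sub_lt_add hs₂ ht₂ hap.2 hpb.2 haq.2 hqb.2 hsnd)

lemma planeTranslate_Icc_zero (v s : ℝ × ℝ) :
    planeTranslate v (Set.Icc 0 s) = Set.Icc v (v + s) := by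
  rw [planeTranslate, Set.image_add_const_Icc, zero_add, add_comm]

namespace LShape

lemma planeTranslate_toSet (L : LShape) (v : ℝ × ℝ) :
    planeTranslate v L.toSet =
      Set.Icc v (v + (L.lx, L.wy)) ∪ Set.Icc v (v + (L.wx, L.ly)) := by
  rw [← planeTranslate_Icc_zero, ← planeTranslate_Icc_zero]
  exact Set.image_union _ _ _

lemma IsValid.planeTranslate_zero_subset_unitBin {L : LShape} (hL : L.IsValid) :
    planeTranslate 0 L.toSet ⊆ unitBin := by
  obtain ⟨-, hwx, hlx, -, hwy, hly⟩ := hL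
  rw [planeTranslate_toSet, zero_add, zero_add]
  exact Set.union_subset (Set.Icc_subset_Icc_right ⟨hlx, hwy.trans hly⟩)
    (Set.Icc_subset_Icc_right ⟨hwx.trans hlx, hly⟩)

lemma exists_full_arms_area_add_area_le {ε : ℝ} (hε : 0 < ε) :
    ∃ L L' : LShape, L.IsValid ∧ L'.IsValid ∧ L.lx = 1 ∧ 0 < L.wy ∧ L'.ly = 1 ∧ 0 < L'.wx ∧
      L.area + L'.area ≤ ε := by
  obtain ⟨δ, hδ_pos, hδ_le_one, hδ_le⟩ : ∃ δ : ℝ, 0 < δ ∧ δ ≤ 1 ∧ δ ≤ ε / 2 :=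
    ⟨min 1 (ε / 2), by positivity, min_le_left _ _, min_le_right _ _⟩
  -- Degenerate L-shapes: a horizontal and a vertical strip of thickness `δ`.
  refine ⟨⟨1, 0, δ, δ⟩, ⟨δ, δ, 1, 0⟩, ?_, ?_, rfl, hδ_pos, rfl, hδ_pos, ?_⟩
  · simp [IsValid, hδ_pos.le, hδ_le_one]
  · simp [IsValid, hδ_pos.le, hδ_le_one]
  · simp only [area]
    linarith

end LShape

theorem stmt12_general {L L' : LShape} (hL : L.IsValid) (hL' : L'.IsValid)
    (hfst : 1 < L.lx + L'.wx) (hsnd : 1 < L.wy + L'.ly) {v v' : ℝ × ℝ}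
    (hv : planeTranslate v L.toSet ⊆ unitBin) (hv' : planeTranslate v' L'.toSet ⊆ unitBin) :
    (interior (planeTranslate v L.toSet) ∩
      interior (planeTranslate v' L'.toSet)).Nonempty := by
  obtain ⟨-, -, hlx, -, hwy, hly⟩ := hL
  obtain ⟨-, hwx', hlx', -, -, hly'⟩ := hL'
  rw [LShape.planeTranslate_toSet] at hv hv' ⊢
  rw [LShape.planeTranslate_toSet]
  have arms_meet : (interior (Set.Icc v (v + (L.lx, L.wy))) ∩
      interior (Set.Icc v' (v' + (L'.wx, L'.ly)))).Nonempty :=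
    interior_Icc_inter_interior_Icc_nonempty (a := (0, 0)) (b := (1, 1))
      (show 0 < L.lx by linarith) (show 0 < L.wy by linarith)
      (show 0 < L'.wx by linarith) (show 0 < L'.ly by linarith)
      (Set.subset_union_left.trans hv) (Set.subset_union_right.trans hv')
      (by simpa using hfst) (by simpa using hsnd)
  exact arms_meet.mono (Set.inter_subset_inter (interior_mono Set.subset_union_left)
    (interior_mono Set.subset_union_right))

/-- for every `ε > 0` there are two L-shapes of total area at most `ε`, each
individually fitting into the unit bin by translation, which cannot be placed together into
the unit bin with disjoint interiors. Concretely, any L-shape with `ℓx = 1`, `wy > 0` and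
any L-shape with `ℓy = 1`, `wx > 0`, when both are translated into `[0,1]²`, have
intersecting interiors. -/
theorem stmt12 :
    (∀ ε : ℝ, 0 < ε →
      ∃ L L' : LShape, L.IsValid ∧ L'.IsValid ∧ L.area + L'.area ≤ ε ∧
        (∃ v : ℝ × ℝ, planeTranslate v L.toSet ⊆ unitBin) ∧
        (∃ v : ℝ × ℝ, planeTranslate v L'.toSet ⊆ unitBin) ∧
        ∀ v v' : ℝ × ℝ, planeTranslate v L.toSet ⊆ unitBin →
          planeTranslate v' L'.toSet ⊆ unitBin →
          ¬ Disjoint (interior (planeTranslate v L.toSet))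
                     (interior (planeTranslate v' L'.toSet))) ∧
    (∀ L L' : LShape, L.IsValid → L'.IsValid →
      L.lx = 1 → 0 < L.wy → L'.ly = 1 → 0 < L'.wx →
      ∀ v v' : ℝ × ℝ, planeTranslate v L.toSet ⊆ unitBin →
        planeTranslate v' L'.toSet ⊆ unitBin →
        (interior (planeTranslate v L.toSet) ∩
          interior (planeTranslate v' L'.toSet)).Nonempty) := by
  refine ⟨fun ε hε => ?_, fun L L' hL hL' hlx hwy hly hwx v v' =>
    stmt12_general hL hL' (by linarith) (by linarith)⟩
  obtain ⟨L, L', hL, hL', hlx, hwy, hly, hwx, harea⟩ :=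
    LShape.exists_full_arms_area_add_area_le hε
  refine ⟨L, L', hL, hL', harea, ⟨0, hL.planeTranslate_zero_subset_unitBin⟩,
    ⟨0, hL'.planeTranslate_zero_subset_unitBin⟩, fun v v' hv hv' => ?_⟩
  rw [Set.not_disjoint_iff_nonempty_inter]
  exact stmt12_general hL hL' (by linarith) (by linarith) hv hv'
end
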